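/- arXiv:1708.04285 — 6 statements merged into one kernel-verified Lean document; each statement's English description precedes it below -/
import Mathlib

section
/- Let I, J ⊂ ℝ be nonempty bounded open intervals with disjoint closures. Then there exist constants σ̃ > 0 and C > 1 (depending only on I and J) such that for every differentiable function g : ℝ → ℝ with derivative g′ satisfying ∫_J g(t)² dt < ∞, ∫_J g′(t)² dt < ∞ and ∫_J g(t)² dt > 0, one has ‖g‖_{H¹(J)} ≤ exp( C · (1 + (‖g‖_{H¹(J)} / ‖g‖_{L²(J)})^{σ̃}) ) · ( ∫_I ((H_J g)(x))² dx )^{1/2}. -/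
/-!
The Hilbert transform `F = H_J g` is tested against the points of `I`. A combination
`∑ wᵢ F(xᵢ)` equals `∫_J g S` with `S(t) = ∑ wᵢ / (xᵢ - t)`, and by Lagrange interpolation
(`exists_partial_fractions`) every quotient `Q(t) / ∏ᵢ (xᵢ - t)` with `n + 1` distinct nodes
and `deg Q ≤ n` is such an `S`, with `|wᵢ| ≤ |Q(xᵢ)| / hⁿ` if the nodes are `h`-separated. Hence
`‖g‖² = ∫ g (g - S) + ∑ wᵢ F(xᵢ)`, and it suffices to find such an `S` close to `g` on `J`.

Take `I = (a, b)` to the right of `J = (c, d)`; the other case follows by reflection. The Möbius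
variable `v(t) = (t - c)(a - d) / ((a - t)(d - c))` maps `J` onto `[0, 1]`. The function
`(a - t) g(t)` is Hölder of exponent `1/2` with constant `≲ ‖g‖_{H¹}`, so its Bernstein polynomial
of degree `n = q⁴` in `v` approximates it with error `≲ ‖g‖_{H¹} / q` (`bernstein_approx`).
Dividing by `a - t` gives an approximant `Q(t) / (a - t)ⁿ⁺¹` of `g` with `deg Q ≤ n`, where `Q` is
at most exponentially large on `[a, b]` (`exists_rational_approx`). Its pole of order `n + 1` is
then split into simple poles `xᵢ` at distance `≲ n⁻²` from `a`, which changes the approximant by a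
relative error `≲ 1/n` only (`prod_ratio_bounds`). The `xᵢ` are chosen one in each of `n + 1`
disjoint intervals of length `h ~ n⁻³`, at a point where `|F|` is at most its quadratic mean.

With `M = ‖g‖_{H¹}`, `m = ‖g‖_{L²}`, `N = q⁴ + 1` and `δ = ‖F‖_{L²(I)}` this yields
`m² ≤ C₀ M m / q + M (K N⁴)ᴺ δ` (`sq_norm_le`). Choosing `q ~ M / m` absorbs the first term into
the left side, and `(K N⁴)ᴺ ≤ exp ((K + 4) N²)` with `N² ≲ (M / m)⁸` gives the claim with `σ = 8`.
-/


open MeasureTheory Set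

/-- Truncated Hilbert transform: `(H_K f)(x) = ∫_K f(t)/(x - t) dt`. -/
noncomputable def truncHilbert (K : Set ℝ) (f : ℝ → ℝ) (x : ℝ) : ℝ :=
  ∫ t in K, f t / (x - t)

/-! ### Sobolev estimates on an interval -/

/-- Cauchy–Schwarz against the constant `1`; the inequality comes from
`0 ≤ ∫ ((q - p) f - ∫ f)²`. -/
theorem sq_int_le (p q : ℝ) (hpq : p < q) (f : ℝ → ℝ) (hf : Measurable f)
    (h2 : IntegrableOn (fun t => (f t) ^ 2) (Ioo p q) volume) :
    IntegrableOn f (Ioo p q) volume ∧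
    (∫ t in Ioo p q, f t) ^ 2 ≤ (q - p) * ∫ t in Ioo p q, (f t) ^ 2 := by
  have h1 : IntegrableOn f (Ioo p q) volume := by
    have : MemLp f 2 (volume.restrict (Ioo p q)) :=
      (memLp_two_iff_integrable_sq hf.aestronglyMeasurable).2 h2
    exact this.integrable (by norm_num)
  refine ⟨h1, ?_⟩
  set A := ∫ t in Ioo p q, f t with hA
  set B := ∫ t in Ioo p q, (f t)^2 with hB
  have hvol : (volume (Ioo p q)).toReal = q - p := by
    rw [Real.volume_Ioo, ENNReal.toReal_ofReal (by linarith)]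
  have hm : volume.real (Ioo p q) = q - p := hvol
  have h0 : 0 ≤ ∫ t in Ioo p q, ((q - p) * f t - A) ^ 2 :=
    integral_nonneg fun t => sq_nonneg _
  have e : ∫ t in Ioo p q, ((q - p) * f t - A) ^ 2
      = (q - p)^2 * B - 2 * (q-p) * A * A + (q-p) * A^2 := by
    have : ∀ t, ((q - p) * f t - A) ^ 2 =
      (q-p)^2 * (f t)^2 - 2 * (q-p) * A * f t + A^2 := fun t => by ring
    simp_rw [this]
    rw [integral_add, integral_sub, integral_const_mul, integral_const_mul, setIntegral_const, hm]
    · simp [hA, hB]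
    · exact h2.const_mul _
    · exact h1.const_mul _
    · exact (h2.const_mul _).sub (h1.const_mul _)
    · exact integrableOn_const (by simp)
  rw [e] at h0
  have hp : 0 < q - p := by linarith
  have : 0 ≤ (q-p) * ((q-p) * B - A^2) := by nlinarith
  have := nonneg_of_mul_nonneg_right this hp
  linarith

/-- A nonnegative function is, somewhere in `(p, q)`, at most its mean there. -/
theorem exists_small (p q : ℝ) (hpq : p < q) (s : Set ℝ) (hs : Ioo p q ⊆ s) (f : ℝ → ℝ) (hf0 : ∀ x, 0 ≤ f x)
    (hf : IntegrableOn f s volume) :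
    ∃ x ∈ Ioo p q, f x * (q - p) ≤ ∫ t in s, f t := by
  have hvol : volume.real (Ioo p q) = q - p := by
    rw [Measure.real, Real.volume_Ioo, ENNReal.toReal_ofReal (by linarith)]
  obtain ⟨x, hx, h⟩ := exists_le_setAverage (μ := volume) (s := Ioo p q) (f := f)
    (by simp [hpq]) (by simp) (hf.mono_set hs)
  refine ⟨x, hx, ?_⟩
  rw [setAverage_eq, hvol, smul_eq_mul, inv_mul_eq_div, le_div_iff₀ (by linarith)] at h
  exact h.trans (setIntegral_mono_set hf (by filter_upwards with x using hf0 x) (by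
    exact LE.le.eventuallyLE hs))

/-- The norm `‖g‖_{H¹(J)}` for `J = (c, d)`. -/
noncomputable def H1 (c d : ℝ) (g : ℝ → ℝ) : ℝ :=
  Real.sqrt (∫ t in Ioo c d, ((g t) ^ 2 + (deriv g t) ^ 2))

/-- `g` is differentiable on `ℝ`, and `g` and `g'` are square integrable on `(c, d)`. -/
structure Adm (c d : ℝ) (g : ℝ → ℝ) : Prop where
  diff : Differentiable ℝ g
  sq : IntegrableOn (fun t => (g t) ^ 2) (Ioo c d) volume
  dsq : IntegrableOn (fun t => (deriv g t) ^ 2) (Ioo c d) volume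

theorem Adm.L2_le {c d : ℝ} {g : ℝ → ℝ} (h : Adm c d g) :
    (∫ t in Ioo c d, (g t) ^ 2) ≤ H1 c d g ^ 2 := by
  rw [H1, Real.sq_sqrt (integral_nonneg fun t => by positivity), integral_add h.sq h.dsq]
  have : 0 ≤ ∫ t in Ioo c d, (deriv g t) ^ 2 := integral_nonneg fun t => by positivity
  linarith

theorem Adm.D2_le {c d : ℝ} {g : ℝ → ℝ} (h : Adm c d g) :
    (∫ t in Ioo c d, (deriv g t) ^ 2) ≤ H1 c d g ^ 2 := by
  rw [H1, Real.sq_sqrt (integral_nonneg fun t => by positivity), integral_add h.sq h.dsq]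
  have : 0 ≤ ∫ t in Ioo c d, (g t) ^ 2 := integral_nonneg fun t => by positivity
  linarith

theorem Adm.holder {c d : ℝ} {g : ℝ → ℝ} (h : Adm c d g) {s t : ℝ} (hs : s ∈ Icc c d) (ht : t ∈ Icc c d) :
    |g t - g s| ≤ H1 c d g * Real.sqrt |t - s| := by
  wlog hst : s ≤ t generalizing s t
  · rw [abs_sub_comm, abs_sub_comm t s]
    exact this ht hs (by linarith)
  rcases hst.eq_or_lt with rfl | hst
  · simp
  have hsub : Ioo s t ⊆ Ioo c d := Ioo_subset_Ioo hs.1 ht.2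
  obtain ⟨i1, i2⟩ := sq_int_le s t hst (deriv g) (measurable_deriv g) (h.dsq.mono_set hsub)
  have ftc : ∫ x in Ioo s t, deriv g x = g t - g s := by
    rw [← integral_Ioc_eq_integral_Ioo, ← intervalIntegral.integral_of_le hst.le]
    apply intervalIntegral.integral_deriv_eq_sub (fun x _ => h.diff x)
    rw [intervalIntegrable_iff_integrableOn_Ioo_of_le hst.le]
    exact i1
  rw [ftc] at i2
  have i3 : ∫ x in Ioo s t, (deriv g x)^2 ≤ H1 c d g ^ 2 := by
    refine le_trans ?_ h.D2_le
    exact setIntegral_mono_set h.dsq (by filter_upwards with x using sq_nonneg _) (by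
      exact LE.le.eventuallyLE hsub)
  have hp : 0 < t - s := by linarith
  have hH : 0 ≤ H1 c d g := Real.sqrt_nonneg _
  rw [abs_of_pos hp]
  apply abs_le_of_sq_le_sq _ (by positivity)
  rw [mul_pow, Real.sq_sqrt hp.le]
  nlinarith

/-- Sobolev embedding of `H¹` into `L^∞`: compare with a point where `|g|` is at most its
quadratic mean. -/
theorem Adm.sup {c d : ℝ} (hcd : c < d) {g : ℝ → ℝ} (h : Adm c d g) {s : ℝ} (hs : s ∈ Icc c d) :
    |g s| ≤ H1 c d g * (1 / Real.sqrt (d - c) + Real.sqrt (d - c)) := by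
  obtain ⟨t, ht, h1⟩ := exists_small c d hcd (Ioo c d) subset_rfl _ (fun x => sq_nonneg (g x)) h.sq
  have h2 := h1.trans h.L2_le
  have hp : 0 < d - c := by linarith
  have hH : 0 ≤ H1 c d g := Real.sqrt_nonneg _
  have h3 : |g t| ≤ H1 c d g * (1 / Real.sqrt (d - c)) := by
    apply abs_le_of_sq_le_sq _ (by positivity)
    rw [mul_pow, div_pow, Real.sq_sqrt hp.le, one_pow, mul_one_div, le_div_iff₀ hp]
    exact h2
  have h4 := h.holder (Ioo_subset_Icc_self ht) hs
  have h5 : Real.sqrt |s - t| ≤ Real.sqrt (d - c) := by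
    apply Real.sqrt_le_sqrt
    rw [abs_le]; constructor <;> linarith [ht.1, ht.2, hs.1, hs.2]
  have h6 : |g s| ≤ |g s - g t| + |g t| := by
    have := abs_add_le (g s - g t) (g t); simpa using this
  have h7 := mul_le_mul_of_nonneg_left h5 hH
  linarith

open Finset in
/-- Bernstein approximation of degree `n = q⁴` of a function that is `1/2`-Hölder on `[0, 1]`. The
error at `v` is at most `H` times the mean of `√|v - k/n|` under the binomial law, which is bounded
through its variance `v (1 - v) / n` and the inequality `√w ≤ 1/q + w² q³`. -/
theorem bernstein_approx (φ : ℝ → ℝ) (H : ℝ) (hH : 0 ≤ H)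
    (hφ : ∀ v ∈ Icc (0:ℝ) 1, ∀ w ∈ Icc (0:ℝ) 1, |φ v - φ w| ≤ H * Real.sqrt |v - w|)
    (q n : ℕ) (hq : 1 ≤ q) (hn : n = q ^ 4) (v : ℝ) (hv : v ∈ Icc (0:ℝ) 1) :
    |φ v - ∑ k ∈ range (n+1), φ (k / n) * ((n.choose k : ℝ) * v ^ k * (1 - v) ^ (n - k))| ≤ 2 * H / q := by
  have hq' : (0:ℝ) < q := by exact_mod_cast hq
  have hn0 : n ≠ 0 := by rw [hn]; positivity
  have hn' : (n:ℝ) = (q:ℝ)^4 := by rw [hn]; push_cast; rfl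
  set β : ℕ → ℝ := fun k => (n.choose k : ℝ) * v ^ k * (1 - v) ^ (n - k) with hβ
  have hβ0 : ∀ k, 0 ≤ β k := fun k => by
    have := hv.1
    have : 0 ≤ 1 - v := by linarith [hv.2]
    simp only [hβ]; positivity
  have hsum : ∑ k ∈ range (n+1), β k = 1 := by
    have := congrArg (Polynomial.eval v) (bernsteinPolynomial.sum ℝ n)
    simpa [Polynomial.eval_finsetSum, bernsteinPolynomial, hβ] using this
  have hvar : ∑ k ∈ range (n+1), (v - k / n) ^ 2 * β k = v * (1 - v) / n := by
    have := congrArg (Polynomial.eval v) (bernsteinPolynomial.variance ℝ n)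
    simp [Polynomial.eval_finsetSum, bernsteinPolynomial] at this
    have hnR : (n:ℝ) ≠ 0 := by exact_mod_cast hn0
    have e : ∀ k : ℕ, (v - k / n) ^ 2 * β k = (1 / (n:ℝ)^2) * ((n * v - k)^2 * β k) := fun k => by
      field_simp
    simp_rw [e, ← mul_sum]
    simp only [hβ]
    rw [this]
    field_simp
  have e1 : φ v - ∑ k ∈ range (n+1), φ (k / n) * β k = ∑ k ∈ range (n+1), (φ v - φ (k/n)) * β k := by
    simp_rw [sub_mul, sum_sub_distrib, ← mul_sum, hsum, mul_one]
  have young : ∀ w : ℝ, 0 ≤ w → Real.sqrt w ≤ 1 / q + w ^ 2 * q ^ 3 := by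
    intro w hw
    -- In the scaled variable `y = w q²` the claim is `y ≤ (1 + y²)²`.
    rw [Real.sqrt_le_left (by positivity)]
    set y := w * q^2 with hy
    have hwy : w = y / q^2 := by rw [hy]; field_simp
    have hy0 : 0 ≤ y := by positivity
    rw [hwy]
    have : (1 / (q:ℝ) + (y / q^2)^2 * q^3)^2 = (1 + y^2)^2 / q^2 := by field_simp
    rw [this]
    gcongr
    nlinarith [sq_nonneg (y-1), sq_nonneg (y), sq_nonneg (y^2)]
  change |φ v - ∑ k ∈ range (n+1), φ (k / n) * β k| ≤ _
  rw [e1]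
  calc |∑ k ∈ range (n+1), (φ v - φ (k/n)) * β k|
      ≤ ∑ k ∈ range (n+1), |(φ v - φ (k/n)) * β k| := abs_sum_le_sum_abs _ _
    _ ≤ ∑ k ∈ range (n+1), H * (1 / q * β k + q^3 * ((v - k/n)^2 * β k)) := by
        apply sum_le_sum
        intro k hk
        have hk' : k ≤ n := by simpa [Nat.lt_succ_iff] using hk
        have hkI : (k / n : ℝ) ∈ Icc (0:ℝ) 1 := ⟨by positivity, by
          apply div_le_one_of_le₀ (by exact_mod_cast hk') (by positivity)⟩
        rw [abs_mul, abs_of_nonneg (hβ0 k)]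
        have h1 := hφ v hv _ hkI
        have h2 := young |v - k/n| (abs_nonneg _)
        rw [sq_abs] at h2
        calc _ ≤ (H * (1 / q + (v - k/n)^2 * q^3)) * β k := by
                apply mul_le_mul_of_nonneg_right _ (hβ0 k)
                exact h1.trans (mul_le_mul_of_nonneg_left h2 hH)
          _ = _ := by ring
    _ = H * (1 / q + q^3 * (v * (1-v) / n)) := by
        rw [← mul_sum, sum_add_distrib, ← mul_sum, ← mul_sum, hsum, hvar, mul_one]
    _ ≤ 2 * H / q := by
        rw [hn']
        have : (q:ℝ)^3 * (v * (1-v) / q^4) = (v * (1-v)) / q := by field_simp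
        rw [this]
        have : v * (1-v) / q ≤ 1 / q := by
          gcongr; nlinarith [sq_nonneg (v - 1/2)]
        calc _ ≤ H * (1/q + 1/q) := by gcongr
          _ = _ := by ring

/-! ### Rational approximation and partial fractions -/

open Finset Polynomial in
/-- Approximation of `g` on `(c, d)` by rational functions with a single pole at `a`, of order
`n + 1`, with control of the numerator on `[a, b]`: the Bernstein polynomial of `(a - t) g(t)` in
the Möbius variable `v(t) = (t - c)(a - d) / ((a - t)(d - c))`, divided by `a - t`. -/
theorem exists_rational_approx (a b c d : ℝ) (hab : a < b) (hcd : c < d) (hda : d < a) :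
    ∃ C₀ K : ℝ, 1 ≤ C₀ ∧ 1 ≤ K ∧ ∀ g : ℝ → ℝ, Adm c d g → ∀ q n : ℕ, 1 ≤ q → n = q ^ 4 →
      ∃ Q : ℝ[X], Q.degree < (n + 1 : ℕ) ∧
        (∀ t ∈ Ioo c d, |g t - Q.eval t / (a - t) ^ (n + 1)| ≤ C₀ * H1 c d g / q) ∧
        (∀ x ∈ Icc a b, |Q.eval x| ≤ H1 c d g * (C₀ * K ^ n)) := by
  set P := a - c with hP
  set p := a - d with hp
  set l := d - c with hl
  set B := 1 / √l + √l with hB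
  set D := b - c with hD
  have p0 : 0 < p := by linarith
  have P0 : 0 < P := by linarith
  have l0 : 0 < l := by linarith
  have D0 : 0 < D := by linarith
  have B0 : 0 < B := by positivity
  have Ppl : P = p + l := by rw [hP, hp, hl]; ring
  set C1 := 2 * ((P + √l * B) * √(P * l / p)) / p with hC1
  have C10 : 0 ≤ C1 := by positivity
  refine ⟨max 1 (max C1 (P * B)), max 1 (p / l * D + P / l * D), le_max_left _ _, le_max_left _ _, ?_⟩
  intro g hg q n hq hn
  set M := H1 c d g with hM
  have M0 : 0 ≤ M := Real.sqrt_nonneg _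
  have hsup : ∀ s ∈ Icc c d, |g s| ≤ M * B := fun s hs => hg.sup hcd hs
  set den : ℝ → ℝ := fun v => (1 - v) * p + v * P with hden
  have hdenge : ∀ v ∈ Icc (0:ℝ) 1, p ≤ den v := fun v hv => by
    simp only [hden, Ppl]; nlinarith [hv.1]
  have hdenle : ∀ v ∈ Icc (0:ℝ) 1, den v ≤ P := fun v hv => by
    simp only [hden, Ppl]; nlinarith [hv.2]
  -- The inverse `τ` of the Möbius variable; `1 / (a - τ v)` is affine in `v`.
  set τ : ℝ → ℝ := fun v => a - P * p / den v with hτ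
  have hτI : ∀ v ∈ Icc (0:ℝ) 1, τ v ∈ Icc c d := fun v hv => by
    have h1 := hdenge v hv
    have h2 := hdenle v hv
    have h3 : 0 < den v := by linarith
    constructor
    · have : P * p / den v ≤ P := by rw [div_le_iff₀ h3]; gcongr
      simp only [hτ]; linarith
    · have : p ≤ P * p / den v := by rw [le_div_iff₀ h3, mul_comm]; gcongr
      simp only [hτ]; linarith
  have hτL : ∀ v ∈ Icc (0:ℝ) 1, ∀ w ∈ Icc (0:ℝ) 1, |τ v - τ w| ≤ P * l / p * |v - w| := by
    intro v hv w hw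
    have h1 := hdenge v hv
    have h2 := hdenge w hw
    have hv0 : 0 < den v := by linarith
    have hw0 : 0 < den w := by linarith
    have e : τ v - τ w = P * p * l / (den v * den w) * (v - w) := by
      have : den v - den w = l * (v - w) := by simp only [hden, Ppl]; ring
      simp only [hτ]
      field_simp
      linear_combination this
    rw [e, abs_mul, abs_of_nonneg (by positivity : 0 ≤ P * p * l / (den v * den w))]
    apply mul_le_mul_of_nonneg_right _ (abs_nonneg _)
    rw [div_le_div_iff₀ (by positivity) p0]
    have : p * p ≤ den v * den w := by gcongr
    have hPl : 0 ≤ P * l := by positivity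
    nlinarith
  set G : ℝ → ℝ := fun t => (a - t) * g t with hG
  have hGb : ∀ t ∈ Icc c d, |G t| ≤ M * (P * B) := fun t ht => by
    simp only [hG]
    rw [abs_mul, abs_of_pos (by linarith [ht.2] : 0 < a - t)]
    calc _ ≤ P * (M * B) := by
          apply mul_le_mul (by linarith [ht.1]) (hsup t ht) (abs_nonneg _) P0.le
      _ = _ := by ring
  have hGL : ∀ t ∈ Icc c d, ∀ s ∈ Icc c d, |G t - G s| ≤ M * (P + √l * B) * √|t - s| := by
    intro t ht s hs
    have e : G t - G s = (a - t) * (g t - g s) - (t - s) * g s := by simp only [hG]; ring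
    rw [e]
    have h1 : |(a - t) * (g t - g s)| ≤ P * (M * √|t - s|) := by
      rw [abs_mul, abs_of_pos (by linarith [ht.2] : 0 < a - t)]
      exact mul_le_mul (by linarith [ht.1]) (hg.holder hs ht) (abs_nonneg _) P0.le
    have h2 : |(t - s) * g s| ≤ (√|t - s| * √l) * (M * B) := by
      rw [abs_mul]
      refine mul_le_mul ?_ (hsup s hs) (abs_nonneg _) (by positivity)
      calc |t - s| = √|t-s| * √|t-s| := (Real.mul_self_sqrt (abs_nonneg _)).symm
        _ ≤ _ := by
          gcongr
          rw [abs_le]; constructor <;> linarith [ht.1, ht.2, hs.1, hs.2]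
    calc _ ≤ _ := abs_sub _ _
      _ ≤ P * (M * √|t - s|) + (√|t - s| * √l) * (M * B) := add_le_add h1 h2
      _ = _ := by ring
  set H := M * (P + √l * B) * √(P * l / p) with hH
  have H0 : 0 ≤ H := by positivity
  have hφ : ∀ v ∈ Icc (0:ℝ) 1, ∀ w ∈ Icc (0:ℝ) 1, |G (τ v) - G (τ w)| ≤ H * √|v - w| := by
    intro v hv w hw
    refine (hGL _ (hτI v hv) _ (hτI w hw)).trans ?_
    rw [hH, mul_assoc _ (√(P*l/p)), ← Real.sqrt_mul (by positivity)]
    gcongr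
    exact hτL v hv w hw
  have hq' : (0:ℝ) < q := by exact_mod_cast hq
  set co : ℕ → ℝ := fun k => G (τ (k / n)) * (n.choose k : ℝ) * (p / l) ^ k * (P / l) ^ (n - k) with hco
  set Q : ℝ[X] := ∑ k ∈ range (n+1), C (co k) * ((X - C c) ^ k * (C d - X) ^ (n - k)) with hQ
  have hQe : ∀ x, Q.eval x = ∑ k ∈ range (n+1), co k * ((x - c) ^ k * (d - x) ^ (n - k)) := fun x => by
    simp [hQ, eval_finsetSum]
  refine ⟨Q, ?_, ?_, ?_⟩
  · refine lt_of_le_of_lt (degree_sum_le _ _) ?_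
    rw [Finset.sup_lt_iff (by exact WithBot.bot_lt_coe _)]
    intro k hk
    have hk' : k ≤ n := by simpa [Nat.lt_succ_iff] using hk
    refine lt_of_le_of_lt degree_le_natDegree ?_
    norm_cast
    refine lt_of_le_of_lt ?_ (Nat.lt_succ_self n)
    compute_degree
    omega
  · intro t ht
    have hat : 0 < a - t := by linarith [ht.2]
    set v := (t - c) * p / ((a - t) * l) with hv
    have hv1 : 1 - v = (d - t) * P / ((a - t) * l) := by
      rw [hv]; field_simp; rw [hP, hp, hl]; ring
    have hvI : v ∈ Icc (0:ℝ) 1 := by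
      have h1 : 0 ≤ v := by
        have : 0 ≤ t - c := by linarith [ht.1]
        positivity
      have h2 : 0 ≤ 1 - v := by
        rw [hv1]
        have : 0 ≤ d - t := by linarith [ht.2]
        positivity
      exact ⟨h1, by linarith⟩
    have hτv : τ v = t := by
      have : den v = P * p / (a - t) := by
        simp only [hden]
        rw [hv1, hv]; field_simp; rw [hl]; ring
      simp only [hτ, this]
      field_simp
      ring
    have key := bernstein_approx (fun v => G (τ v)) H H0 hφ q n hq hn v hvI
    simp only [hτv] at key
    have e : ∑ k ∈ range (n+1), G (τ (k / n)) * ((n.choose k : ℝ) * v ^ k * (1 - v) ^ (n - k))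
        = Q.eval t / (a - t) ^ n := by
      rw [hQe, sum_div]
      refine sum_congr rfl fun k hk => ?_
      have hk' : k ≤ n := by simpa [Nat.lt_succ_iff] using hk
      have hs : (a - t) ^ n = (a - t) ^ k * (a - t) ^ (n - k) := by
        rw [← pow_add]; congr 1; omega
      rw [hv1, hv, hs]
      simp only [hco, div_pow, mul_pow]
      field_simp
    rw [e] at key
    have e2 : g t - Q.eval t / (a - t) ^ (n + 1) = (G t - Q.eval t / (a - t) ^ n) / (a - t) := by
      simp only [hG]; field_simp; ring
    rw [e2, abs_div, abs_of_pos hat]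
    calc _ ≤ (2 * H / q) / p := by
          apply div_le_div₀ (by positivity) key p0 (by linarith [ht.2])
      _ = C1 * M / q := by rw [hC1, hH]; ring
      _ ≤ _ := by
          gcongr
          exact (le_max_left _ _).trans (le_max_right _ _)
  · intro x hx
    rw [hQe]
    calc _ ≤ ∑ k ∈ range (n+1), |co k * ((x - c) ^ k * (d - x) ^ (n - k))| := abs_sum_le_sum_abs _ _
      _ ≤ ∑ k ∈ range (n+1), M * (P * B) * ((p / l * D) ^ k * (P / l * D) ^ (n - k) * (n.choose k : ℝ)) := by
          refine sum_le_sum fun k hk => ?_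
          have hk' : k ≤ n := by simpa [Nat.lt_succ_iff] using hk
          have hkI : (k / n : ℝ) ∈ Icc (0:ℝ) 1 := ⟨by positivity, by
            apply div_le_one_of_le₀ (by exact_mod_cast hk') (by positivity)⟩
          have h1 := hGb _ (hτI _ hkI)
          have h2 : |x - c| ≤ D := by
            rw [abs_le]; constructor <;> linarith [hx.1, hx.2]
          have h3 : |d - x| ≤ D := by
            rw [abs_le]; constructor <;> linarith [hx.1, hx.2]
          have hpl : 0 < p / l := by positivity
          have hPl : 0 < P / l := by positivity
          simp only [hco, abs_mul, abs_pow, Nat.abs_cast, abs_of_pos hpl, abs_of_pos hPl, mul_pow]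
          calc _ ≤ M * (P * B) * ↑(n.choose k) * (p / l) ^ k * (P / l) ^ (n - k) * (D ^ k * D ^ (n - k)) := by
                gcongr
            _ = _ := by ring
      _ = M * ((P * B) * (p / l * D + P / l * D) ^ n) := by
          rw [← mul_sum, ← add_pow]; ring
      _ ≤ _ := by
          gcongr
          · exact (le_max_right _ _).trans (le_max_right _ _)
          · exact le_max_right _ _

open Finset Polynomial in
/-- Partial fractions with `h`-separated simple poles, from the barycentric form of Lagrange
interpolation; the coefficients are bounded by the values of the numerator at the poles. -/
theorem exists_partial_fractions (n : ℕ) (h : ℝ) (hh : 0 < h) (x : ℕ → ℝ)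
    (hgap : ∀ i ∈ range (n+1), ∀ j ∈ range (n+1), i ≠ j → h ≤ |x i - x j|)
    (Q : ℝ[X]) (hQ : Q.degree < (n + 1 : ℕ)) :
    ∃ w : ℕ → ℝ, (∀ i ∈ range (n+1), |w i| ≤ |Q.eval (x i)| / h ^ n) ∧
      ∀ t, (∀ i ∈ range (n+1), t ≠ x i) →
        Q.eval t / ∏ i ∈ range (n+1), (x i - t) = ∑ i ∈ range (n+1), w i / (x i - t) := by
  have hinj : Set.InjOn x (Finset.range (n+1)) := by
    intro i hi j hj hij
    by_contra hne
    have := hgap i hi j hj hne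
    rw [hij, sub_self, abs_zero] at this
    linarith
  refine ⟨fun i => (-1) ^ n * (Lagrange.nodalWeight (range (n+1)) x i * Q.eval (x i)), ?_, ?_⟩
  · intro i hi
    rw [abs_mul, abs_pow, abs_neg, abs_one, one_pow, one_mul, abs_mul, mul_comm, div_eq_mul_inv]
    gcongr
    rw [Lagrange.nodalWeight, prod_inv_distrib, abs_inv]
    gcongr
    rw [Finset.abs_prod]
    have : #((range (n+1)).erase i) = n := by rw [card_erase_of_mem hi, card_range]; rfl
    calc h ^ n = ∏ j ∈ (range (n+1)).erase i, h := by rw [prod_const, this]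
      _ ≤ _ := by
        apply prod_le_prod (fun _ _ => hh.le)
        intro j hj
        exact hgap i hi j (mem_of_mem_erase hj) (ne_of_mem_erase hj).symm
  · intro t ht
    have h1 := Lagrange.eq_interpolate (s := range (n+1)) (v := x) (f := Q) hinj (by rw [card_range]; exact hQ)
    have h2 := Lagrange.eval_interpolate_not_at_node (s := range (n+1)) (v := x) (x := t) (fun i => Q.eval (x i)) ht
    rw [← h1, Lagrange.eval_nodal] at h2
    have h3 : ∏ i ∈ range (n+1), (t - x i) = (-1) ^ (n+1) * ∏ i ∈ range (n+1), (x i - t) := by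
      have : ∀ i ∈ range (n+1), t - x i = (-1) * (x i - t) := fun i _ => by ring
      rw [prod_congr rfl this, prod_mul_distrib, prod_const, card_range]
    have h4 : ∏ i ∈ range (n+1), (x i - t) ≠ 0 := by
      rw [prod_ne_zero_iff]; intro i hi; exact sub_ne_zero.2 (ht i hi).symm
    rw [h2, h3, mul_comm ((-1:ℝ)^(n+1)), mul_assoc, mul_div_cancel_left₀ _ h4, mul_sum]
    refine sum_congr rfl fun i hi => ?_
    have h5 : x i - t ≠ 0 := sub_ne_zero.2 (ht i hi).symm
    have h6 : (t - x i)⁻¹ = - (x i - t)⁻¹ := by rw [← neg_sub, inv_neg]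
    rw [h6]
    ring

/-! ### Testing the Hilbert transform at points of the interval -/

theorem kernel_integrable {c d a x : ℝ} (hda : d < a) (hx : a ≤ x) {g : ℝ → ℝ}
    (hg : IntegrableOn g (Ioo c d) volume) (hgm : Measurable g) :
    IntegrableOn (fun t => g t / (x - t)) (Ioo c d) volume := by
  refine Integrable.mono' (g := fun t => |g t| / (a - d)) (hg.abs.div_const _)
    (hgm.div (measurable_const.sub measurable_id)).aestronglyMeasurable ?_
  refine (ae_restrict_iff' measurableSet_Ioo).2 (Filter.Eventually.of_forall fun t ht => ?_)
  rw [Real.norm_eq_abs, abs_div]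
  have : 0 < a - d := by linarith
  gcongr
  rw [abs_of_pos (by linarith [ht.2])]
  linarith [ht.2]

theorem truncHilbert_continuousOn {c d a : ℝ} (hda : d < a) {g : ℝ → ℝ}
    (hg : IntegrableOn g (Ioo c d) volume) (hgm : Measurable g) :
    ContinuousOn (truncHilbert (Ioo c d) g) (Ici a) := by
  unfold truncHilbert
  refine continuousOn_of_dominated (bound := fun t => |g t| / (a - d)) ?_ ?_ (hg.abs.div_const _) ?_
  · intro x hx
    exact (hgm.div (measurable_const.sub measurable_id)).aestronglyMeasurable
  · intro x hx
    refine (ae_restrict_iff' measurableSet_Ioo).2 (Filter.Eventually.of_forall fun t ht => ?_)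
    rw [Real.norm_eq_abs, abs_div]
    have : 0 < a - d := by linarith
    have hx' : a ≤ x := hx
    gcongr
    rw [abs_of_pos (by linarith [ht.2])]
    linarith [ht.2]
  · refine (ae_restrict_iff' measurableSet_Ioo).2 (Filter.Eventually.of_forall fun t ht => ?_)
    refine ContinuousOn.div continuousOn_const (by fun_prop) ?_
    intro x hx
    have hx' : a ≤ x := hx
    have := ht.2
    exact (by linarith : 0 < x - t).ne'

open Finset in
/-- Replacing the factor `(a - t)ⁿ⁺¹` by `∏ (xᵢ - t)` with poles `xᵢ ∈ (a, a + η]` costs a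
relative error `(n + 1) η / p`, by Bernoulli's inequality. -/
theorem prod_ratio_bounds (n : ℕ) (a t p η ε : ℝ) (x : ℕ → ℝ) (p0 : 0 < p) (hat : p ≤ a - t)
    (hx : ∀ i ∈ range (n+1), a < x i ∧ x i - a ≤ η) (hη : η ≤ p)
    (hε : (n + 1 : ℝ) * (η / p) ≤ ε) :
    1 - ε ≤ ∏ i ∈ range (n+1), ((a - t) / (x i - t)) ∧
      ∏ i ∈ range (n+1), ((a - t) / (x i - t)) ≤ 1 := by
  have hxt : ∀ i ∈ range (n+1), 0 < x i - t := fun i hi => by linarith [(hx i hi).1]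
  have hu : η / p ≤ 1 := by
    rw [div_le_one p0]; linarith
  constructor
  · calc (1:ℝ) - ε ≤ 1 + ((n+1 : ℕ):ℝ) * (-(η / p)) := by
          push_cast
          linarith
      _ ≤ (1 + (-(η / p))) ^ (n+1) := one_add_mul_le_pow (by linarith) _
      _ = ∏ i ∈ range (n+1), (1 + (-(η / p))) := by rw [prod_const, card_range]
      _ ≤ _ := by
        apply prod_le_prod
        · intro i hi; linarith
        · intro i hi
          have h2 := hxt i hi
          obtain ⟨h4, h5⟩ := hx i hi
          have h3 : (a - t) / (x i - t) = 1 + -((x i - a) / (x i - t)) := by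
            field_simp; ring
          rw [h3]
          have : (x i - a) / (x i - t) ≤ η / p :=
            div_le_div₀ (by linarith) h5 p0 (by linarith)
          linarith
  · apply prod_le_one
    · intro i hi
      have := hxt i hi
      exact div_nonneg (by linarith) this.le
    · intro i hi
      rw [div_le_one (hxt i hi)]; linarith [(hx i hi).1]

set_option maxHeartbeats 1000000 in
open Finset in
/-- The quantitative duality estimate: `∫ g²` is bounded by the approximation error at degree
`n = q⁴` plus a multiple of the norm of the Hilbert transform on `(a, b)`. -/
theorem sq_norm_le (a b c d : ℝ) (hab : a < b) (hcd : c < d) (hda : d < a) :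
    ∃ C₀ K : ℝ, 1 ≤ C₀ ∧ 1 ≤ K ∧ ∀ g : ℝ → ℝ, Adm c d g → ∀ q : ℕ, 1 ≤ q →
      (∫ t in Ioo c d, (g t) ^ 2) ≤
        C₀ * H1 c d g * √(∫ t in Ioo c d, (g t) ^ 2) / q +
        H1 c d g * (K * (q ^ 4 + 1 : ℝ) ^ 4) ^ (q ^ 4 + 1) *
          √(∫ x in Ioo a b, (truncHilbert (Ioo c d) g x) ^ 2) := by
  obtain ⟨C₀, K, hC₀, hK, H⟩ := exists_rational_approx a b c d hab hcd hda
  set p := a - d with hp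
  set l := d - c with hl
  set B := 1 / √l + √l with hB
  have p0 : 0 < p := by linarith
  have l0 : 0 < l := by linarith
  have B0 : 0 < B := by positivity
  -- The factor `κ` keeps the poles inside `(a, b)` and the relative error at most `1 / N`.
  set κ := min 1 (min (b - a) p / 2) with hκ
  have κ0 : 0 < κ := by
    have : 0 < min (b - a) p := lt_min (by linarith) p0
    rw [hκ]; positivity
  have κ1 : κ ≤ 1 := min_le_left _ _
  have κb : 2 * κ ≤ b - a := by
    have := min_le_right 1 (min (b - a) p / 2); have := min_le_left (b-a) p; linarith
  have κp : 2 * κ ≤ p := by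
    have := min_le_right 1 (min (b - a) p / 2); have := min_le_right (b-a) p; linarith
  set C1 := 2 * C₀ + B with hC1
  refine ⟨max 1 (C1 * √l), C₀ * K / κ, le_max_left _ _, ?_, ?_⟩
  · rw [le_div_iff₀ κ0]; nlinarith
  intro g hg q hq
  have hgm : Measurable g := hg.diff.continuous.measurable
  obtain ⟨g1, -⟩ := sq_int_le c d hcd g hgm hg.sq
  have gabs : ∫ t in Ioo c d, |g t| ≤ √l * √(∫ t in Ioo c d, (g t) ^ 2) := by
    rw [← Real.sqrt_mul l0.le]
    apply Real.le_sqrt_of_sq_le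
    have := (sq_int_le c d hcd (fun t => |g t|) hgm.abs (by simpa using hg.sq)).2
    simpa using this
  set n := q ^ 4 with hn
  obtain ⟨Q, hdeg, hQ1, hQ2⟩ := H g hg q n hq hn
  set M := H1 c d g with hM
  have M0 : 0 ≤ M := Real.sqrt_nonneg _
  have hsup : ∀ s ∈ Icc c d, |g s| ≤ M * B := fun s hs => hg.sup hcd hs
  set m := √(∫ t in Ioo c d, (g t) ^ 2) with hm
  set F := truncHilbert (Ioo c d) g with hF
  set δ := √(∫ x in Ioo a b, (F x) ^ 2) with hδ
  have δ0 : 0 ≤ δ := Real.sqrt_nonneg _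
  have hq' : (1:ℝ) ≤ q := by exact_mod_cast hq
  have hq0 : (0:ℝ) < q := by linarith
  set N : ℝ := (q:ℝ) ^ 4 + 1 with hN
  have hNn : N = (n:ℝ) + 1 := by rw [hN, hn]; push_cast; rfl
  have hNq : (q:ℝ) ≤ N := by
    have : (q:ℝ) ≤ q ^ 4 := le_self_pow₀ hq' (by norm_num)
    rw [hN]; linarith
  have hN1 : 1 ≤ N := by linarith
  have N0 : 0 < N := by linarith
  set h := κ / N ^ 3 with hh
  have h0 : 0 < h := by positivity
  have h1 : h ≤ 1 := by
    rw [hh, div_le_one (by positivity)]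
    exact κ1.trans (one_le_pow₀ hN1)
  have hNh : 2 * N * h * N ≤ 2 * κ / N := by
    rw [hh]; apply le_of_eq; field_simp
  have hNh' : 2 * N * h ≤ 2 * κ := by
    have : 2 * N * h = 2 * κ / N ^ 2 := by rw [hh]; field_simp
    rw [this]
    exact div_le_self (by positivity) (one_le_pow₀ hN1)
  have Fc : ContinuousOn F (Icc a b) := (truncHilbert_continuousOn hda g1 hgm).mono Icc_subset_Ici_self
  have Fi : IntegrableOn (fun x => (F x) ^ 2) (Ioo a b) volume :=
    ((Fc.pow 2).integrableOn_Icc).mono_set Ioo_subset_Icc_self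
  -- One pole in each second interval of length `h`, which makes the poles `h`-separated.
  have pick : ∀ j : ℕ, ∃ x, j ∈ range (n+1) →
      x ∈ Ioo (a + 2 * j * h) (a + (2 * j + 1) * h) ∧ |F x| ≤ δ / h := by
    intro j
    by_cases hj : j ∈ range (n+1)
    · have hjN : (j:ℝ) + 1 ≤ N := by
        rw [hNn]; have := Finset.mem_range.1 hj; exact_mod_cast this
      obtain ⟨x, hx, hx2⟩ := exists_small (a + 2 * j * h) (a + (2 * j + 1) * h) (by linarith)
        (Ioo a b) (Ioo_subset_Ioo (by have : 0 ≤ 2 * (j:ℝ) * h := by positivity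
                                      linarith) (by nlinarith)) _ (fun x => sq_nonneg (F x)) Fi
      refine ⟨x, fun _ => ⟨hx, ?_⟩⟩
      apply abs_le_of_sq_le_sq _ (by positivity)
      rw [div_pow, hδ, Real.sq_sqrt (integral_nonneg fun x => sq_nonneg _), le_div_iff₀ (by positivity)]
      have e : a + (2 * ↑j + 1) * h - (a + 2 * ↑j * h) = h := by ring
      rw [e] at hx2
      refine le_trans ?_ hx2
      have : h ^ 2 ≤ h := by nlinarith
      gcongr
    · exact ⟨0, fun h => absurd h hj⟩
  choose x hx using pick
  have hxI : ∀ j ∈ range (n+1), a < x j ∧ x j - a ≤ 2 * N * h := by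
    intro j hj
    obtain ⟨⟨h2, h3⟩, -⟩ := hx j hj
    have hjN : (j:ℝ) + 1 ≤ N := by
      rw [hNn]; have := Finset.mem_range.1 hj; exact_mod_cast this
    have : 0 ≤ 2 * (j:ℝ) * h := by positivity
    constructor
    · linarith
    · nlinarith
  have hgap' : ∀ i ∈ range (n+1), ∀ j ∈ range (n+1), i < j → h ≤ x j - x i := by
    intro i hi j hj hij
    have h2 := (hx i hi).1.2
    have h3 := (hx j hj).1.1
    have : (i:ℝ) + 1 ≤ j := by exact_mod_cast hij
    nlinarith
  have hgap : ∀ i ∈ range (n+1), ∀ j ∈ range (n+1), i ≠ j → h ≤ |x i - x j| := by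
    intro i hi j hj hij
    rcases lt_or_gt_of_ne hij with h2 | h2
    · rw [abs_sub_comm]; exact (hgap' i hi j hj h2).trans (le_abs_self _)
    · exact (hgap' j hj i hi h2).trans (le_abs_self _)
  obtain ⟨w, hw, hS⟩ := exists_partial_fractions n h h0 x hgap Q hdeg
  set S : ℝ → ℝ := fun t => ∑ i ∈ range (n+1), w i / (x i - t) with hSdef
  have hgS : ∀ t ∈ Ioo c d, |g t - S t| ≤ C1 * M / q := by
    intro t ht
    have hat : p ≤ a - t := by linarith [ht.2]
    have hat0 : 0 < a - t := by linarith
    have hxt : ∀ i ∈ range (n+1), 0 < x i - t := fun i hi => by linarith [(hxI i hi).1]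
    set Y := Q.eval t / (a - t) ^ (n + 1) with hY
    set Pr := ∏ i ∈ range (n+1), ((a - t) / (x i - t)) with hPr
    have hSY : S t = Y * Pr := by
      simp only [hSdef]
      rw [← hS t (fun i hi => by linarith [hxt i hi]), hY, hPr, prod_div_distrib, prod_const, card_range]
      have : ∏ i ∈ range (n+1), (x i - t) ≠ 0 := prod_ne_zero_iff.2 fun i hi => (hxt i hi).ne'
      field_simp
    obtain ⟨hPr2, hPr1⟩ : 1 - 1 / (q:ℝ) ≤ Pr ∧ Pr ≤ 1 := by
      refine prod_ratio_bounds n a t p (2 * N * h) (1 / q) x p0 hat hxI (hNh'.trans κp) ?_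
      rw [← hNn]
      calc N * (2 * N * h / p) = (2 * N * h * N) / p := by ring
        _ ≤ (p / N) / p := by
          gcongr
          refine hNh.trans ?_
          gcongr
        _ = 1 / N := by field_simp
        _ ≤ 1 / q := by gcongr
    have hQ := hQ1 t ht
    have hYb : |Y| ≤ M * B + C₀ * M := by
      have h2 := hsup t (Ioo_subset_Icc_self ht)
      have h3 : |Y| ≤ |g t| + |g t - Y| := by
        have := abs_sub (g t) (g t - Y); simpa using this
      have h4 : C₀ * M / q ≤ C₀ * M := div_le_self (by positivity) hq'
      linarith
    have e : g t - S t = (g t - Y) + Y * (1 - Pr) := by rw [hSY]; ring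
    rw [e]
    calc _ ≤ |g t - Y| + |Y * (1 - Pr)| := abs_add_le _ _
      _ ≤ C₀ * M / q + (M * B + C₀ * M) * (1 / q) := by
        apply add_le_add hQ
        rw [abs_mul]
        apply mul_le_mul hYb _ (abs_nonneg _) (by positivity)
        rw [abs_of_nonneg (by linarith)]; linarith
      _ = _ := by rw [hC1]; ring
  have hki : ∀ i ∈ range (n+1), IntegrableOn (fun t => w i * (g t / (x i - t))) (Ioo c d) volume :=
    fun i hi => (kernel_integrable hda (hxI i hi).1.le g1 hgm).const_mul _
  have egS : ∀ t, g t * S t = ∑ i ∈ range (n+1), w i * (g t / (x i - t)) := by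
    intro t
    simp only [hSdef, mul_sum]
    exact sum_congr rfl fun i _ => by ring
  have hgSi : IntegrableOn (fun t => g t * S t) (Ioo c d) volume := by
    simp_rw [egS]
    exact integrable_finsetSum _ hki
  have hgSint : ∫ t in Ioo c d, g t * S t = ∑ i ∈ range (n+1), w i * F (x i) := by
    simp_rw [egS]
    rw [integral_finsetSum _ hki]
    refine sum_congr rfl fun i _ => ?_
    rw [integral_const_mul]; rfl
  have first : (∫ t in Ioo c d, (g t)^2) - ∫ t in Ioo c d, g t * S t ≤ C1 * M / q * (√l * m) := by
    rw [← integral_sub hg.sq hgSi]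
    calc _ ≤ ∫ t in Ioo c d, C1 * M / q * |g t| := by
          apply setIntegral_mono_on (hg.sq.sub hgSi) (g1.abs.const_mul _) measurableSet_Ioo
          intro t ht
          have e : g t ^ 2 - g t * S t = g t * (g t - S t) := by ring
          change g t ^ 2 - g t * S t ≤ _
          rw [e]
          refine (le_abs_self _).trans ?_
          rw [abs_mul, mul_comm]
          gcongr
          exact hgS t ht
      _ = C1 * M / q * ∫ t in Ioo c d, |g t| := integral_const_mul _ _
      _ ≤ _ := by gcongr
  have second : ∑ i ∈ range (n+1), w i * F (x i) ≤ M * (C₀ * K / κ * N ^ 4) ^ (n+1) * δ := by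
    calc _ ≤ ∑ i ∈ range (n+1), M * (C₀ * K ^ n) / h ^ n * (δ / h) := by
          apply sum_le_sum
          intro i hi
          refine (le_abs_self _).trans ?_
          rw [abs_mul]
          refine mul_le_mul ?_ (hx i hi).2 (abs_nonneg _) (by positivity)
          refine (hw i hi).trans ?_
          gcongr
          apply hQ2
          have := hxI i hi
          exact ⟨this.1.le, by linarith⟩
      _ = M * (N * C₀ * K ^ n * (N ^ 3 / κ) ^ (n+1)) * δ := by
          rw [sum_const, card_range, nsmul_eq_mul]
          push_cast
          rw [← hNn]
          have : N ^ 3 / κ = h⁻¹ := by rw [hh, inv_div]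
          rw [this, inv_pow, pow_succ]
          field_simp
      _ ≤ M * (N ^ (n+1) * C₀ ^ (n+1) * K ^ (n+1) * (N ^ 3 / κ) ^ (n+1)) * δ := by
          gcongr
          · exact le_self_pow₀ hN1 (by omega)
          · exact le_self_pow₀ hC₀ (by omega)
          · omega
      _ = _ := by
          rw [← mul_pow, ← mul_pow, ← mul_pow]
          congr 3
          field_simp
  rw [hgSint] at first
  calc _ ≤ C1 * M / q * (√l * m) + M * (C₀ * K / κ * N ^ 4) ^ (n+1) * δ := by linarith
    _ ≤ _ := by
      gcongr ?_ + _
      have : C1 * M / q * (√l * m) = (C1 * √l) * M * m / q := by ring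
      rw [this]
      gcongr
      exact le_max_right _ _

/-! ### Choice of the degree -/

/-- The estimate when `(a, b)` lies to the right of `(c, d)`, with exponent `8`. -/
theorem right_case (a b c d : ℝ) (hab : a < b) (hcd : c < d) (hda : d < a) :
    ∃ C : ℝ, 1 < C ∧ ∀ g : ℝ → ℝ, Adm c d g → 0 < (∫ t in Ioo c d, (g t) ^ 2) →
      H1 c d g ≤ Real.exp (C * (1 + (H1 c d g / √(∫ t in Ioo c d, (g t) ^ 2)) ^ (8:ℝ))) *
        √(∫ x in Ioo a b, (truncHilbert (Ioo c d) g x) ^ 2) := by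
  obtain ⟨C₀, K, hC₀, hK, H⟩ := sq_norm_le a b c d hab hcd hda
  set C5 := 2 * C₀ + 2 with hC5
  refine ⟨2 + (K + 4) * (4 * C5 ^ 8), ?_, ?_⟩
  · have : 0 < (K + 4) * (4 * C5 ^ 8) := by positivity
    linarith
  intro g hg hpos
  have hL := hg.L2_le
  set M := H1 c d g with hM
  have M0 : 0 ≤ M := Real.sqrt_nonneg _
  set m2 := ∫ t in Ioo c d, (g t) ^ 2 with hm2
  set m := √m2 with hm
  have m0 : 0 < m := Real.sqrt_pos.2 hpos
  have hmm : m ^ 2 = m2 := Real.sq_sqrt hpos.le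
  have hmM : m ≤ M := by
    rw [hm]; exact (Real.sqrt_le_left M0).2 hL
  set δ := √(∫ x in Ioo a b, (truncHilbert (Ioo c d) g x) ^ 2) with hδ
  have δ0 : 0 ≤ δ := Real.sqrt_nonneg _
  set R := M / m with hR
  have hR1 : 1 ≤ R := (one_le_div m0).2 hmM
  have hMR : M = R * m := by rw [hR]; field_simp
  -- This degree makes the approximation error at most `m² / 2`.
  set q := ⌈2 * C₀ * R⌉₊ with hq
  have hqle : 2 * C₀ * R ≤ q := Nat.le_ceil _
  have hq1 : (1:ℝ) ≤ q := by nlinarith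
  have hqlt : (q:ℝ) ≤ C5 * R := by
    have := (Nat.ceil_lt_add_one (by positivity : 0 ≤ 2 * C₀ * R)).le
    rw [hC5]; linarith
  have h1 := H g hg q (by exact_mod_cast hq1)
  set N : ℝ := (q:ℝ) ^ 4 + 1 with hN
  change m2 ≤ C₀ * M * m / q + M * (K * N ^ 4) ^ (q ^ 4 + 1) * δ at h1
  have N0 : 0 < N := by positivity
  have hN2 : N ^ 2 ≤ 4 * C5 ^ 8 * R ^ 8 := by
    have h2 : (1:ℝ) ≤ (q:ℝ)^4 := one_le_pow₀ hq1
    have h3 : N ≤ 2 * (C5 * R) ^ 4 := by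
      calc N ≤ 2 * (q:ℝ)^4 := by rw [hN]; linarith
        _ ≤ _ := by gcongr
    calc N ^ 2 ≤ (2 * (C5 * R)^4)^2 := by gcongr
      _ = _ := by ring
  have hexp : (K * N ^ 4) ^ (q ^ 4 + 1) ≤ Real.exp ((K + 4) * N ^ 2) := by
    have hN1 : 1 ≤ N := by rw [hN]; have : (0:ℝ) ≤ (q:ℝ)^4 := by positivity
                           linarith
    have h2 : K ≤ Real.exp K := by linarith [Real.add_one_le_exp K]
    have h3 : N ≤ Real.exp N := by linarith [Real.add_one_le_exp N]
    calc _ ≤ (Real.exp K * (Real.exp N)^4) ^ (q^4+1) := by gcongr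
      _ = Real.exp (N * (K + 4 * N)) := by
        rw [← Real.exp_nat_mul, ← Real.exp_add, ← Real.exp_nat_mul]
        push_cast
        rfl
      _ ≤ _ := by
        apply Real.exp_le_exp.2
        have : 0 ≤ K * N * (N - 1) := mul_nonneg (by positivity) (by linarith)
        nlinarith
  have h2 : C₀ * M * m / q ≤ m2 / 2 := by
    rw [div_le_iff₀ (by linarith), ← hmm, hMR]
    have : 0 ≤ m ^ 2 := by positivity
    nlinarith
  have h3 : m2 / 2 ≤ M * Real.exp ((K + 4) * N ^ 2) * δ := by
    have : M * (K * N ^ 4) ^ (q ^ 4 + 1) * δ ≤ M * Real.exp ((K + 4) * N ^ 2) * δ := by gcongr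
    linarith
  have h4 : M ≤ 2 * R ^ 2 * Real.exp ((K + 4) * N ^ 2) * δ := by
    have h5 : m ≤ 2 * R * Real.exp ((K + 4) * N ^ 2) * δ := by
      rw [← hmm, hMR] at h3
      have : m * m ≤ m * (2 * R * Real.exp ((K + 4) * N ^ 2) * δ) := by linarith
      exact le_of_mul_le_mul_left this m0
    calc M = R * m := hMR
      _ ≤ R * (2 * R * Real.exp ((K + 4) * N ^ 2) * δ) := by gcongr
      _ = _ := by ring
  refine h4.trans ?_
  gcongr
  have h5 : 2 * R ^ 2 ≤ Real.exp (2 * R ^ 8) := by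
    have h6 : R ^ 2 ≤ R ^ 8 := pow_le_pow_right₀ hR1 (by norm_num)
    linarith [Real.add_one_le_exp (2 * R ^ 8)]
  calc _ ≤ Real.exp (2 * R^8) * Real.exp ((K + 4) * (4 * C5 ^ 8 * R ^ 8)) := by gcongr
    _ = Real.exp ((2 + (K + 4) * (4 * C5 ^ 8)) * R ^ 8) := by rw [← Real.exp_add]; congr 1; ring
    _ ≤ _ := by
      apply Real.exp_le_exp.2
      have : R ^ (8:ℝ) = R ^ 8 := by rw [← Real.rpow_natCast]; norm_num
      rw [this]
      gcongr
      linarith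

/-! ### Reflection and conclusion -/

theorem setIntegral_Ioo_neg (p q : ℝ) (h : p ≤ q) (f : ℝ → ℝ) :
    ∫ t in Ioo (-q) (-p), f (-t) = ∫ t in Ioo p q, f t := by
  rw [← integral_Ioc_eq_integral_Ioo, ← integral_Ioc_eq_integral_Ioo,
    ← intervalIntegral.integral_of_le (by linarith), ← intervalIntegral.integral_of_le h,
    intervalIntegral.integral_comp_neg, neg_neg, neg_neg]

theorem integrableOn_Ioo_neg (p q : ℝ) (f : ℝ → ℝ) (hf : IntegrableOn f (Ioo p q) volume) :
    IntegrableOn (fun t => f (-t)) (Ioo (-q) (-p)) volume := by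
  have := (Measure.measurePreserving_neg (volume : Measure ℝ)).integrableOn_comp_preimage
    (MeasurableEquiv.neg ℝ).measurableEmbedding (f := f) (s := Ioo p q)
  have h2 := this.2 hf
  simpa [Function.comp_def] using h2

theorem stmt_0 (a b c d : ℝ) (hab : a < b) (hcd : c < d)
    (hdisj : Disjoint (closure (Ioo a b)) (closure (Ioo c d))) :
    ∃ σ C : ℝ, 0 < σ ∧ 1 < C ∧
      ∀ g : ℝ → ℝ, Differentiable ℝ g →
        IntegrableOn (fun t => (g t) ^ 2) (Ioo c d) volume →
        IntegrableOn (fun t => (deriv g t) ^ 2) (Ioo c d) volume →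
        0 < (∫ t in Ioo c d, (g t) ^ 2) →
        Real.sqrt (∫ t in Ioo c d, ((g t) ^ 2 + (deriv g t) ^ 2)) ≤
          Real.exp (C * (1 +
              (Real.sqrt (∫ t in Ioo c d, ((g t) ^ 2 + (deriv g t) ^ 2)) /
                Real.sqrt (∫ t in Ioo c d, (g t) ^ 2)) ^ σ)) *
            Real.sqrt (∫ x in Ioo a b, (truncHilbert (Ioo c d) g x) ^ 2) := by
  rw [closure_Ioo hab.ne, closure_Ioo hcd.ne, Set.disjoint_left] at hdisj
  have hcase : d < a ∨ b < c := by
    by_contra! hcon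
    exact hdisj (a := max a c) ⟨le_max_left _ _, max_le hab.le hcon.2⟩ ⟨le_max_right _ _, max_le hcon.1 hcd.le⟩
  rcases hcase with hda | hbc
  · obtain ⟨C, hC, H⟩ := right_case a b c d hab hcd hda
    exact ⟨8, C, by norm_num, hC, fun g h1 h2 h3 h4 => H g ⟨h1, h2, h3⟩ h4⟩
  -- For `(a, b)` on the left, `t ↦ g (-t)` satisfies the hypotheses on `(-d, -c)`, and its Hilbert
  -- transform is that of `g` at `-x` up to sign.
  · obtain ⟨C, hC, H⟩ := right_case (-b) (-a) (-d) (-c) (by linarith) (by linarith) (by linarith)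
    refine ⟨8, C, by norm_num, hC, fun g h1 h2 h3 h4 => ?_⟩
    have hder : ∀ t, deriv (fun t => g (-t)) t ^ 2 = deriv g (-t) ^ 2 := fun t => by
      rw [deriv_comp_neg]; ring
    have e1 : ∫ t in Ioo (-d) (-c), (g (-t)) ^ 2 = ∫ t in Ioo c d, (g t) ^ 2 :=
      setIntegral_Ioo_neg c d hcd.le (fun t => (g t) ^ 2)
    have e2 : H1 (-d) (-c) (fun t => g (-t)) = H1 c d g := by
      unfold H1
      simp_rw [hder]
      rw [setIntegral_Ioo_neg c d hcd.le (fun t => (g t) ^ 2 + deriv g t ^ 2)]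
    have e3 : ∀ x, truncHilbert (Ioo (-d) (-c)) (fun t => g (-t)) x ^ 2
        = truncHilbert (Ioo c d) g (-x) ^ 2 := fun x => by
      unfold truncHilbert
      have := setIntegral_Ioo_neg c d hcd.le (fun t => g t / (x + t))
      simp only [← sub_eq_add_neg] at this
      rw [this]
      have e : ∀ t, g t / (-x - t) = -(g t / (x + t)) := fun t => by
        rw [← div_neg]; congr 1; ring
      simp_rw [e]
      rw [integral_neg, neg_sq]
    have := H (fun t => g (-t)) ⟨h1.comp differentiable_neg, integrableOn_Ioo_neg c d _ h2, by
      simp_rw [hder]; exact integrableOn_Ioo_neg c d (fun t => deriv g t ^ 2) h3⟩ (by rw [e1]; exact h4)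
    rw [e1, e2] at this
    simp_rw [e3] at this
    rw [setIntegral_Ioo_neg a b hab.le (fun x => truncHilbert (Ioo c d) g x ^ 2)] at this
    exact this
end

section
/- Let I, J ⊂ ℝ be nonempty bounded open intervals with disjoint closures. Then there exist constants σ > 0 and C > 1 (depending only on I and J) such that for every ε > 0 and every differentiable function h : ℝ → ℝ with derivative h′ satisfying ∫_J h(t)² dt < ∞ and ∫_J h′(t)² dt < ∞, there exists a measurable f : ℝ → ℝ with ∫_I f(t)² dt < ∞ such that ( ∫_J (h(x) − (H_I f)(x))² dx )^{1/2} ≤ ε and ‖f‖_{L²(I)} ≤ exp( C · (1 + ‖h‖_{H¹(J)}^{σ} / ε^{σ}) ) · ‖h‖_{L²(J)}. -/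
/-!
The approximant is constructed explicitly. Write `L = ‖h‖_{H¹}` and `N = L / ε`; the exponent in the
theorem is `σ = 5`.

* By the Sobolev embedding (`holder_bound`, `sup_bound`), `h` is bounded by `O(L)` and Hölder
  continuous of exponent `1/2` on `[c, d]`. In the variable `1 / (x - a)`, suitably normalized,
  Bernstein polynomials of degree `n = m⁴` approximate it within `O(L / m)`. This gives a rational
  function `P / (x - a)^(n+1)`, with `P` of degree at most `n` and bounded by `exp (O(n)) L` on
  `[a, b]` (`poly_approx`).
* Replacing the multiple pole by simple poles `a + j δ`, `0 ≤ j ≤ n`, with `δ` about `1 / (n² m)`,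
  costs another `O(L / m)` (`ratio_perturb`). Partial fractions express the result as
  `∑ w_j / (x - a - j δ)` with `|w_j| ≤ exp (O(n)) δ⁻ⁿ L` (`partial_fractions`).
* Such a sum is the Hilbert transform of a combination of point masses, and these can be replaced by
  steps of small width (`step_realize`).

All bounds on the resulting step function are of the form `exp (O(m⁵)) L` (`growth`), and `m` of
the order of `N` makes the error at most `ε`. Passing from `L` to `‖h‖_{L²}` is free, since for
`ε < ‖h‖_{L²}` one has `L = N ε ≤ N ‖h‖_{L²}`.
-/

open MeasureTheory Set

/-! ### Sobolev estimates on an interval -/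

/-- The Hölder-`1/2` estimate for `H¹` functions in a linearized form: taking the best `m` would
give `|h x - h y| ≤ 2 L |x - y|^{1/2}`. It follows from the fundamental theorem of calculus and
`|h'| ≤ L m + h'² / (L m)`. -/
lemma holder_bound {c d : ℝ} {h : ℝ → ℝ} (hd : Differentiable ℝ h)
    (h1 : IntegrableOn (fun t => (h t) ^ 2) (Ioo c d))
    (h2 : IntegrableOn (fun t => (deriv h t) ^ 2) (Ioo c d)) {L : ℝ} (hL : 0 < L)
    (hLe : ∫ t in Ioo c d, ((h t) ^ 2 + (deriv h t) ^ 2) = L ^ 2)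
    {m : ℝ} (hm : 0 < m) {x y : ℝ} (hx : x ∈ Icc c d) (hy : y ∈ Icc c d) :
    |h x - h y| ≤ L * (m * |x - y| + 1 / m) := by
  wlog hxy : y ≤ x generalizing x y
  · rw [abs_sub_comm, abs_sub_comm x]
    exact this hy hx (le_of_not_ge hxy)
  have hsub : Ioc y x ⊆ Icc c d := fun t ht => ⟨hy.1.trans ht.1.le, ht.2.trans hx.2⟩
  have h2' : IntegrableOn (fun t => (deriv h t) ^ 2) (Icc c d) :=
    (integrableOn_Icc_iff_integrableOn_Ioo).2 h2
  have hint2 : IntegrableOn (fun t => (deriv h t) ^ 2) (Ioc y x) := h2'.mono_set hsub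
  have hsum : IntegrableOn (fun t => (h t) ^ 2 + (deriv h t) ^ 2) (Ioo c d) := h1.add h2
  have hfin : volume (Ioc y x) ≠ ⊤ := by simp
  have hbd : IntegrableOn (fun t => L * m + (deriv h t) ^ 2 / (L * m)) (Ioc y x) :=
    (integrableOn_const hfin).add (hint2.div_const _)
  have hLm : 0 < L * m := by positivity
  have hpt : ∀ t, ‖deriv h t‖ ≤ L * m + (deriv h t) ^ 2 / (L * m) := by
    intro t
    rw [Real.norm_eq_abs, ← sq_abs (deriv h t), ← sub_nonneg]
    have : L * m + |deriv h t| ^ 2 / (L * m) - |deriv h t|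
        = ((L * m - |deriv h t| / 2) ^ 2 + 3 / 4 * |deriv h t| ^ 2) / (L * m) := by
      field_simp; ring
    rw [this]; positivity
  have hker : IntegrableOn (deriv h) (Ioc y x) :=
    hbd.mono' (measurable_deriv h).aestronglyMeasurable (Filter.Eventually.of_forall hpt)
  have hftc : ∫ t in y..x, deriv h t = h x - h y :=
    intervalIntegral.integral_eq_sub_of_hasDerivAt (fun t _ => (hd t).hasDerivAt)
      ((intervalIntegrable_iff_integrableOn_Ioc_of_le hxy).2 hker)
  rw [← hftc, intervalIntegral.integral_of_le hxy, ← Real.norm_eq_abs]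
  calc _ ≤ ∫ t in Ioc y x, (L * m + (deriv h t) ^ 2 / (L * m)) :=
        norm_integral_le_of_norm_le hbd (Filter.Eventually.of_forall hpt)
    _ = L * m * (x - y) + (∫ t in Ioc y x, (deriv h t) ^ 2) / (L * m) := by
        rw [integral_add (integrable_const _) (Integrable.div_const hint2 _), integral_div]
        simp [hxy]; ring
    _ ≤ L * m * (x - y) + L ^ 2 / (L * m) := by
        gcongr
        calc _ ≤ ∫ t in Icc c d, (deriv h t) ^ 2 :=
              setIntegral_mono_set h2' (Filter.Eventually.of_forall fun t => sq_nonneg _)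
                hsub.eventuallyLE
          _ = ∫ t in Ioo c d, (deriv h t) ^ 2 := integral_Icc_eq_integral_Ioo
          _ ≤ ∫ t in Ioo c d, ((h t) ^ 2 + (deriv h t) ^ 2) :=
              integral_mono h2 hsum fun t => by
                have := sq_nonneg (h t); simp only; linarith
          _ = L ^ 2 := hLe
    _ = _ := by
        rw [abs_of_nonneg (by linarith)]; field_simp

/-- The one-dimensional Sobolev embedding `H¹ ⊂ L^∞`, up to and including the end points.
It comes from integrating `|h x| ≤ |h x - h y| + |h y|` over `y`. -/
lemma sup_bound {c d : ℝ} (hcd : c < d) {h : ℝ → ℝ} (hd : Differentiable ℝ h)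
    (h1 : IntegrableOn (fun t => (h t) ^ 2) (Ioo c d))
    (h2 : IntegrableOn (fun t => (deriv h t) ^ 2) (Ioo c d)) {L : ℝ} (hL : 0 < L)
    (hLe : ∫ t in Ioo c d, ((h t) ^ 2 + (deriv h t) ^ 2) = L ^ 2)
    {x : ℝ} (hx : x ∈ Icc c d) :
    |h x| ≤ (d - c + 2 + 1 / (d - c)) * L := by
  have hsum : IntegrableOn (fun t => (h t) ^ 2 + (deriv h t) ^ 2) (Ioo c d) := h1.add h2
  have hfin : volume (Ioo c d) ≠ ⊤ := by simp
  have hlen : 0 < d - c := by linarith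
  have hpt : ∀ y ∈ Ioo c d, |h x| ≤ L * (d - c + 2) + h y ^ 2 / L := by
    intro y hy
    have hxy := holder_bound hd h1 h2 hL hLe one_pos hx (Ioo_subset_Icc_self hy)
    have hdist : |x - y| ≤ d - c := by
      rw [abs_le]; constructor <;> linarith [hx.1, hx.2, hy.1, hy.2]
    have hy2 : |h y| ≤ L + h y ^ 2 / L := by
      rw [← sq_abs (h y), ← sub_nonneg]
      have : L + |h y| ^ 2 / L - |h y| = ((L - |h y| / 2) ^ 2 + 3 / 4 * |h y| ^ 2) / L := by
        field_simp; ring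
      rw [this]; positivity
    have htri : |h x| ≤ |h x - h y| + |h y| := by
      simpa using abs_add_le (h x - h y) (h y)
    nlinarith [mul_le_mul_of_nonneg_left hdist hL.le]
  have hI : ∫ y in Ioo c d, |h x| ≤ ∫ y in Ioo c d, (L * (d - c + 2) + h y ^ 2 / L) :=
    setIntegral_mono_on (integrableOn_const hfin)
      ((integrableOn_const hfin).add (h1.div_const _)) measurableSet_Ioo hpt
  have hh : ∫ y in Ioo c d, h y ^ 2 ≤ L ^ 2 := by
    rw [← hLe]
    exact integral_mono h1 hsum fun t => by
      have := sq_nonneg (deriv h t); simp only; linarith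
  rw [integral_add (integrable_const _) (Integrable.div_const h1 _), integral_div] at hI
  simp only [setIntegral_const, Real.volume_real_Ioo_of_le hcd.le, smul_eq_mul] at hI
  have hq : (∫ y in Ioo c d, h y ^ 2) / L ≤ L := by
    rw [div_le_iff₀ hL]; nlinarith
  have : |h x| ≤ ((d - c) * (L * (d - c + 2)) + L) / (d - c) := by
    rw [le_div_iff₀ hlen]; linarith
  refine this.trans_eq ?_
  field_simp

/-! ### Bernstein approximation in a Möbius variable -/

lemma bernstein_sum_one (n : ℕ) (v : ℝ) :
    ∑ k ∈ Finset.range (n + 1), (n.choose k : ℝ) * v ^ k * (1 - v) ^ (n - k) = 1 := by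
  have := congrArg (Polynomial.eval v) (bernsteinPolynomial.sum ℝ n)
  simpa [Polynomial.eval_finsetSum, bernsteinPolynomial] using this

lemma bernstein_sum_var {n : ℕ} (hn : 0 < n) (v : ℝ) :
    ∑ k ∈ Finset.range (n + 1), ((n.choose k : ℝ) * v ^ k * (1 - v) ^ (n - k)) *
      (v - k / n) ^ 2 = v * (1 - v) / n := by
  have := congrArg (Polynomial.eval v) (bernsteinPolynomial.variance ℝ n)
  simp [Polynomial.eval_finsetSum, bernsteinPolynomial] at this
  have hn' : (n : ℝ) ≠ 0 := by positivity
  have h2 : v * (1 - v) / n = (n * v * (1 - v)) / (n : ℝ) ^ 2 := by field_simp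
  rw [h2, ← this, Finset.sum_div]
  refine Finset.sum_congr rfl fun k _ => ?_
  field_simp

/-- Approximation of `h` by `P / (x - a)^(n+1)` with `n = m⁴`, where `P` has degree at most `n`.
The Möbius map `v x = (x - c)(d - a) / ((d - c)(x - a))` takes `[c, d]` onto `[0, 1]` with Lipschitz
inverse, and `P x / (x - a)^n` is the Bernstein polynomial of degree `n` of `h x * (x - a)` in the
variable `v`. Indeed `v` and `1 - v` are linear functions of `x` divided by `x - a`. -/
lemma poly_approx {a b c d ρ R : ℝ} (hcd : c < d) (hρ : 0 < ρ)
    (hsep : ∀ x ∈ Icc c d, ∀ t ∈ Icc a b, ρ ≤ |x - t|)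
    (hR : ∀ x ∈ Icc c d, ∀ t ∈ Icc a b, |x - t| ≤ R) (hab : a < b) {C₀ : ℝ} (hC₀ : 0 ≤ C₀) :
    ∃ C₁ A : ℝ, 0 ≤ C₁ ∧ 1 ≤ A ∧ ∀ (h : ℝ → ℝ) (L : ℝ) (m : ℕ), 0 < L → 0 < m →
      (∀ x ∈ Icc c d, ∀ y ∈ Icc c d, |h x - h y| ≤ L * (m * |x - y| + 1 / m)) →
      (∀ x ∈ Icc c d, |h x| ≤ C₀ * L) →
      ∃ P : Polynomial ℝ, P.natDegree ≤ m ^ 4 ∧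
        (∀ x ∈ Icc c d, |h x - P.eval x / (x - a) ^ (m ^ 4 + 1)| ≤ C₁ * L / m) ∧
        ∀ t ∈ Icc a b, |P.eval t| ≤ C₀ * R * L * A ^ (m ^ 4) := by
  have haI : a ∈ Icc a b := left_mem_Icc.2 hab.le
  have hcJ : c ∈ Icc c d := left_mem_Icc.2 hcd.le
  have hdJ : d ∈ Icc c d := right_mem_Icc.2 hcd.le
  have hR0 : 0 < R := hρ.trans_le ((hsep c hcJ a haI).trans (hR c hcJ a haI))
  have hlen : 0 < d - c := by linarith
  set K : ℝ := (d - c) * R ^ 2 / ρ ^ 2 with hK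
  have hK0 : 0 < K := by positivity
  have hne : ∀ x ∈ Icc c d, x - a ≠ 0 := fun x hx =>
    abs_pos.1 (hρ.trans_le (hsep x hx a haI))
  have hda := hne d hdJ
  have hca := hne c hcJ
  -- all the differences `x - a` with `x ∈ [c, d]` have the same sign
  have hsign : ∀ x ∈ Icc c d, 0 ≤ (d - a) / (x - a) ∧ 0 ≤ (c - a) / (x - a) := by
    have hac : a < c ∨ d < a := by
      by_contra! hcon
      exact hne a hcon (sub_self a)
    intro x hx
    rcases hac with hac | hac
    · exact ⟨div_nonneg (by linarith) (by linarith [hx.1]),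
        div_nonneg (by linarith) (by linarith [hx.1])⟩
    · exact ⟨div_nonneg_of_nonpos (by linarith) (by linarith [hx.2]),
        div_nonneg_of_nonpos (by linarith) (by linarith [hx.2])⟩
  set v : ℝ → ℝ := fun x => (x - c) / (d - c) * ((d - a) / (x - a)) with hv
  have hv1 : ∀ x ∈ Icc c d, 1 - v x = (d - x) / (d - c) * ((c - a) / (x - a)) := by
    intro x hx
    have := hne x hx
    simp only [hv]; field_simp; ring
  have hv0 : ∀ x ∈ Icc c d, 0 ≤ v x := fun x hx =>
    mul_nonneg (div_nonneg (by linarith [hx.1]) hlen.le) (hsign x hx).1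
  have hv1' : ∀ x ∈ Icc c d, 0 ≤ 1 - v x := fun x hx => by
    rw [hv1 x hx]
    exact mul_nonneg (div_nonneg (by linarith [hx.2]) hlen.le) (hsign x hx).2
  have hvlip : ∀ x ∈ Icc c d, ∀ y ∈ Icc c d, |x - y| ≤ K * |v x - v y| := by
    intro x hx y hy
    have hxa := hne x hx
    have hya := hne y hy
    have : x - y = (d - c) * ((x - a) * (y - a)) / ((d - a) * (c - a)) * (v x - v y) := by
      simp only [hv]; field_simp; ring
    refine (congrArg abs this).trans_le ?_
    rw [abs_mul]
    refine mul_le_mul_of_nonneg_right ?_ (abs_nonneg _)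
    rw [abs_div, abs_mul, abs_mul, abs_mul, abs_of_pos hlen, hK, sq, sq]
    have h1 := hsep d hdJ a haI
    have h2 := hsep c hcJ a haI
    have h3 := hR x hx a haI
    have h4 := hR y hy a haI
    gcongr
  have hvcont : ContinuousOn v (Icc c d) := by
    simp only [hv]
    refine ContinuousOn.mul (by fun_prop) (ContinuousOn.div (by fun_prop) (by fun_prop) hne)
  have hX : ∀ u : ℝ, ∃ x, u ∈ Icc (0 : ℝ) 1 → x ∈ Icc c d ∧ v x = u := by
    intro u
    by_cases hu : u ∈ Icc (0 : ℝ) 1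
    · have hvc : v c = 0 := by simp [hv]
      have hvd : v d = 1 := by simp only [hv]; field_simp
      obtain ⟨x, hx, hxu⟩ := intermediate_value_Icc hcd.le hvcont (by rwa [hvc, hvd])
      exact ⟨x, fun _ => ⟨hx, hxu⟩⟩
    · exact ⟨0, fun h => absurd h hu⟩
  -- `X u` is the preimage of `u` under `v`; its value for `u ∉ [0, 1]` is irrelevant
  choose X hX using hX
  refine ⟨(2 + C₀ / ρ) * (1 + K ^ 2), 1 + 2 * (R ^ 2 / (d - c)), by positivity,
    by have : 0 ≤ R ^ 2 / (d - c) := by positivity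
       linarith, ?_⟩
  intro h L m hL hm hh hsup
  have hm0 : (0 : ℝ) < m := by exact_mod_cast hm
  have hm1 : (1 : ℝ) ≤ m := by exact_mod_cast hm
  set n := m ^ 4 with hn
  have hn0 : 0 < n := by positivity
  have hnR : (n : ℝ) = (m : ℝ) ^ 4 := by rw [hn]; push_cast; rfl
  have hXk : ∀ k ∈ Finset.range (n + 1), X (k / n) ∈ Icc c d ∧ v (X (k / n)) = k / n := by
    intro k hk
    refine hX _ ⟨by positivity, ?_⟩
    rw [div_le_one (by positivity)]
    exact_mod_cast Nat.lt_succ_iff.1 (Finset.mem_range.1 hk)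
  -- samples of `x ↦ h x * (x - a)` at the Bernstein nodes
  set g : ℕ → ℝ := fun k => h (X (k / n)) * (X (k / n) - a) with hg
  -- numerators of `v` and `1 - v` over the common denominator `x - a`
  set p : Polynomial ℝ := Polynomial.C ((d - a) / (d - c)) * (Polynomial.X - Polynomial.C c)
  set q : Polynomial ℝ := Polynomial.C ((c - a) / (d - c)) * (Polynomial.C d - Polynomial.X)
  have hpd : p.natDegree ≤ 1 := by
    refine (Polynomial.natDegree_C_mul_le _ _).trans (Polynomial.natDegree_X_sub_C_le _)
  have hqd : q.natDegree ≤ 1 := by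
    refine (Polynomial.natDegree_C_mul_le _ _).trans ?_
    refine (Polynomial.natDegree_sub_le _ _).trans (by simp)
  have heval : ∀ t, (∑ k ∈ Finset.range (n + 1),
      Polynomial.C (g k * n.choose k) * (p ^ k * q ^ (n - k))).eval t =
      ∑ k ∈ Finset.range (n + 1), g k * n.choose k *
        (((d - a) / (d - c) * (t - c)) ^ k * ((c - a) / (d - c) * (d - t)) ^ (n - k)) := by
    intro t
    simp [Polynomial.eval_finsetSum, p, q]
  refine ⟨∑ k ∈ Finset.range (n + 1),
    Polynomial.C (g k * n.choose k) * (p ^ k * q ^ (n - k)), ?_, ?_, ?_⟩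
  · refine Polynomial.natDegree_sum_le_of_forall_le _ _ fun k hk => ?_
    have hkn : k ≤ n := Nat.lt_succ_iff.1 (Finset.mem_range.1 hk)
    refine (Polynomial.natDegree_C_mul_le _ _).trans (Polynomial.natDegree_mul_le.trans ?_)
    have h1 := Polynomial.natDegree_pow_le_of_le k hpd
    have h2 := Polynomial.natDegree_pow_le_of_le (n - k) hqd
    omega
  · intro x hx
    have hxa := hne x hx
    set B : ℕ → ℝ := fun k => (n.choose k : ℝ) * v x ^ k * (1 - v x) ^ (n - k) with hB
    have hB0 : ∀ k, 0 ≤ B k := fun k => by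
      have h1 := hv0 x hx
      have h2 := hv1' x hx
      positivity
    have hsum1 : ∑ k ∈ Finset.range (n + 1), B k = 1 := bernstein_sum_one n (v x)
    have hdiff : h x - (∑ k ∈ Finset.range (n + 1),
        Polynomial.C (g k * n.choose k) * (p ^ k * q ^ (n - k))).eval x / (x - a) ^ (n + 1)
        = ∑ k ∈ Finset.range (n + 1), B k * (h x - g k / (x - a)) := by
      simp only [mul_sub, Finset.sum_sub_distrib]
      rw [← Finset.sum_mul, hsum1, one_mul, heval, Finset.sum_div]
      congr 1
      refine Finset.sum_congr rfl fun k hk => ?_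
      have hkn : k ≤ n := Nat.lt_succ_iff.1 (Finset.mem_range.1 hk)
      have e1 : (d - a) / (d - c) * (x - c) = v x * (x - a) := by
        simp only [hv]; field_simp
      have e2 : (c - a) / (d - c) * (d - x) = (1 - v x) * (x - a) := by
        rw [hv1 x hx]; field_simp
      rw [e1, e2, mul_pow (v x), mul_pow (1 - v x)]
      have e3 : (x - a) ^ (n + 1) = (x - a) ^ k * (x - a) ^ (n - k) * (x - a) := by
        rw [← pow_add, Nat.add_sub_cancel' hkn, pow_succ]
      simp only [hB]
      rw [e3]
      generalize v x = w
      field_simp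
    rw [hdiff]
    have hterm : ∀ k ∈ Finset.range (n + 1), |B k * (h x - g k / (x - a))| ≤
        L * (2 + C₀ / ρ) * (1 / m * B k + m ^ 3 * K ^ 2 * (B k * (v x - k / n) ^ 2)) := by
      intro k hk
      obtain ⟨hXJ, hXv⟩ := hXk k hk
      set y := X (k / n)
      set s := |x - y| with hs
      have hs0 : 0 ≤ s := abs_nonneg _
      have hsK : s ^ 2 ≤ K ^ 2 * (v x - k / n) ^ 2 := by
        have := hvlip x hx y hXJ
        rw [hXv] at this
        calc s ^ 2 ≤ (K * |v x - k / n|) ^ 2 := by gcongr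
          _ = _ := by rw [mul_pow, sq_abs]
      have e : h x - g k / (x - a) = (h x - h y) + h y * ((x - y) / (x - a)) := by
        simp only [hg]; field_simp; ring
      have hb1 := hh x hx y hXJ
      have hb2 : |h y * ((x - y) / (x - a))| ≤ C₀ * L * (s / ρ) := by
        rw [abs_mul, abs_div]
        have h1 := hsup y hXJ
        have h2 := hsep x hx a haI
        gcongr
      -- arithmetic-geometric mean inequality
      have hams : m * s ≤ 1 / m + m ^ 3 * s ^ 2 := by
        rw [← sub_nonneg]
        have : 1 / m + m ^ 3 * s ^ 2 - m * s =
            ((1 - m ^ 2 * s / 2) ^ 2 + 3 / 4 * (m ^ 2 * s) ^ 2) / m := by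
          field_simp; ring
        rw [this]; positivity
      have hs' : s ≤ m * s := le_mul_of_one_le_left hs0 hm1
      set W := 1 / (m : ℝ) + m ^ 3 * s ^ 2 with hW
      have hW1 : 1 / (m : ℝ) ≤ W := by
        have : 0 ≤ (m : ℝ) ^ 3 * s ^ 2 := by positivity
        linarith
      have hmain : |h x - g k / (x - a)| ≤ L * (2 + C₀ / ρ) * W := by
        rw [e]
        refine (abs_add_le _ _).trans ?_
        have h3 : C₀ * L * (s / ρ) ≤ C₀ * L * (W / ρ) := by
          gcongr; linarith
        have h4 : L * (m * s + 1 / m) ≤ L * (W + W) := by gcongr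
        calc _ ≤ L * (W + W) + C₀ * L * (W / ρ) := by linarith
          _ = _ := by ring
      rw [abs_mul, abs_of_nonneg (hB0 k)]
      calc B k * |h x - g k / (x - a)| ≤ B k * (L * (2 + C₀ / ρ) *
            (1 / m + m ^ 3 * (K ^ 2 * (v x - k / n) ^ 2))) := by
            have := hB0 k
            refine mul_le_mul_of_nonneg_left (hmain.trans ?_) (hB0 k)
            rw [hW]
            gcongr
        _ = _ := by ring
    refine (Finset.abs_sum_le_sum_abs _ _).trans ((Finset.sum_le_sum hterm).trans ?_)
    rw [← Finset.mul_sum, Finset.sum_add_distrib, ← Finset.mul_sum, ← Finset.mul_sum, hsum1,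
      bernstein_sum_var hn0 (v x), hnR]
    have hvv : v x * (1 - v x) ≤ 1 := by nlinarith [hv0 x hx, hv1' x hx]
    calc _ ≤ L * (2 + C₀ / ρ) * (1 / m * 1 + m ^ 3 * K ^ 2 * (1 / m ^ 4)) := by gcongr
      _ = _ := by field_simp
  · intro t ht
    rw [heval]
    set α := (d - a) / (d - c) * (t - c) with hα
    set β := (c - a) / (d - c) * (d - t) with hβ
    have hα' : |α| ≤ R ^ 2 / (d - c) := by
      rw [hα, abs_mul, abs_div, abs_of_pos hlen, abs_sub_comm t c, sq, mul_div_right_comm]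
      have h1 := hR d hdJ a haI
      have h2 := hR c hcJ t ht
      gcongr
    have hβ' : |β| ≤ R ^ 2 / (d - c) := by
      rw [hβ, abs_mul, abs_div, abs_of_pos hlen, sq, mul_div_right_comm]
      have h1 := hR c hcJ a haI
      have h2 := hR d hdJ t ht
      gcongr
    have hgk : ∀ k ∈ Finset.range (n + 1), |g k| ≤ C₀ * R * L := by
      intro k hk
      have h1 := hsup _ (hXk k hk).1
      have h2 := hR _ (hXk k hk).1 a haI
      calc |g k| = |h (X (k / n))| * |X (k / n) - a| := abs_mul _ _
        _ ≤ C₀ * L * R := by gcongr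
        _ = _ := by ring
    calc _ ≤ ∑ k ∈ Finset.range (n + 1), |g k * n.choose k * (α ^ k * β ^ (n - k))| :=
          Finset.abs_sum_le_sum_abs _ _
      _ ≤ ∑ k ∈ Finset.range (n + 1), C₀ * R * L * (|α| ^ k * |β| ^ (n - k) * n.choose k) := by
          refine Finset.sum_le_sum fun k hk => ?_
          rw [abs_mul, abs_mul (g k), abs_mul (α ^ k), abs_pow, abs_pow, Nat.abs_cast]
          have := mul_le_mul_of_nonneg_right (hgk k hk)
            (by positivity : 0 ≤ |α| ^ k * |β| ^ (n - k) * n.choose k)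
          linarith
      _ = C₀ * R * L * (|α| + |β|) ^ n := by rw [← Finset.mul_sum, add_pow]
      _ ≤ _ := by
          have hRd : 0 ≤ R ^ 2 / (d - c) := by positivity
          exact mul_le_mul_of_nonneg_left (pow_le_pow_left₀ (by positivity) (by linarith) n)
            (by positivity)

/-! ### From a multiple pole to a Hilbert transform -/

/-- The pole of order `n + 1` at `a` may be split into `n + 1` simple poles `a, a + δ, …, a + n δ`
at a relative cost `O((n + 1)² δ)`. -/
lemma ratio_perturb {a b c d ρ δ Q : ℝ} (hρ : 0 < ρ)
    (hsep : ∀ x ∈ Icc c d, ∀ t ∈ Icc a b, ρ ≤ |x - t|) {n : ℕ} (hδ : 0 < δ)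
    (hfit : n * δ ≤ b - a) (hsmall : (n + 1) ^ 2 * δ / ρ ≤ 1) {x y : ℝ} (hx : x ∈ Icc c d)
    (hQ : |y / (x - a) ^ (n + 1)| ≤ Q) :
    |y / (x - a) ^ (n + 1) - y / ∏ j ∈ Finset.range (n + 1), (x - (a + j * δ))| ≤
      Q * (2 * ((n + 1) ^ 2 * δ / ρ)) := by
  have hnode : ∀ j ∈ Finset.range (n + 1), a + j * δ ∈ Icc a b := by
    intro j hj
    have hjn : (j : ℝ) ≤ n := by exact_mod_cast Nat.lt_succ_iff.1 (Finset.mem_range.1 hj)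
    have := mul_le_mul_of_nonneg_right hjn hδ.le
    exact ⟨by have : 0 ≤ j * δ := by positivity
              linarith, by linarith⟩
  have hne : ∀ j ∈ Finset.range (n + 1), x - (a + j * δ) ≠ 0 := fun j hj =>
    abs_pos.1 (hρ.trans_le (hsep x hx _ (hnode j hj)))
  have hxa : x - a ≠ 0 := by
    have := hne 0 (by simp)
    simpa using this
  have hprod : ∏ j ∈ Finset.range (n + 1), (x - (a + j * δ)) ≠ 0 := Finset.prod_ne_zero_iff.2 hne
  set u : ℕ → ℝ := fun j => j * δ / (x - (a + j * δ)) with hu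
  have hratio : (x - a) ^ (n + 1) / ∏ j ∈ Finset.range (n + 1), (x - (a + j * δ)) =
      ∏ j ∈ Finset.range (n + 1), (1 + u j) := by
    have : (x - a) ^ (n + 1) = ∏ j ∈ Finset.range (n + 1), (x - a) := by simp
    rw [this, ← Finset.prod_div_distrib]
    refine Finset.prod_congr rfl fun j hj => ?_
    have := hne j hj
    simp only [hu]
    rw [eq_comm, ← sub_eq_zero]
    field_simp; ring
  have hsum : ∑ j ∈ Finset.range (n + 1), ‖u j‖ ≤ (n + 1) ^ 2 * δ / ρ := by
    calc _ ≤ ∑ j ∈ Finset.range (n + 1), (n + 1) * δ / ρ := by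
          refine Finset.sum_le_sum fun j hj => ?_
          have hjn : (j : ℝ) ≤ n + 1 := by exact_mod_cast (Finset.mem_range.1 hj).le
          rw [Real.norm_eq_abs, abs_div, abs_of_nonneg (by positivity : 0 ≤ j * δ)]
          have := hsep x hx _ (hnode j hj)
          gcongr
      _ = _ := by simp; ring
  have hS0 : 0 ≤ (n + 1) ^ 2 * δ / ρ := by positivity
  have hexp : |∏ j ∈ Finset.range (n + 1), (1 + u j) - 1| ≤ 2 * ((n + 1) ^ 2 * δ / ρ) := by
    have h1 := Finset.norm_prod_one_add_sub_one_le (Finset.range (n + 1)) u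
    have h2 := Real.exp_le_exp.2 hsum
    have h3 := (le_abs_self _).trans
      (Real.abs_exp_sub_one_le (x := (n + 1) ^ 2 * δ / ρ) (by rwa [abs_of_nonneg hS0]))
    rw [abs_of_nonneg hS0] at h3
    rw [Real.norm_eq_abs] at h1
    linarith
  have hfac : y / (x - a) ^ (n + 1) - y / ∏ j ∈ Finset.range (n + 1), (x - (a + j * δ)) =
      -(y / (x - a) ^ (n + 1) * (∏ j ∈ Finset.range (n + 1), (1 + u j) - 1)) := by
    rw [← hratio]
    generalize ∏ j ∈ Finset.range (n + 1), (x - (a + j * δ)) = p at hprod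
    field_simp; ring
  rw [hfac, abs_neg, abs_mul]
  have := (abs_nonneg _).trans hQ
  gcongr

/-- Partial fractions with equally spaced poles: Lagrange interpolation of `P` at the poles. The
residues are bounded using that distinct poles are at distance at least `δ`. -/
lemma partial_fractions {a b δ M : ℝ} {n : ℕ} (hδ : 0 < δ) (hfit : n * δ ≤ b - a)
    {P : Polynomial ℝ} (hdeg : P.natDegree ≤ n) (hP : ∀ t ∈ Icc a b, |P.eval t| ≤ M) :
    ∃ w : ℕ → ℝ, (∀ j ∈ Finset.range (n + 1), |w j| ≤ M / δ ^ n) ∧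
      ∀ x, (∀ j ∈ Finset.range (n + 1), x ≠ a + j * δ) →
        P.eval x / ∏ j ∈ Finset.range (n + 1), (x - (a + j * δ)) =
          ∑ j ∈ Finset.range (n + 1), w j / (x - (a + j * δ)) := by
  set s := Finset.range (n + 1)
  set v : ℕ → ℝ := fun j => a + j * δ with hv
  have hinj : InjOn v s := by
    intro i _ j _ hij
    simp only [hv] at hij
    have : (i : ℝ) = j := by
      have := add_left_cancel hij
      exact mul_right_cancel₀ hδ.ne' this
    exact_mod_cast this
  have hPdeg : P.degree < s.card := by
    refine Polynomial.degree_le_natDegree.trans_lt ?_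
    simp only [s, Finset.card_range]
    exact_mod_cast Nat.lt_succ_of_le hdeg
  refine ⟨fun j => Lagrange.nodalWeight s v j * P.eval (v j), ?_, ?_⟩
  · intro j hj
    have hjn : (j : ℝ) ≤ n := by exact_mod_cast Nat.lt_succ_iff.1 (Finset.mem_range.1 hj)
    have hnode : v j ∈ Icc a b := by
      have h1 := mul_le_mul_of_nonneg_right hjn hδ.le
      have h2 : 0 ≤ j * δ := by positivity
      exact ⟨by simp only [hv]; linarith, by simp only [hv]; linarith⟩
    have hw : |Lagrange.nodalWeight s v j| ≤ (1 / δ) ^ n := by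
      rw [Lagrange.nodalWeight, Finset.abs_prod]
      have hcard : (s.erase j).card = n := by
        rw [Finset.card_erase_of_mem hj]; simp [s]
      rw [← hcard]
      refine (Finset.prod_le_prod (fun _ _ => abs_nonneg _) fun i hi => ?_).trans_eq
        (Finset.prod_const _)
      have hij : (j : ℤ) - i ≠ 0 := by
        have := Finset.ne_of_mem_erase hi
        omega
      have h1 : (1 : ℝ) ≤ |(j : ℝ) - i| := by exact_mod_cast Int.one_le_abs hij
      rw [abs_inv, one_div]
      have : v j - v i = (j - i) * δ := by simp only [hv]; ring
      rw [this, abs_mul, abs_of_pos hδ]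
      gcongr
      nlinarith
    rw [abs_mul]
    have := hP _ hnode
    calc _ ≤ (1 / δ) ^ n * M := by gcongr
      _ = _ := by rw [one_div, inv_pow]; ring
  · intro x hx
    have hprod : ∏ j ∈ s, (x - v j) ≠ 0 :=
      Finset.prod_ne_zero_iff.2 fun j hj => sub_ne_zero.2 (hx j hj)
    have h1 := Lagrange.eval_interpolate_not_at_node (s := s) (v := v)
      (fun i => P.eval (v i)) hx
    rw [← Lagrange.eq_interpolate hinj hPdeg, Lagrange.eval_nodal] at h1
    rw [h1, mul_div_cancel_left₀ _ hprod]
    exact Finset.sum_congr rfl fun j _ => by ring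

/-- A sum of simple poles in `[a, b]` is nearly the truncated Hilbert transform of a step
function: the point mass at each pole is spread over an interval of length `τ`. -/
lemma step_realize {a b c d ρ δ τ W : ℝ} (hρ : 0 < ρ)
    (hsep : ∀ x ∈ Icc c d, ∀ t ∈ Icc a b, ρ ≤ |x - t|) {n : ℕ} (hδ : 0 < δ) (hτ : 0 < τ)
    (hfit : n * δ + τ ≤ b - a) {w : ℕ → ℝ} (hw : ∀ j ∈ Finset.range (n + 1), |w j| ≤ W) :
    ∃ f : ℝ → ℝ, Measurable f ∧ (∀ t, |f t| ≤ (n + 1) * W / τ) ∧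
      ∀ x ∈ Icc c d, |∑ j ∈ Finset.range (n + 1), w j / (x - (a + j * δ)) -
        truncHilbert (Ioo a b) f x| ≤ (n + 1) * W * (τ / ρ ^ 2) := by
  set S : ℕ → Set ℝ := fun j => Ioo (a + j * δ) (a + j * δ + τ) with hS
  have hsub : ∀ j ∈ Finset.range (n + 1), S j ⊆ Ioo a b := by
    intro j hj
    have hjn : (j : ℝ) ≤ n := by exact_mod_cast Nat.lt_succ_iff.1 (Finset.mem_range.1 hj)
    have h1 := mul_le_mul_of_nonneg_right hjn hδ.le
    have h2 : 0 ≤ j * δ := by positivity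
    exact Ioo_subset_Ioo (by linarith) (by linarith)
  refine ⟨fun t => ∑ j ∈ Finset.range (n + 1), (S j).indicator (fun _ => w j / τ) t, ?_, ?_, ?_⟩
  · exact Finset.measurable_fun_sum _ fun j _ => measurable_const.indicator measurableSet_Ioo
  · intro t
    refine (Finset.abs_sum_le_sum_abs _ _).trans ?_
    calc _ ≤ ∑ j ∈ Finset.range (n + 1), W / τ := by
          refine Finset.sum_le_sum fun j hj => ?_
          have h1 := hw j hj
          have h0 := (abs_nonneg _).trans h1
          by_cases ht : t ∈ S j
          · rw [indicator_of_mem ht, abs_div, abs_of_pos hτ]; gcongr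
          · rw [indicator_of_notMem ht, abs_zero]; positivity
      _ = _ := by simp; ring
  · intro x hx
    -- integrability of the kernel lets the transform of the step function be computed termwise
    have hcont : ContinuousOn (fun t => 1 / (x - t)) (Icc a b) :=
      ContinuousOn.div (by fun_prop) (by fun_prop) fun t ht =>
        abs_pos.1 (hρ.trans_le (hsep x hx t ht))
    have hker : IntegrableOn (fun t => 1 / (x - t)) (Ioo a b) :=
      (hcont.integrableOn_Icc).mono_set Ioo_subset_Icc_self
    have hH : truncHilbert (Ioo a b)
        (fun t => ∑ j ∈ Finset.range (n + 1), (S j).indicator (fun _ => w j / τ) t) x =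
        ∑ j ∈ Finset.range (n + 1), w j / τ * ∫ t in S j, 1 / (x - t) := by
      have e : ∀ t, (∑ j ∈ Finset.range (n + 1), (S j).indicator (fun _ => w j / τ) t) / (x - t) =
          ∑ j ∈ Finset.range (n + 1),
            (S j).indicator (fun t => w j / τ * (1 / (x - t))) t := by
        intro t
        rw [Finset.sum_div]
        refine Finset.sum_congr rfl fun j _ => ?_
        by_cases ht : t ∈ S j
        · rw [indicator_of_mem ht, indicator_of_mem ht]; ring
        · rw [indicator_of_notMem ht, indicator_of_notMem ht, zero_div]
      simp only [truncHilbert, e]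
      rw [integral_finsetSum _ fun j _ => ?_]
      · refine Finset.sum_congr rfl fun j hj => ?_
        rw [setIntegral_indicator measurableSet_Ioo, inter_eq_self_of_subset_right (hsub j hj),
          integral_const_mul]
      · exact (Integrable.const_mul hker _).indicator measurableSet_Ioo
    rw [hH, ← Finset.sum_sub_distrib]
    refine (Finset.abs_sum_le_sum_abs _ _).trans ?_
    calc _ ≤ ∑ j ∈ Finset.range (n + 1), W * (τ / ρ ^ 2) := by
          refine Finset.sum_le_sum fun j hj => ?_
          have hvol : volume.real (S j) = τ := by
            simp only [hS]
            rw [Real.volume_real_Ioo_of_le (by linarith)]; ring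
          have hintj : IntegrableOn (fun t => 1 / (x - t)) (S j) := hker.mono_set (hsub j hj)
          have hfin : volume (S j) ≠ ⊤ := by simp [hS]
          have hjI : a + j * δ ∈ Icc a b := by
            have hjn : (j : ℝ) ≤ n := by
              exact_mod_cast Nat.lt_succ_iff.1 (Finset.mem_range.1 hj)
            have h1 := mul_le_mul_of_nonneg_right hjn hδ.le
            have h2 : 0 ≤ j * δ := by positivity
            exact ⟨by linarith, by linarith⟩
          have e : w j / (x - (a + j * δ)) - w j / τ * ∫ t in S j, 1 / (x - t) =
              w j / τ * ∫ t in S j, (1 / (x - (a + j * δ)) - 1 / (x - t)) := by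
            rw [integral_sub (integrable_const_iff.2 (Or.inr ⟨by simpa using hfin.lt_top⟩)) hintj,
              setIntegral_const, hvol,
              smul_eq_mul]
            field_simp
          have hI : |∫ t in S j, (1 / (x - (a + j * δ)) - 1 / (x - t))| ≤ τ / ρ ^ 2 * τ := by
            rw [← Real.norm_eq_abs]
            refine (norm_setIntegral_le_of_norm_le_const (C := τ / ρ ^ 2)
              (lt_top_iff_ne_top.2 hfin) fun t ht => ?_).trans_eq (by rw [hvol])
            have h1 := hsep x hx _ hjI
            have h2 := hsep x hx t (Ioo_subset_Icc_self (hsub j hj ht))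
            have n1 := abs_pos.1 (hρ.trans_le h1)
            have n2 := abs_pos.1 (hρ.trans_le h2)
            have h3 : |(a + j * δ) - t| ≤ τ := by
              rw [abs_le]; constructor <;> linarith [ht.1, ht.2]
            rw [Real.norm_eq_abs, div_sub_div _ _ n1 n2, abs_div, abs_mul, sq]
            have e2 : 1 * (x - t) - (x - (a + j * δ)) * 1 = (a + j * δ) - t := by ring
            rw [e2]
            gcongr
          have h1 := hw j hj
          have h0 := (abs_nonneg _).trans h1
          rw [e, abs_mul, abs_div, abs_of_pos hτ]
          calc _ ≤ W / τ * (τ / ρ ^ 2 * τ) := by gcongr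
            _ = _ := by field_simp
      _ = _ := by simp; ring

/-! ### Cost estimate and conclusion -/

/-- For `n = m⁴` and pole spacing `δ = κ / ((n + 1)² m)`, the factor `δ⁻ⁿ` is of size
`exp (O(m⁴ log m))`, so that every quantity entering the `L²` norm of the approximant is absorbed
in `exp (K m⁵)`. -/
lemma growth {A B κ s : ℝ} (hA : 1 ≤ A) (hB : 1 ≤ B) (hκ : 0 < κ) (hs : 0 ≤ s) :
    ∃ K : ℝ, 0 ≤ K ∧ ∀ m : ℕ, 0 < m →
      s * ((((m ^ 4 : ℕ) : ℝ) + 1) *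
        (B * A ^ (m ^ 4) / (κ / ((((m ^ 4 : ℕ) : ℝ) + 1) ^ 2 * m)) ^ (m ^ 4))) ^ 2 * m / κ ≤
      Real.exp (K * (m : ℝ) ^ 5) := by
  refine ⟨s + 2 * (18 + A + B + 1 / κ) + 1 + 1 / κ, by positivity, fun m hm => ?_⟩
  have hm1 : (1 : ℝ) ≤ m := by exact_mod_cast hm
  set n := m ^ 4 with hn
  have hnR : (n : ℝ) = (m : ℝ) ^ 4 := by rw [hn]; push_cast; rfl
  set M : ℝ := (m : ℝ) ^ 5 with hM
  have hM1 : 1 ≤ M := one_le_pow₀ hm1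
  have hnm : (n : ℝ) * m = M := by rw [hnR, hM]; ring
  have hnM : (n : ℝ) ≤ M := by rw [← hnm]; nlinarith [(Nat.cast_nonneg n : (0 : ℝ) ≤ n)]
  have hmM : (m : ℝ) ≤ M := by
    rw [hM]; exact le_self_pow₀ hm1 (by norm_num)
  have hle : ∀ y : ℝ, y ≤ Real.exp y := fun y => by linarith [Real.add_one_le_exp y]
  have hleM : ∀ y : ℝ, 0 ≤ y → y ≤ Real.exp (y * M) := fun y hy =>
    (hle y).trans (Real.exp_le_exp.2 (le_mul_of_one_le_right hy hM1))
  have b1 : (n : ℝ) + 1 ≤ Real.exp M :=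
    (Real.add_one_le_exp _).trans (Real.exp_le_exp.2 hnM)
  have b2 : B ≤ Real.exp (B * M) := hleM B (by linarith)
  have b3 : A ^ n ≤ Real.exp (A * M) := by
    calc A ^ n ≤ Real.exp A ^ n := by gcongr; exact hle A
      _ = Real.exp (n * A) := (Real.exp_nat_mul _ _).symm
      _ ≤ _ := by rw [mul_comm]; gcongr
  have b4 : (1 / (κ / (((n : ℝ) + 1) ^ 2 * m))) ^ n ≤ Real.exp ((17 + 1 / κ) * M) := by
    -- `n + 1 = m⁴ + 1 ≤ (2 m)⁴`, and `2 m ≤ exp (2 m)`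
    have c1 : (n : ℝ) + 1 ≤ Real.exp (2 * m) ^ 4 := by
      have h2 : (2 * m : ℝ) ^ 4 ≤ Real.exp (2 * m) ^ 4 := by gcongr; exact hle _
      have h3 : (1 : ℝ) ≤ (m : ℝ) ^ 4 := one_le_pow₀ hm1
      rw [mul_pow] at h2
      rw [hnR]; linarith
    have c2 : 1 / κ ≤ Real.exp (1 / κ * m) :=
      (hle _).trans (Real.exp_le_exp.2 (le_mul_of_one_le_right (by positivity) hm1))
    have c3 : 1 / (κ / (((n : ℝ) + 1) ^ 2 * m)) ≤ Real.exp ((17 + 1 / κ) * m) := by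
      calc 1 / (κ / (((n : ℝ) + 1) ^ 2 * m)) = (n + 1) ^ 2 * m * (1 / κ) := by field_simp
        _ ≤ (Real.exp (2 * m) ^ 4) ^ 2 * Real.exp m * Real.exp (1 / κ * m) := by
            gcongr; exact hle _
        _ = _ := by
            rw [← pow_mul, ← Real.exp_nat_mul, ← Real.exp_add, ← Real.exp_add]
            congr 1; push_cast; ring
    calc _ ≤ Real.exp ((17 + 1 / κ) * m) ^ n := by gcongr
      _ = Real.exp (n * ((17 + 1 / κ) * m)) := (Real.exp_nat_mul _ _).symm
      _ = _ := by rw [← hnm]; congr 1; ring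
  have bS : ((n : ℝ) + 1) * (B * A ^ n / (κ / (((n : ℝ) + 1) ^ 2 * m)) ^ n) ≤
      Real.exp ((18 + A + B + 1 / κ) * M) := by
    calc _ = ((n : ℝ) + 1) * (B * A ^ n * (1 / (κ / (((n : ℝ) + 1) ^ 2 * m))) ^ n) := by
          rw [one_div_pow, mul_one_div]
      _ ≤ Real.exp M * (Real.exp (B * M) * Real.exp (A * M) * Real.exp ((17 + 1 / κ) * M)) := by
          gcongr
      _ = _ := by
          rw [← Real.exp_add, ← Real.exp_add, ← Real.exp_add]; congr 1; ring
  calc _ = s * ((((n : ℕ) : ℝ) + 1) *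
        (B * A ^ n / (κ / (((n : ℝ) + 1) ^ 2 * m)) ^ n)) ^ 2 * m * (1 / κ) := by ring
    _ ≤ Real.exp (s * M) * Real.exp ((18 + A + B + 1 / κ) * M) ^ 2 * Real.exp M *
        Real.exp (1 / κ * M) := by
        have d1 := hleM s hs
        have d2 := hleM (1 / κ) (by positivity)
        have d3 := hmM.trans (hle M)
        gcongr
    _ = _ := by
        rw [← Real.exp_nat_mul, ← Real.exp_add, ← Real.exp_add, ← Real.exp_add]
        congr 1; push_cast; ring

lemma separation {a b c d : ℝ} (hab : a < b) (hcd : c < d)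
    (hdisj : Disjoint (closure (Ioo a b)) (closure (Ioo c d))) :
    ∃ ρ : ℝ, 0 < ρ ∧ ∀ x ∈ Icc c d, ∀ t ∈ Icc a b, ρ ≤ |x - t| := by
  rw [closure_Ioo hab.ne, closure_Ioo hcd.ne] at hdisj
  have hcase : b < c ∨ d < a := by
    by_contra! hcon
    exact Set.disjoint_left.1 hdisj (⟨le_max_left _ _, max_le hab.le hcon.1⟩ : max a c ∈ Icc a b)
      ⟨le_max_right _ _, max_le hcon.2 hcd.le⟩
  rcases hcase with hbc | hda
  · exact ⟨c - b, by linarith, fun x hx t ht =>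
      le_trans (by linarith [hx.1, ht.2]) (le_abs_self _)⟩
  · exact ⟨a - d, by linarith, fun x hx t ht =>
      le_trans (by linarith [hx.2, ht.1]) (neg_le_abs _)⟩

set_option maxHeartbeats 1000000 in
/-- Uniform approximation of `h` on `[c, d]` with error `O(L / m)`, at the cost `exp (O(m⁵)) L`,
where `L` is the `H¹` norm of `h`. Each of the three approximation steps contributes
`O(L / m)` to the error. -/
lemma uniform_approx {a b c d : ℝ} (hab : a < b) (hcd : c < d)
    (hdisj : Disjoint (closure (Ioo a b)) (closure (Ioo c d))) :
    ∃ E K : ℝ, 0 < E ∧ 0 ≤ K ∧ ∀ (h : ℝ → ℝ) (L : ℝ) (m : ℕ), 0 < L → 0 < m →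
      Differentiable ℝ h →
      IntegrableOn (fun t => (h t) ^ 2) (Ioo c d) →
      IntegrableOn (fun t => (deriv h t) ^ 2) (Ioo c d) →
      ∫ t in Ioo c d, ((h t) ^ 2 + (deriv h t) ^ 2) = L ^ 2 →
      ∃ (f : ℝ → ℝ) (F : ℝ), Measurable f ∧ (∀ t, |f t| ≤ F) ∧
        √(b - a) * F ≤ Real.exp (K * (m : ℝ) ^ 5) * L ∧
        ∀ x ∈ Icc c d, |h x - truncHilbert (Ioo a b) f x| ≤ E * L / m := by
  obtain ⟨ρ, hρ, hsep⟩ := separation hab hcd hdisj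
  obtain ⟨R, hR0, hR⟩ : ∃ R : ℝ, 0 ≤ R ∧ ∀ x ∈ Icc c d, ∀ t ∈ Icc a b, |x - t| ≤ R := by
    refine ⟨|c| + |d| + |a| + |b|, by positivity, fun x hx t ht => ?_⟩
    have h1 := neg_abs_le a; have h2 := le_abs_self a
    have h3 := neg_abs_le b; have h4 := le_abs_self b
    have h5 := neg_abs_le c; have h6 := le_abs_self c
    have h7 := neg_abs_le d; have h8 := le_abs_self d
    rw [abs_le]; constructor <;> linarith [hx.1, hx.2, ht.1, ht.2]
  have hlen : 0 < d - c := by linarith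
  set C₀ : ℝ := d - c + 2 + 1 / (d - c) with hC₀
  have hC₀0 : 0 ≤ C₀ := by positivity
  obtain ⟨C₁, A, hC₁, hA, hpoly⟩ := poly_approx hcd hρ hsep hR hab hC₀0
  obtain ⟨κ, hκ, hκ1, hκρ, hκρ2, hκab⟩ :
      ∃ κ : ℝ, 0 < κ ∧ κ ≤ 1 ∧ κ ≤ ρ ∧ κ ≤ ρ ^ 2 ∧ κ ≤ (b - a) / 2 := by
    refine ⟨min 1 (min ρ (min (ρ ^ 2) ((b - a) / 2))), ?_, by simp, by simp, by simp, by simp⟩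
    have : 0 < (b - a) / 2 := by linarith
    positivity
  set B : ℝ := 1 + C₀ * R with hB
  have hB1 : 1 ≤ B := by
    have : 0 ≤ C₀ * R := by positivity
    linarith
  obtain ⟨K, hK0, hK⟩ := growth hA hB1 hκ (Real.sqrt_nonneg (b - a))
  refine ⟨C₁ + 2 * (C₀ + C₁) + 1, K, by positivity, hK0, ?_⟩
  intro h L m hL hm hd h1 h2 hLe
  have hm1 : (1 : ℝ) ≤ m := by exact_mod_cast hm
  have hm0 : (0 : ℝ) < m := by linarith
  have hsup : ∀ x ∈ Icc c d, |h x| ≤ C₀ * L := fun x hx => sup_bound hcd hd h1 h2 hL hLe hx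
  obtain ⟨P, hdeg, hPapp, hPbd⟩ := hpoly h L m hL hm
    (fun x hx y hy => holder_bound hd h1 h2 hL hLe hm0 hx hy) hsup
  specialize hK m hm
  generalize m ^ 4 = n at hdeg hPapp hPbd hK
  have hn0 : (0 : ℝ) ≤ n := Nat.cast_nonneg n
  -- spacing of the poles
  set δ : ℝ := κ / (((n : ℝ) + 1) ^ 2 * m) with hδ
  have hδ0 : 0 < δ := by positivity
  have hδm : ((n : ℝ) + 1) ^ 2 * δ = κ / m := by rw [hδ]; field_simp
  have hδ1 : ((n : ℝ) + 1) ^ 2 * δ ≤ κ := by rw [hδm]; exact div_le_self hκ.le hm1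
  have hnδ : n * δ ≤ κ := by
    refine le_trans ?_ hδ1
    gcongr; nlinarith
  have hδle : δ ≤ 1 :=
    (le_mul_of_one_le_left hδ0.le (one_le_pow₀ (by linarith))).trans (hδ1.trans hκ1)
  set S : ℝ := ((n : ℝ) + 1) * (B * A ^ n / δ ^ n) with hS
  have hS1 : 1 ≤ S := by
    have e1 : 1 ≤ A ^ n := one_le_pow₀ hA
    have e2 : δ ^ n ≤ 1 := pow_le_one₀ hδ0.le hδle
    have e3 : 1 ≤ B * A ^ n / δ ^ n := by
      rw [le_div_iff₀ (by positivity)]; nlinarith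
    rw [hS]; nlinarith
  -- width of the steps replacing the poles
  set τ : ℝ := κ / (m * S) with hτ
  have hτ0 : 0 < τ := by positivity
  have hτκ : τ ≤ κ := div_le_self hκ.le (by nlinarith)
  have hPbd' : ∀ t ∈ Icc a b, |P.eval t| ≤ B * A ^ n * L := by
    intro t ht
    refine (hPbd t ht).trans ?_
    have : C₀ * R ≤ B := by linarith
    calc C₀ * R * L * A ^ n ≤ B * L * A ^ n := by gcongr
      _ = _ := by ring
  obtain ⟨w, hw, hwP⟩ := partial_fractions hδ0 (by linarith : n * δ ≤ b - a) hdeg hPbd'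
  obtain ⟨f, hfm, hfb, hfH⟩ := step_realize hρ hsep hδ0 hτ0
    (by linarith : n * δ + τ ≤ b - a) hw
  have hSL : ((n : ℝ) + 1) * (B * A ^ n * L / δ ^ n) = S * L := by rw [hS]; ring
  rw [hSL] at hfb hfH
  refine ⟨f, S * L / τ, hfm, hfb, ?_, ?_⟩
  · calc √(b - a) * (S * L / τ) = (√(b - a) * S ^ 2 * m / κ) * L := by
          rw [hτ]; field_simp
      _ ≤ _ := by gcongr
  · intro x hx
    have hE1 := hPapp x hx
    have hQ : |P.eval x / (x - a) ^ (n + 1)| ≤ (C₀ + C₁) * L := by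
      have e1 : C₁ * L / m ≤ C₁ * L := div_le_self (by positivity) hm1
      have e2 := hsup x hx
      have e3 := abs_sub_abs_le_abs_sub (P.eval x / (x - a) ^ (n + 1)) (h x)
      rw [abs_sub_comm] at e3
      linarith
    have hE2 := ratio_perturb hρ hsep hδ0 (by linarith : n * δ ≤ b - a)
      (by rw [div_le_one hρ]; linarith) hx hQ
    have hE2' : (C₀ + C₁) * L * (2 * (((n : ℝ) + 1) ^ 2 * δ / ρ)) ≤
        2 * (C₀ + C₁) * L / m := by
      rw [hδm]
      have : κ / m / ρ ≤ 1 / m := by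
        rw [div_right_comm]; gcongr; rwa [div_le_one hρ]
      calc _ ≤ (C₀ + C₁) * L * (2 * (1 / m)) := by gcongr
        _ = _ := by ring
    have hnode : ∀ j ∈ Finset.range (n + 1), x ≠ a + j * δ := by
      intro j hj hxj
      have hjn : (j : ℝ) ≤ n := by exact_mod_cast Nat.lt_succ_iff.1 (Finset.mem_range.1 hj)
      have e1 := mul_le_mul_of_nonneg_right hjn hδ0.le
      have e2 : 0 ≤ j * δ := by positivity
      have := hsep x hx x ⟨by linarith, by linarith⟩
      simp at this
      linarith
    have hE3 := hfH x hx
    rw [← hwP x hnode] at hE3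
    have hE3' : S * L * (τ / ρ ^ 2) ≤ L / m := by
      have e : S * L * (τ / ρ ^ 2) = L / m * (κ / ρ ^ 2) := by rw [hτ]; field_simp
      rw [e]
      exact mul_le_of_le_one_right (by positivity) ((div_le_one (by positivity)).2 hκρ2)
    have hsum : (C₁ + 2 * (C₀ + C₁) + 1) * L / m =
        C₁ * L / m + 2 * (C₀ + C₁) * L / m + L / m := by ring
    rw [hsum]
    have t1 := abs_sub_le (h x) (P.eval x / (x - a) ^ (n + 1)) (truncHilbert (Ioo a b) f x)
    have t2 := abs_sub_le (P.eval x / (x - a) ^ (n + 1))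
      (P.eval x / ∏ j ∈ Finset.range (n + 1), (x - (a + j * δ))) (truncHilbert (Ioo a b) f x)
    linarith

theorem stmt_1 (a b c d : ℝ) (hab : a < b) (hcd : c < d)
    (hdisj : Disjoint (closure (Ioo a b)) (closure (Ioo c d))) :
    ∃ σ C : ℝ, 0 < σ ∧ 1 < C ∧
      ∀ ε : ℝ, 0 < ε →
      ∀ h : ℝ → ℝ, Differentiable ℝ h →
        IntegrableOn (fun t => (h t) ^ 2) (Ioo c d) volume →
        IntegrableOn (fun t => (deriv h t) ^ 2) (Ioo c d) volume →
        ∃ f : ℝ → ℝ, Measurable f ∧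
          IntegrableOn (fun t => (f t) ^ 2) (Ioo a b) volume ∧
          Real.sqrt (∫ x in Ioo c d, (h x - truncHilbert (Ioo a b) f x) ^ 2) ≤ ε ∧
          Real.sqrt (∫ t in Ioo a b, (f t) ^ 2) ≤
            Real.exp (C * (1 +
                (Real.sqrt (∫ t in Ioo c d, ((h t) ^ 2 + (deriv h t) ^ 2))) ^ σ / ε ^ σ)) *
              Real.sqrt (∫ t in Ioo c d, (h t) ^ 2) := by
  obtain ⟨E, K, hE, hK, happ⟩ := uniform_approx hab hcd hdisj
  have hlen : 0 < d - c := by linarith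
  set D : ℝ := √(d - c) * E with hD
  have hD0 : 0 < D := by positivity
  have hKD : 0 ≤ K * (D + 1) ^ 5 := by positivity
  refine ⟨((5 : ℕ) : ℝ), K * (D + 1) ^ 5 + 2, by norm_num, by linarith, ?_⟩
  intro ε hε h hd h1 h2
  -- If `‖h‖_{L²} ≤ ε`, the zero function works. Otherwise `N = ‖h‖_{H¹} / ε ≥ 1` and
  -- `‖h‖_{H¹} = N ε ≤ N ‖h‖_{L²}`, so the `H¹` norm is allowed in the bound on `f`.
  rcases le_or_gt (√(∫ t in Ioo c d, (h t) ^ 2)) ε with hsmall | hbig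
  · exact ⟨fun _ => 0, measurable_const, by simp, by simpa [truncHilbert] using hsmall,
      by simpa using by positivity⟩
  set H := √(∫ t in Ioo c d, (h t) ^ 2) with hH
  set L := √(∫ t in Ioo c d, ((h t) ^ 2 + (deriv h t) ^ 2)) with hLdef
  have hsum : IntegrableOn (fun t => (h t) ^ 2 + (deriv h t) ^ 2) (Ioo c d) := h1.add h2
  have hHL : H ≤ L := Real.sqrt_le_sqrt <| integral_mono h1 hsum fun t => by
    have := sq_nonneg (deriv h t); simp only; linarith
  have hL : 0 < L := by linarith
  have hLe : ∫ t in Ioo c d, ((h t) ^ 2 + (deriv h t) ^ 2) = L ^ 2 :=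
    (Real.sq_sqrt (integral_nonneg fun t => by positivity)).symm
  set N := L / ε with hN
  have hN1 : 1 ≤ N := by rw [hN, one_le_div hε]; linarith
  -- chosen so that the `L²` error `√(d - c) * E * L / m` is at most `ε`
  set m := ⌈D * N⌉₊ with hm
  have hm0 : 0 < m := Nat.ceil_pos.2 (by positivity)
  have hm0' : (0 : ℝ) < m := by exact_mod_cast hm0
  have hmle : (m : ℝ) ≤ (D + 1) * N := by
    have := (Nat.ceil_lt_add_one (by positivity : 0 ≤ D * N)).le
    linarith
  obtain ⟨f, F, hfm, hfF, hF, herr⟩ := happ h L m hL hm0 hd h1 h2 hLe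
  have hF0 : 0 ≤ F := (abs_nonneg _).trans (hfF 0)
  refine ⟨f, hfm, ?_, ?_, ?_⟩
  · refine Measure.integrableOn_of_bounded (M := F ^ 2) (by simp)
      (hfm.pow_const 2).aestronglyMeasurable (Filter.Eventually.of_forall fun t => ?_)
    rw [Real.norm_eq_abs, abs_pow]
    exact pow_le_pow_left₀ (abs_nonneg _) (hfF t) 2
  · have hI := norm_setIntegral_le_of_norm_le_const (μ := volume) (s := Ioo c d)
      (f := fun x => (h x - truncHilbert (Ioo a b) f x) ^ 2) (C := (E * L / m) ^ 2) (by simp)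
      fun x hx => by
        rw [Real.norm_eq_abs, abs_pow]
        exact pow_le_pow_left₀ (abs_nonneg _) (herr x (Ioo_subset_Icc_self hx)) 2
    rw [Real.volume_real_Ioo_of_le hcd.le] at hI
    calc _ ≤ √((E * L / m) ^ 2 * (d - c)) := Real.sqrt_le_sqrt ((le_abs_self _).trans hI)
      _ = E * L / m * √(d - c) := by
          rw [Real.sqrt_mul (by positivity), Real.sqrt_sq (by positivity)]
      _ = D * N * ε / m := by rw [hD, hN]; field_simp
      _ ≤ ε := by
          rw [div_le_iff₀ hm0', mul_comm ε]
          gcongr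
          exact Nat.le_ceil _
  · have hI := norm_setIntegral_le_of_norm_le_const (μ := volume) (s := Ioo a b)
      (f := fun x => (f x) ^ 2) (C := F ^ 2) (by simp)
      fun x _ => by
        rw [Real.norm_eq_abs, abs_pow]
        exact pow_le_pow_left₀ (abs_nonneg _) (hfF x) 2
    rw [Real.volume_real_Ioo_of_le hab.le] at hI
    rw [Real.rpow_natCast, Real.rpow_natCast, ← div_pow, ← hN]
    have hLN : L ≤ Real.exp (N ^ 5) * H := by
      have e1 : N ≤ Real.exp (N ^ 5) := by
        have e2 : N ≤ N ^ 5 := le_self_pow₀ hN1 (by norm_num)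
        linarith [Real.add_one_le_exp (N ^ 5)]
      calc L = N * ε := by rw [hN]; field_simp
        _ ≤ _ := by gcongr
    have hmN : (m : ℝ) ^ 5 ≤ (D + 1) ^ 5 * N ^ 5 := by
      rw [← mul_pow]; gcongr
    calc _ ≤ √(F ^ 2 * (b - a)) := Real.sqrt_le_sqrt ((le_abs_self _).trans hI)
      _ = √(b - a) * F := by
          rw [Real.sqrt_mul (by positivity), Real.sqrt_sq hF0, mul_comm]
      _ ≤ Real.exp (K * (m : ℝ) ^ 5) * L := hF
      _ ≤ Real.exp (K * ((D + 1) ^ 5 * N ^ 5)) * (Real.exp (N ^ 5) * H) := by gcongr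
      _ = Real.exp (K * ((D + 1) ^ 5 * N ^ 5) + N ^ 5) * H := by rw [Real.exp_add]; ring
      _ ≤ _ := by
          have : 0 ≤ N ^ 5 := by positivity
          gcongr
          nlinarith
end

section
/- Let f : ℝ → ℝ be smooth with compact support and let x ∈ ℝ. Then the principal value limit L := lim_{ε → 0⁺} ∫_{{t : |x − t| > ε}} f(t)/(x − t) dt exists, and the conjugate Poisson integrals of f converge to it at x: lim_{y → 0⁺} ∫_ℝ f(t) · (x − t)/((x − t)² + y²) dt = L. -/
open MeasureTheory Set Filter

/-!
Both families of integrals are of the form `∫ f (x - s) * (k ε s / s) ds`, where the cutoff `k ε`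
is even, takes values in `[-1, 1]` and tends to `1` away from the origin: `k ε` is the indicator
of `{ε < |s|}` for the truncated integrals, and `k y s = s² / (s² + y²)` for the conjugate Poisson
integrals. Since `k ε s / s` is odd in `s`, averaging over `s ↦ -s` replaces `f (x - s) / s` by the
symmetrized quotient `(f (x - s) - f (x + s)) / (2 s)`. This is bounded because `f` is Lipschitz,
and compactly supported, hence integrable (`symmQuot_integrable`). Dominated convergence then
shows that both families tend to its integral (`tendsto_integral_cutoff`).
-/

/-- The symmetrized difference quotient `(f (x - s) - f (x + s)) / (2 s)`, whose integral over the
line is the principal value of `∫ f t / (x - t) dt`. At `s = 0` it takes the value `0`. -/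
noncomputable def symmQuot (f : ℝ → ℝ) (x s : ℝ) : ℝ := (f (x - s) - f (x + s)) / (2 * s)

lemma symmQuot_integrable {f : ℝ → ℝ} (hf : ContDiff ℝ (⊤ : ℕ∞) f) (hsupp : HasCompactSupport f)
    (x : ℝ) : Integrable (symmQuot f x) := by
  obtain ⟨C, hC⟩ := hf.lipschitzWith_of_hasCompactSupport hsupp (by simp)
  have hcont := hf.continuous
  obtain ⟨R, hR⟩ := hsupp.isCompact.isBounded.subset_closedBall x
  have hvan : ∀ t, R < |t - x| → f t = 0 := fun t ht => by
    by_contra hne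
    have := hR (subset_tsupport f hne)
    rw [Metric.mem_closedBall, Real.dist_eq] at this
    linarith
  have hmeas : Measurable (symmQuot f x) := by
    unfold symmQuot
    fun_prop
  have hbd : ∀ s, ‖symmQuot f x s‖ ≤ C := fun s => by
    rcases eq_or_ne s 0 with rfl | hs
    · simp [symmQuot]
    · have h := hC.dist_le_mul (x - s) (x + s)
      rw [Real.dist_eq, Real.dist_eq, show x - s - (x + s) = -(2 * s) by ring, abs_neg] at h
      rw [symmQuot, Real.norm_eq_abs, abs_div, div_le_iff₀ (by positivity)]
      exact h
  have hon : IntegrableOn (symmQuot f x) (Metric.closedBall 0 R) :=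
    Measure.integrableOn_of_bounded (M := C) measure_closedBall_lt_top.ne
      hmeas.aestronglyMeasurable (Eventually.of_forall hbd)
  refine (integrableOn_iff_integrable_of_support_subset fun s hs => ?_).1 hon
  by_contra hsR
  rw [Metric.mem_closedBall, Real.dist_eq, sub_zero, not_le] at hsR
  apply hs
  rw [symmQuot, hvan (x - s) (by simpa using hsR), hvan (x + s) (by simpa using hsR)]
  simp

/-- An even cutoff `k` that makes `k s / s` bounded turns `f (x - s) / s` into the symmetrized
quotient under the integral sign. -/
lemma integral_cutoff_eq {f : ℝ → ℝ} (hf : ContDiff ℝ (⊤ : ℕ∞) f) (hsupp : HasCompactSupport f)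
    (x : ℝ) {k : ℝ → ℝ} (hk : Measurable k) (heven : ∀ s, k (-s) = k s)
    {M : ℝ} (hM : ∀ s, |k s / s| ≤ M) :
    ∫ s, f (x - s) * (k s / s) = ∫ s, symmQuot f x s * k s := by
  have hint : Integrable (fun s => f (x - s) * (k s / s)) :=
    ((hf.continuous.integrable_of_hasCompactSupport hsupp).comp_sub_left x).mul_bdd (c := M)
      (hk.div measurable_id).aestronglyMeasurable (Eventually.of_forall hM)
  have hneg := integral_neg_eq_self (fun s => f (x - s) * (k s / s)) volume
  have hadd := integral_add hint hint.comp_neg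
  have hsum : ∫ s, symmQuot f x s * k s =
      ∫ s, (1 / 2 : ℝ) * (f (x - s) * (k s / s) + f (x - -s) * (k (-s) / -s)) := by
    congr 1 with s
    rw [heven, symmQuot, sub_neg_eq_add, div_neg, mul_comm 2 s, ← div_div]
    ring
  rw [hsum, integral_const_mul, hadd, hneg]
  ring

lemma tendsto_integral_cutoff {f : ℝ → ℝ} (hf : ContDiff ℝ (⊤ : ℕ∞) f)
    (hsupp : HasCompactSupport f) (x : ℝ) (k : ℝ → ℝ → ℝ) (hk : ∀ ε, Measurable (k ε))
    (heven : ∀ ε s, k ε (-s) = k ε s) (hM : ∀ ε > 0, ∀ s, |k ε s / s| ≤ 1 / ε)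
    (hone : ∀ ε s, |k ε s| ≤ 1)
    (hlim : ∀ s ≠ 0, Tendsto (fun ε => k ε s) (nhdsWithin 0 (Ioi 0)) (nhds 1)) :
    Tendsto (fun ε => ∫ s, f (x - s) * (k ε s / s)) (nhdsWithin 0 (Ioi 0))
      (nhds (∫ s, symmQuot f x s)) := by
  have hI := symmQuot_integrable hf hsupp x
  have key : Tendsto (fun ε => ∫ s, symmQuot f x s * k ε s) (nhdsWithin 0 (Ioi 0))
      (nhds (∫ s, symmQuot f x s)) := by
    refine tendsto_integral_filter_of_dominated_convergence (fun s => ‖symmQuot f x s‖)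
      (Eventually.of_forall fun ε => hI.1.mul (hk ε).aestronglyMeasurable)
      (Eventually.of_forall fun ε => Eventually.of_forall fun s => ?_) hI.norm ?_
    · rw [norm_mul]
      exact mul_le_of_le_one_right (norm_nonneg _) (hone ε s)
    · filter_upwards [Measure.ae_ne volume (0 : ℝ)] with s hs
      simpa using (hlim s hs).const_mul (symmQuot f x s)
  refine key.congr' ?_
  filter_upwards [self_mem_nhdsWithin] with ε hε
  exact (integral_cutoff_eq hf hsupp x (hk ε) (heven ε) (hM ε hε)).symm

theorem stmt_2 (f : ℝ → ℝ) (hf : ContDiff ℝ (⊤ : ℕ∞) f) (hsupp : HasCompactSupport f) (x : ℝ) :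
    ∃ L : ℝ,
      Tendsto (fun ε : ℝ => ∫ t in {t : ℝ | ε < |x - t|}, f t / (x - t))
        (nhdsWithin 0 (Ioi 0)) (nhds L) ∧
      Tendsto (fun y : ℝ => ∫ t : ℝ, f t * (x - t) / ((x - t) ^ 2 + y ^ 2))
        (nhdsWithin 0 (Ioi 0)) (nhds L) := by
  refine ⟨∫ s, symmQuot f x s, ?_, ?_⟩
  · have hset : ∀ ε : ℝ, MeasurableSet {s : ℝ | ε < |s|} := fun ε =>
      measurableSet_lt measurable_const measurable_id.abs
    have h := tendsto_integral_cutoff hf hsupp x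
      (fun ε => {s : ℝ | ε < |s|}.indicator 1) (fun ε => measurable_one.indicator (hset ε))
      (fun ε s => by simp [indicator_apply])
      (fun ε hε s => by
        by_cases hs : ε < |s|
        · simp only [indicator_apply, mem_ofPred_eq, hs, if_true, Pi.one_apply, abs_div, abs_one]
          exact one_div_le_one_div_of_le hε hs.le
        · simpa [indicator_apply, hs] using hε.le)
      (fun ε s => by by_cases hs : ε < |s| <;> simp [hs])
      (fun s hs => by
        refine tendsto_const_nhds.congr' ?_
        filter_upwards [nhdsWithin_le_nhds (Iio_mem_nhds (abs_pos.2 hs))] with ε hε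
        simp [mem_Iio.1 hε])
    refine h.congr fun ε => ?_
    have hset' : MeasurableSet {t : ℝ | ε < |x - t|} :=
      (hset ε).preimage (measurable_const.sub measurable_id)
    rw [← integral_indicator hset', ← integral_sub_left_eq_self _ volume x]
    congr 1 with s
    simp [indicator_apply, div_eq_mul_inv]
  · have h := tendsto_integral_cutoff hf hsupp x
      (fun y s => s ^ 2 / (s ^ 2 + y ^ 2)) (fun y => by fun_prop) (fun y s => by simp)
      (fun y hy s => by
        have hpos : 0 < s ^ 2 + y ^ 2 := by positivity
        rcases eq_or_ne s 0 with rfl | hs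
        · simpa using hy.le
        · rw [show s ^ 2 / (s ^ 2 + y ^ 2) / s = s / (s ^ 2 + y ^ 2) by field_simp,
            abs_div, abs_of_pos hpos, div_le_div_iff₀ hpos hy, ← sq_abs s]
          nlinarith [sq_nonneg (|s| - y), abs_nonneg s])
      (fun y s => by
        rw [abs_of_nonneg (by positivity)]
        exact div_le_one_of_le₀ (by nlinarith [sq_nonneg y]) (by positivity))
      (fun s hs => by
        have hc : ContinuousAt (fun y : ℝ => s ^ 2 / (s ^ 2 + y ^ 2)) 0 :=
          ContinuousAt.div (by fun_prop) (by fun_prop) (by positivity)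
        have := hc.tendsto
        simp only [ne_eq, OfNat.ofNat_ne_zero, not_false_eq_true, zero_pow, add_zero,
          div_self (pow_ne_zero 2 hs)] at this
        exact this.mono_left nhdsWithin_le_nhds)
    refine h.congr fun y => ?_
    rw [← integral_sub_left_eq_self (fun t => f t * (x - t) / _) volume x]
    congr 1 with s
    rcases eq_or_ne s 0 with rfl | hs
    · simp
    · rw [sub_sub_cancel, mul_div_assoc]
      congr 1
      rw [div_right_comm, sq s, mul_self_div_self]
end

section
/- Let I, J ⊂ ℝ be nonempty bounded open intervals with disjoint closures and let f : ℝ → ℝ be measurable with ∫_I f(t)² dt < ∞. If (H_I f)(x) = ∫_I f(t)/(x − t) dt = 0 for every x ∈ J, then f = 0 almost everywhere on I. -/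
/-!
Fix `x₀` in the interval `(c, d)`. Since the closures of the two intervals are disjoint,
`|x - t|` is bounded below by some `δ > 0`, so `x ↦ ∫ f(t) / (x - t) dt` can be differentiated
under the integral sign as often as one likes on `(c, d)`. It vanishes there, hence so do all the
integrals `∫ f(t) (x₀ - t)^{-(n+1)} dt` (`integral_mul_inv_pow_eq_zero`). In other words
`φ(t) = f(t) / (x₀ - t)` is orthogonal to every polynomial in `s(t) = 1 / (x₀ - t)`.

The map `s` is an increasing homeomorphism from `[a, b]` onto a compact interval that does not
contain `0`, so by the Weierstrass approximation theorem every continuous function on `[a, b]` is a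
uniform limit of polynomials in `s` (`exists_polynomial_inv_near`). Hence `φ` is orthogonal to all
test functions supported in `(a, b)`, so that `φ`, and with it `f`, vanishes almost everywhere.
-/

open MeasureTheory Set

/-- Differentiation under the integral sign: if the integral of `f(t) / (x - t)` vanishes for all
`x` in an open interval at positive distance from the domain of integration, then so do the
integrals against all higher powers of `1 / (x - t)`. -/
lemma integral_mul_inv_pow_eq_zero {a b c d δ : ℝ} (hδ : 0 < δ)
    (hsep : ∀ x ∈ Ioo c d, ∀ t ∈ Icc a b, δ ≤ |x - t|) {f : ℝ → ℝ} (hf : Measurable f)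
    (hfi : IntegrableOn f (Ioo a b))
    (hv : ∀ x ∈ Ioo c d, ∫ t in Ioo a b, f t / (x - t) = 0) (n : ℕ) :
    ∀ x ∈ Ioo c d, ∫ t in Ioo a b, f t * ((x - t)⁻¹) ^ (n + 1) = 0 := by
  have hinv : ∀ x ∈ Ioo c d, ∀ t ∈ Icc a b, |(x - t)⁻¹| ≤ δ⁻¹ := fun x hx t ht => by
    rw [abs_inv]
    exact inv_anti₀ hδ (hsep x hx t ht)
  induction n with
  | zero =>
    intro x hx
    simpa [div_eq_mul_inv] using hv x hx
  | succ n ih =>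
    intro x hx
    have hnhds : Ioo c d ∈ nhds x := Ioo_mem_nhds hx.1 hx.2
    have hderiv := (hasDerivAt_integral_of_dominated_loc_of_deriv_le
      (μ := volume.restrict (Ioo a b)) (s := Ioo c d) (x₀ := x)
      (F := fun x t => f t * ((x - t)⁻¹) ^ (n + 1))
      (F' := fun x t => f t * (-(n + 1 : ℝ) * ((x - t)⁻¹) ^ (n + 1 + 1)))
      (bound := fun t => |f t| * ((n + 1 : ℝ) * (δ⁻¹) ^ (n + 1 + 1)))
      hnhds
      (Filter.Eventually.of_forall fun y => by
        apply Measurable.aestronglyMeasurable; fun_prop)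
      (by
        refine Integrable.mono' (hfi.abs.mul_const ((δ⁻¹) ^ (n + 1)))
          (by apply Measurable.aestronglyMeasurable; fun_prop) ?_
        refine (ae_restrict_iff' measurableSet_Ioo).2 (Filter.Eventually.of_forall fun t ht => ?_)
        rw [norm_mul, norm_pow, Real.norm_eq_abs, Real.norm_eq_abs]
        have := hinv x hx t (Ioo_subset_Icc_self ht)
        gcongr)
      (by apply Measurable.aestronglyMeasurable; fun_prop)
      (by
        refine (ae_restrict_iff' measurableSet_Ioo).2
          (Filter.Eventually.of_forall fun t ht y hy => ?_)
        have := hinv y hy t (Ioo_subset_Icc_self ht)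
        have hn : |-(n + 1 : ℝ)| = n + 1 := by
          rw [abs_neg, abs_of_nonneg (by positivity)]
        rw [norm_mul, norm_mul, norm_pow, Real.norm_eq_abs, Real.norm_eq_abs, Real.norm_eq_abs, hn]
        gcongr)
      (hfi.abs.mul_const _)
      (by
        refine (ae_restrict_iff' measurableSet_Ioo).2
          (Filter.Eventually.of_forall fun t ht y hy => ?_)
        have hne : y - t ≠ 0 :=
          abs_pos.1 (hδ.trans_le (hsep y hy t (Ioo_subset_Icc_self ht)))
        have h := ((((hasDerivAt_id y).sub_const t).inv hne).pow (n + 1)).const_mul (f t)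
        refine h.congr_deriv ?_
        simp only [id, Pi.inv_apply, Nat.add_sub_cancel]
        push_cast
        rw [div_eq_mul_inv, ← inv_pow]
        ring)).2
    have hzero : HasDerivAt (fun y => ∫ t in Ioo a b, f t * ((y - t)⁻¹) ^ (n + 1)) 0 x :=
      (hasDerivAt_const x (0 : ℝ)).congr_of_eventuallyEq
        (Filter.eventually_of_mem hnhds fun y hy => ih y hy)
    have h := hderiv.unique hzero
    have hcomm : ∀ t, f t * (-(n + 1 : ℝ) * ((x - t)⁻¹) ^ (n + 1 + 1))
        = -(n + 1 : ℝ) * (f t * ((x - t)⁻¹) ^ (n + 1 + 1)) := fun t => by ring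
    simp only [hcomm, integral_const_mul] at h
    exact (mul_eq_zero.1 h).resolve_left (neg_ne_zero.2 (by positivity))

/-- Weierstrass approximation in the variable `1 / (x - t)`, for `x` outside `[a, b]`. -/
lemma exists_polynomial_inv_near {a b x : ℝ} (hx : b < x ∨ x < a) {g : ℝ → ℝ}
    (hg : Continuous g) {ε : ℝ} (hε : 0 < ε) :
    ∃ p : Polynomial ℝ, ∀ t ∈ Icc a b, |p.eval (x - t)⁻¹ - g t| < ε := by
  -- The image of `[a, b]` under `t ↦ (x - t)⁻¹` lies in `[(x - a)⁻¹, (x - b)⁻¹]`;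
  -- the inverse map is `s ↦ x - s⁻¹`.
  rcases le_or_gt a b with hab | hab
  swap
  · exact ⟨0, fun t ht => absurd (ht.1.trans ht.2) (not_le.2 hab)⟩
  have hcont : ContinuousOn (fun s : ℝ => g (x - s⁻¹)) (Icc (x - a)⁻¹ (x - b)⁻¹) := by
    refine hg.comp_continuousOn (continuousOn_const.sub (continuousOn_inv₀.mono ?_))
    intro s hs
    rcases hx with hx | hx
    · exact ((inv_pos.2 (by linarith : 0 < x - a)).trans_le hs.1).ne'
    · exact (hs.2.trans_lt (inv_lt_zero.2 (by linarith : x - b < 0))).ne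
  obtain ⟨p, hp⟩ := exists_polynomial_near_of_continuousOn _ _ _ hcont ε hε
  refine ⟨p, fun t ht => ?_⟩
  have hmem : (x - t)⁻¹ ∈ Icc (x - a)⁻¹ (x - b)⁻¹ := by
    obtain ⟨h1, h2⟩ := ht
    rcases hx with hx | hx
    · exact ⟨inv_anti₀ (by linarith) (by linarith), inv_anti₀ (by linarith) (by linarith)⟩
    · exact ⟨(inv_le_inv_of_neg (by linarith) (by linarith)).2 (by linarith),
        (inv_le_inv_of_neg (by linarith) (by linarith)).2 (by linarith)⟩
  simpa using hp _ hmem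

theorem stmt_4 (a b c d : ℝ) (hab : a < b) (hcd : c < d)
    (hdisj : Disjoint (closure (Ioo a b)) (closure (Ioo c d)))
    (f : ℝ → ℝ) (hf : Measurable f)
    (hf2 : IntegrableOn (fun t => (f t) ^ 2) (Ioo a b) volume)
    (hvanish : ∀ x ∈ Ioo c d, truncHilbert (Ioo a b) f x = 0) :
    ∀ᵐ t ∂(volume.restrict (Ioo a b)), f t = 0 := by
  rw [closure_Ioo hab.ne, closure_Ioo hcd.ne] at hdisj
  have hpos : b < c ∨ d < a := by
    by_contra! h
    rw [Set.disjoint_left] at hdisj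
    exact hdisj (a := max a c) ⟨le_max_left _ _, max_le hab.le h.1⟩
      ⟨le_max_right _ _, max_le h.2 hcd.le⟩
  obtain ⟨δ, hδ, hsep⟩ : ∃ δ > 0, ∀ x ∈ Ioo c d, ∀ t ∈ Icc a b, δ ≤ |x - t| := by
    rcases hpos with h | h
    · refine ⟨c - b, by linarith, fun x hx t ht => le_trans ?_ (le_abs_self _)⟩
      linarith [hx.1, ht.2]
    · refine ⟨a - d, by linarith, fun x hx t ht => le_trans ?_ (neg_le_abs _)⟩
      linarith [hx.2, ht.1]
  have hfi : IntegrableOn f (Ioo a b) :=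
    ((memLp_two_iff_integrable_sq hf.aestronglyMeasurable).2 hf2).integrable (by norm_num)
  obtain ⟨x, hx⟩ : (Ioo c d).Nonempty := nonempty_Ioo.2 hcd
  have hxout : b < x ∨ x < a := hpos.imp (fun h => h.trans hx.1) (fun h => hx.2.trans h)
  have hmom := fun n => integral_mul_inv_pow_eq_zero hδ hsep hf hfi hvanish n x hx
  have hpow : ∀ n : ℕ,
      IntegrableOn (fun t => f t * (x - t)⁻¹ * ((x - t)⁻¹) ^ n) (Ioo a b) := by
    intro n
    refine Integrable.mono' (hfi.abs.mul_const ((δ⁻¹) ^ (n + 1)))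
      (by apply Measurable.aestronglyMeasurable; fun_prop) ?_
    refine (ae_restrict_iff' measurableSet_Ioo).2 (Filter.Eventually.of_forall fun t ht => ?_)
    rw [mul_assoc, ← pow_succ', norm_mul, norm_pow, norm_inv, Real.norm_eq_abs, Real.norm_eq_abs]
    have := inv_anti₀ hδ (hsep x hx t (Ioo_subset_Icc_self ht))
    gcongr
  have hφ : IntegrableOn (fun t => f t * (x - t)⁻¹) (Ioo a b) := by simpa using hpow 0
  have hpolyi : ∀ p : Polynomial ℝ,
      IntegrableOn (fun t => f t * (x - t)⁻¹ * p.eval (x - t)⁻¹) (Ioo a b) ∧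
      ∫ t in Ioo a b, f t * (x - t)⁻¹ * p.eval (x - t)⁻¹ = 0 := by
    intro p
    induction p using Polynomial.induction_on' with
    | add p q hp hq =>
      simp only [Polynomial.eval_add, mul_add]
      exact ⟨hp.1.add hq.1, by rw [integral_add hp.1 hq.1, hp.2, hq.2, add_zero]⟩
    | monomial n r =>
      have h : ∀ t, f t * (x - t)⁻¹ * (Polynomial.monomial n r).eval (x - t)⁻¹
          = r * (f t * (x - t)⁻¹ * ((x - t)⁻¹) ^ n) := fun t => by
        rw [Polynomial.eval_monomial]; ring
      simp only [h]
      refine ⟨(hpow n).const_mul r, ?_⟩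
      rw [integral_const_mul]
      have := hmom n
      simp only [pow_succ', ← mul_assoc] at this
      rw [this, mul_zero]
  have hae : ∀ᵐ t ∂volume, t ∈ Ioo a b → f t * (x - t)⁻¹ = 0 := by
    refine isOpen_Ioo.ae_eq_zero_of_integral_contDiff_smul_eq_zero hφ.locallyIntegrableOn ?_
    intro g hg hgc hgU
    have hgcont := hg.continuous
    have hrestr : ∫ t, g t • (f t * (x - t)⁻¹) = ∫ t in Ioo a b, f t * (x - t)⁻¹ * g t := by
      rw [← setIntegral_eq_integral_of_forall_compl_eq_zero (s := Ioo a b)]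
      · simp only [smul_eq_mul, mul_comm]
      · intro t ht
        rw [image_eq_zero_of_notMem_tsupport fun h => ht (hgU h), zero_smul]
    rw [hrestr]
    have hgi : IntegrableOn (fun t => f t * (x - t)⁻¹ * g t) (Ioo a b) := by
      obtain ⟨C, hC⟩ := hgc.exists_bound_of_continuous hgcont
      exact hφ.mul_bdd (c := C) hgcont.aestronglyMeasurable (Filter.Eventually.of_forall hC)
    set A := ∫ t in Ioo a b, |f t * (x - t)⁻¹| with hA
    have hA0 : 0 ≤ A := integral_nonneg fun t => abs_nonneg _
    have hbound : ∀ ε > 0, |∫ t in Ioo a b, f t * (x - t)⁻¹ * g t| ≤ A * ε := by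
      intro ε hε
      obtain ⟨p, hp⟩ := exists_polynomial_inv_near hxout hgcont hε
      obtain ⟨hpi, hp0⟩ := hpolyi p
      rw [← sub_zero (∫ t in Ioo a b, f t * (x - t)⁻¹ * g t), ← hp0, ← integral_sub hgi hpi, hA,
        ← integral_mul_const, ← Real.norm_eq_abs]
      refine norm_integral_le_of_norm_le (hφ.abs.mul_const ε) ?_
      refine (ae_restrict_iff' measurableSet_Ioo).2 (Filter.Eventually.of_forall fun t ht => ?_)
      rw [← mul_sub, norm_mul, Real.norm_eq_abs, Real.norm_eq_abs, abs_sub_comm (g t)]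
      have := (hp t (Ioo_subset_Icc_self ht)).le
      gcongr
    rw [← abs_nonpos_iff]
    refine le_of_forall_pos_le_add fun η hη => ?_
    -- `A + 1` rather than `A`, since `A` may be zero.
    refine (hbound (η / (A + 1)) (by positivity)).trans ?_
    rw [zero_add, mul_div_assoc', div_le_iff₀ (by positivity)]
    nlinarith
  refine (ae_restrict_iff' measurableSet_Ioo).2 (hae.mono fun t ht hmem => ?_)
  have hne : x - t ≠ 0 := abs_pos.1 (hδ.trans_le (hsep x hx t (Ioo_subset_Icc_self hmem)))
  exact (mul_eq_zero.1 (ht hmem)).resolve_right (inv_ne_zero hne)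
end

section
/- Let I, J ⊂ ℝ be nonempty bounded open intervals with disjoint closures. Then for every measurable h : ℝ → ℝ with ∫_J h(x)² dx < ∞ and every ε > 0 there exists a smooth function g : ℝ → ℝ with compact support contained in I such that ( ∫_J (h(x) − (H_I g)(x))² dx )^{1/2} < ε. In other words, {H_I g restricted to J : g ∈ C_c^∞(I)} is dense in L²(J). -/
/-!
The idea is to approximate in the uniform norm of `C([c, d])`, where everything reduces to the
Cauchy kernels `r_t(x) = 1 / (x - t)`, `t ∈ (a, b)`.

* Applying the transform to a mollifier concentrated near `t` shows that `r_t` is a uniform limit on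
  `[c, d]` of transforms of test functions (`cauchyKernel_mem_approxSubmodule`).
* The closed span `V` of all `r_t` is everything (`closedSpan_eq_top`). By the resolvent identity
  `(s - t) r_s r_t = r_s - r_t`, the space `V` is stable under multiplication by `r_t` (the case
  `s = t` follows by letting `s → t`). Hence it is stable under multiplication by the algebra
  generated by `r_t`, which is dense by Stone–Weierstrass since `r_t` is injective. As `r_t` is
  invertible in `C([c, d])` and lies in `V`, we get `V = C([c, d])`.
* Continuous functions are dense in `L²`, and uniform approximation on a bounded interval implies
  `L²` approximation.
-/

open MeasureTheory Set

/-- Smooth functions with compact support contained in `(a, b)`. -/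
def IsTestFun (a b : ℝ) (g : ℝ → ℝ) : Prop :=
  ContDiff ℝ (⊤ : ℕ∞) g ∧ HasCompactSupport g ∧ tsupport g ⊆ Ioo a b

lemma IsTestFun.integrableOn {a b : ℝ} {g : ℝ → ℝ} (hg : IsTestFun a b g) {x : ℝ}
    (hx : x ∉ Icc a b) : IntegrableOn (fun t => g t / (x - t)) (Ioo a b) := by
  have hc : ContinuousOn (fun t => g t / (x - t)) (Icc a b) :=
    hg.1.continuous.continuousOn.div (by fun_prop)
      (fun t ht h0 => hx (by rwa [sub_eq_zero.1 h0]))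
  exact (hc.integrableOn_Icc).mono_set Ioo_subset_Icc_self

/-- The continuous functions on `[c, d]` that are uniform limits on `[c, d]` of transforms of test
functions on `(a, b)`. -/
def approxSubmodule (a b c d : ℝ) (hd : Disjoint (Icc a b) (Icc c d)) :
    Submodule ℝ C(Icc c d, ℝ) where
  carrier := {f | ∀ ε > 0, ∃ g, IsTestFun a b g ∧
    ∀ x : Icc c d, |f x - truncHilbert (Ioo a b) g x| ≤ ε}
  zero_mem' := by
    intro ε hε
    refine ⟨fun _ => 0, ⟨contDiff_const, HasCompactSupport.zero, by simp [tsupport]⟩, fun x => ?_⟩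
    simp [truncHilbert, hε.le]
  add_mem' := by
    intro f₁ f₂ h₁ h₂ ε hε
    obtain ⟨g₁, hg₁, H₁⟩ := h₁ (ε / 2) (by positivity)
    obtain ⟨g₂, hg₂, H₂⟩ := h₂ (ε / 2) (by positivity)
    refine ⟨fun t => g₁ t + g₂ t, ⟨hg₁.1.add hg₂.1, hg₁.2.1.add hg₂.2.1,
      (tsupport_add g₁ g₂).trans (union_subset hg₁.2.2 hg₂.2.2)⟩, fun x => ?_⟩
    have hx : (x : ℝ) ∉ Icc a b := fun h => Set.disjoint_left.1 hd h x.2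
    have : truncHilbert (Ioo a b) (fun t => g₁ t + g₂ t) x =
        truncHilbert (Ioo a b) g₁ x + truncHilbert (Ioo a b) g₂ x := by
      unfold truncHilbert
      rw [← integral_add (hg₁.integrableOn hx) (hg₂.integrableOn hx)]
      simp only [add_div]
    rw [this, ContinuousMap.add_apply]
    have e₁ := abs_le.1 (H₁ x)
    have e₂ := abs_le.1 (H₂ x)
    exact abs_le.2 ⟨by linarith [e₁.1, e₂.1], by linarith [e₁.2, e₂.2]⟩
  smul_mem' := by
    intro k f hf ε hε
    obtain ⟨g, hg, H⟩ := hf (ε / (|k| + 1)) (by positivity)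
    refine ⟨fun t => k * g t, ⟨contDiff_const.mul hg.1, hg.2.1.mul_left,
      (closure_mono (Function.support_const_smul_subset k g)).trans hg.2.2⟩, fun x => ?_⟩
    have : truncHilbert (Ioo a b) (fun t => k * g t) x = k * truncHilbert (Ioo a b) g x := by
      unfold truncHilbert
      rw [← integral_const_mul]
      simp only [mul_div_assoc]
    rw [this, ContinuousMap.smul_apply, smul_eq_mul, ← mul_sub, abs_mul]
    calc |k| * |f x - truncHilbert (Ioo a b) g x| ≤ (|k| + 1) * (ε / (|k| + 1)) := by
          gcongr
          · linarith
          · exact H x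
      _ = ε := by field_simp

lemma isClosed_approxSubmodule (a b c d : ℝ) (hd : Disjoint (Icc a b) (Icc c d)) :
    IsClosed (approxSubmodule a b c d hd : Set C(Icc c d, ℝ)) := by
  refine isClosed_of_closure_subset fun f hf ε hε => ?_
  obtain ⟨f', hf', hdist⟩ := Metric.mem_closure_iff.1 hf (ε / 2) (by positivity)
  obtain ⟨g, hg, H⟩ := hf' (ε / 2) (by positivity)
  refine ⟨g, hg, fun x => ?_⟩
  have h₁ : |f x - f' x| ≤ ε / 2 := (ContinuousMap.dist_apply_le_dist x).trans hdist.le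
  have h₂ := H x
  calc |f x - truncHilbert (Ioo a b) g x| ≤ |f x - f' x| + |f' x - truncHilbert (Ioo a b) g x| :=
        abs_sub_le _ _ _
    _ ≤ ε := by linarith

lemma kernel_ne_zero {a b c d : ℝ} (hd : Disjoint (Icc a b) (Icc c d)) (t : Ioo a b)
    (x : Icc c d) : (x : ℝ) - t ≠ 0 := fun h =>
  Set.disjoint_left.1 hd (Ioo_subset_Icc_self t.2) (by rw [← sub_eq_zero.1 h]; exact x.2)

/-- The Cauchy kernel `x ↦ 1 / (x - t)` as a continuous function on `[c, d]`, for `t ∈ (a, b)`. -/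
noncomputable def cauchyKernel {a b c d : ℝ} (hd : Disjoint (Icc a b) (Icc c d)) (t : Ioo a b) :
    C(Icc c d, ℝ) where
  toFun x := ((x : ℝ) - t)⁻¹
  continuous_toFun := Continuous.inv₀ (by fun_prop) (kernel_ne_zero hd t)

lemma continuous_cauchyKernel {a b c d : ℝ} (hd : Disjoint (Icc a b) (Icc c d)) :
    Continuous (cauchyKernel hd) := by
  refine ContinuousMap.continuous_of_continuous_uncurry _ ?_
  exact Continuous.inv₀ (f := fun p : Ioo a b × Icc c d => (p.2 : ℝ) - p.1) (by fun_prop)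
    (fun p => kernel_ne_zero hd p.1 p.2)

lemma cauchyKernel_mem_approxSubmodule {a b c d : ℝ} (hd : Disjoint (Icc a b) (Icc c d))
    (t₀ : Ioo a b) : cauchyKernel hd t₀ ∈ approxSubmodule a b c d hd := by
  intro ε hε
  obtain ⟨δ₁, hδ₁, H₁⟩ := Metric.continuous_iff.1 (continuous_cauchyKernel hd) t₀ ε hε
  obtain ⟨δ₂, hδ₂, H₂⟩ := Metric.isOpen_iff.1 isOpen_Ioo (t₀ : ℝ) t₀.2
  set δ := min δ₁ δ₂ / 2
  have hδ : 0 < δ := by positivity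
  have hδlt : δ < min δ₁ δ₂ := half_lt_self (by positivity)
  -- a mollifier at `t₀`, supported where `r_t` is `ε`-close to `r_{t₀}`
  let φ : ContDiffBump (t₀ : ℝ) := ⟨δ / 2, δ, by positivity, by linarith⟩
  have hts : tsupport (φ.normed volume) ⊆ Ioo a b := by
    rw [φ.tsupport_normed_eq]
    exact (Metric.closedBall_subset_ball (hδlt.trans_le (min_le_right _ _))).trans H₂
  have hg : IsTestFun a b (φ.normed volume) :=
    ⟨φ.contDiff_normed, φ.hasCompactSupport_normed, hts⟩
  have hsupp : ∀ t, t ∉ Ioo a b → φ.normed volume t = 0 := fun t ht =>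
    image_eq_zero_of_notMem_tsupport fun h => ht (hts h)
  refine ⟨_, hg, fun x => ?_⟩
  have hx : (x : ℝ) ∉ Icc a b := fun h => Set.disjoint_left.1 hd h x.2
  have hone : ∫ t in Ioo a b, φ.normed volume t = 1 := by
    rw [setIntegral_eq_integral_of_forall_compl_eq_zero hsupp, φ.integral_normed]
  have hint : IntegrableOn (φ.normed volume) (Ioo a b) := φ.integrable_normed.integrableOn
  have hrw : cauchyKernel hd t₀ x - truncHilbert (Ioo a b) (φ.normed volume) x =
      ∫ t in Ioo a b, φ.normed volume t * (cauchyKernel hd t₀ x - ((x : ℝ) - t)⁻¹) := by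
    have h1 : cauchyKernel hd t₀ x =
        ∫ t in Ioo a b, φ.normed volume t * cauchyKernel hd t₀ x := by
      rw [integral_mul_const, hone, one_mul]
    unfold truncHilbert
    conv_lhs => rw [h1]
    rw [← integral_sub (hint.mul_const _) (hg.integrableOn hx)]
    simp only [mul_sub, div_eq_mul_inv]
  rw [hrw, ← Real.norm_eq_abs]
  calc _ ≤ ∫ t in Ioo a b, φ.normed volume t * ε := by
        refine norm_integral_le_of_norm_le (hint.mul_const ε) ?_
        refine (ae_restrict_iff' measurableSet_Ioo).2 (Filter.Eventually.of_forall fun t ht => ?_)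
        rw [norm_mul, Real.norm_of_nonneg (φ.nonneg_normed t)]
        by_cases htb : t ∈ Metric.ball (t₀ : ℝ) δ
        · refine mul_le_mul_of_nonneg_left ?_ (φ.nonneg_normed t)
          have hdist := H₁ ⟨t, ht⟩ ((Metric.mem_ball.1 htb).trans
            (hδlt.trans_le (min_le_left _ _)))
          rw [dist_comm] at hdist
          exact (ContinuousMap.dist_apply_le_dist x).trans hdist.le
        · have : φ.normed volume t = 0 := by
            rw [← Function.notMem_support, φ.support_normed_eq]
            exact htb
          simp [this]
    _ = ε := by rw [integral_mul_const, hone, one_mul]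

/-- The closed linear span of the Cauchy kernels is all of `C([c, d])`. -/
lemma closedSpan_eq_top {a b c d : ℝ} (hab : a < b) (hd : Disjoint (Icc a b) (Icc c d)) :
    (Submodule.span ℝ (range (cauchyKernel hd))).topologicalClosure = ⊤ := by
  set V := (Submodule.span ℝ (range (cauchyKernel hd))).topologicalClosure with hV
  have hVc : IsClosed (V : Set C(Icc c d, ℝ)) := Submodule.isClosed_topologicalClosure _
  have hrV : ∀ t, cauchyKernel hd t ∈ V := fun t =>
    Submodule.le_topologicalClosure _ (Submodule.subset_span (mem_range_self t))
  let t₀ : Ioo a b := ⟨(a + b) / 2, by linarith, by linarith⟩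
  set r := cauchyKernel hd t₀ with hr
  have hne : ∀ s : Ioo a b, s ≠ t₀ → r * cauchyKernel hd s ∈ V := by
    intro s hs
    have hs' : (s : ℝ) - t₀ ≠ 0 := sub_ne_zero.2 fun h => hs (Subtype.ext h)
    -- the resolvent identity
    have : r * cauchyKernel hd s = ((s : ℝ) - t₀)⁻¹ • (cauchyKernel hd s - r) := by
      ext x
      have h1 := kernel_ne_zero hd s x
      have h2 := kernel_ne_zero hd t₀ x
      simp only [hr, cauchyKernel, ContinuousMap.mul_apply, ContinuousMap.smul_apply,
        ContinuousMap.sub_apply, ContinuousMap.coe_mk, smul_eq_mul]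
      rw [inv_sub_inv h1 h2]
      field_simp
      ring
    rw [this]
    exact V.smul_mem _ (V.sub_mem (hrV s) (hrV t₀))
  have hall : ∀ s : Ioo a b, r * cauchyKernel hd s ∈ V := by
    have hcl : IsClosed {s : Ioo a b | r * cauchyKernel hd s ∈ V} :=
      hVc.preimage (continuous_const.mul (continuous_cauchyKernel hd))
    have hdense : Dense ({t₀}ᶜ : Set (Ioo a b)) := by
      have : Filter.NeBot (nhdsWithin t₀ {t₀}ᶜ) := by
        rw [← Filter.map_neBot_iff (Subtype.val : Ioo a b → ℝ)]
        have h1 : Filter.map (Subtype.val : Ioo a b → ℝ) (nhdsWithin t₀ {t₀}ᶜ) =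
            nhdsWithin (t₀ : ℝ) {(t₀ : ℝ)}ᶜ := by
          have := isOpen_Ioo.isOpenEmbedding_subtypeVal (X := ℝ) |>.map_nhdsWithin_preimage_eq
            ({(t₀ : ℝ)}ᶜ) t₀
          rw [← this]
          congr 2
          ext s
          simp [Subtype.ext_iff]
        rw [h1]
        infer_instance
      exact dense_compl_singleton t₀
    intro s
    exact hcl.closure_subset_iff.2 (fun s hs => hne s hs) (hdense s)
  have hmulr : ∀ v ∈ V, r * v ∈ V := by
    have hle : Submodule.span ℝ (range (cauchyKernel hd)) ≤
        V.comap (LinearMap.mulLeft ℝ r) := by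
      rw [Submodule.span_le]
      rintro _ ⟨s, rfl⟩
      exact hall s
    have hcl : IsClosed (V.comap (LinearMap.mulLeft ℝ r) : Set C(Icc c d, ℝ)) :=
      hVc.preimage (continuous_const_mul r)
    exact fun v hv => Submodule.topologicalClosure_minimal _ hle hcl hv
  have hadj : ∀ p ∈ Algebra.adjoin ℝ {r}, ∀ v ∈ V, p * v ∈ V := by
    intro p hp
    induction hp using Algebra.adjoin_induction with
    | mem x hx => rw [mem_singleton_iff.1 hx]; exact hmulr
    | algebraMap k => intro v hv; rw [← Algebra.smul_def]; exact V.smul_mem k hv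
    | add x y _ _ hx hy => intro v hv; rw [add_mul]; exact V.add_mem (hx v hv) (hy v hv)
    | mul x y _ _ hx hy => intro v hv; rw [mul_assoc]; exact hx _ (hy v hv)
  have hsep : (Algebra.adjoin ℝ {r}).SeparatesPoints := by
    intro x y hxy
    refine ⟨r, ⟨r, Algebra.self_mem_adjoin_singleton ℝ r, rfl⟩, fun h => hxy ?_⟩
    have h' : ((x : ℝ) - t₀)⁻¹ = ((y : ℝ) - t₀)⁻¹ := h
    exact Subtype.ext (sub_left_injective (inv_injective h'))
  have htop := ContinuousMap.subalgebra_topologicalClosure_eq_top_of_separatesPoints _ hsep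
  have hmem : ∀ p : C(Icc c d, ℝ), p * r ∈ V := by
    intro p
    have hp : p ∈ closure (Algebra.adjoin ℝ {r} : Set C(Icc c d, ℝ)) := by
      rw [← Subalgebra.topologicalClosure_coe, htop]
      trivial
    have hcl : IsClosed {p : C(Icc c d, ℝ) | p * r ∈ V} :=
      hVc.preimage (continuous_mul_const r)
    exact hcl.closure_subset_iff.2 (fun p hp => hadj p hp r (hrV t₀)) hp
  refine eq_top_iff.2 fun f _ => ?_
  -- divide by `r`: `f = (f · (x - t₀)) · r`
  have : f = (f * ⟨fun x => (x : ℝ) - t₀, by fun_prop⟩) * r := by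
    ext x
    have h2 := kernel_ne_zero hd t₀ x
    simp only [hr, cauchyKernel, ContinuousMap.mul_apply, ContinuousMap.coe_mk]
    field_simp
  rw [this]
  exact hmem _

theorem stmt_5 (a b c d : ℝ) (hab : a < b) (hcd : c < d)
    (hdisj : Disjoint (closure (Ioo a b)) (closure (Ioo c d)))
    (h : ℝ → ℝ) (hh : Measurable h)
    (hh2 : IntegrableOn (fun x => (h x) ^ 2) (Ioo c d) volume)
    (ε : ℝ) (hε : 0 < ε) :
    ∃ g : ℝ → ℝ, ContDiff ℝ (⊤ : ℕ∞) g ∧ HasCompactSupport g ∧ tsupport g ⊆ Ioo a b ∧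
      Real.sqrt (∫ x in Ioo c d, (h x - truncHilbert (Ioo a b) g x) ^ 2) < ε := by
  rw [closure_Ioo hab.ne, closure_Ioo hcd.ne] at hdisj
  have hmem : MemLp h 2 (volume.restrict (Ioo c d)) :=
    (memLp_two_iff_integrable_sq hh.aestronglyMeasurable).2 hh2
  obtain ⟨f, -, hf, hfc, hfm⟩ := MemLp.exists_hasCompactSupport_integral_rpow_sub_le
    (p := 2) (μ := volume.restrict (Ioo c d)) (f := h) (by norm_num)
    (by simpa using hmem) (ε := ε ^ 2 / 8) (by positivity)
  have hf' : ∫ x in Ioo c d, (h x - f x) ^ 2 ≤ ε ^ 2 / 8 := by simpa using hf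
  have hfm' : MemLp f 2 (volume.restrict (Ioo c d)) := by simpa using hfm
  have hdc : 0 < d - c := sub_pos.2 hcd
  set δ := Real.sqrt (ε ^ 2 / (8 * (d - c))) with hδdef
  have hδ : 0 < δ := Real.sqrt_pos.2 (by positivity)
  have hδ2 : δ ^ 2 * (d - c) = ε ^ 2 / 8 := by
    rw [hδdef, Real.sq_sqrt (by positivity)]
    field_simp
  have hW : (⟨fun x : Icc c d => f x, by fun_prop⟩ : C(Icc c d, ℝ)) ∈
      approxSubmodule a b c d hdisj := by
    have hle : (Submodule.span ℝ (range (cauchyKernel hdisj))).topologicalClosure ≤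
        approxSubmodule a b c d hdisj := by
      refine Submodule.topologicalClosure_minimal _ (Submodule.span_le.2 ?_)
        (isClosed_approxSubmodule a b c d hdisj)
      rintro _ ⟨t, rfl⟩
      exact cauchyKernel_mem_approxSubmodule hdisj t
    exact hle (by rw [closedSpan_eq_top hab hdisj]; trivial)
  obtain ⟨g, hg, H⟩ := hW δ hδ
  refine ⟨g, hg.1, hg.2.1, hg.2.2, ?_⟩
  have hi1 : Integrable (fun x => (h x - f x) ^ 2) (volume.restrict (Ioo c d)) :=
    (hmem.sub hfm').integrable_sq
  have hi2 : Integrable (fun _ : ℝ => δ ^ 2) (volume.restrict (Ioo c d)) := integrable_const _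
  have hbound : ∫ x in Ioo c d, (h x - truncHilbert (Ioo a b) g x) ^ 2 ≤
      ∫ x in Ioo c d, (2 * (h x - f x) ^ 2 + 2 * δ ^ 2) := by
    refine integral_mono_of_nonneg (Filter.Eventually.of_forall fun x => sq_nonneg _)
      ((hi1.const_mul 2).add (hi2.const_mul 2)) ?_
    refine (ae_restrict_iff' measurableSet_Ioo).2 (Filter.Eventually.of_forall fun x hx => ?_)
    have hx' : |f x - truncHilbert (Ioo a b) g x| ≤ δ := H ⟨x, Ioo_subset_Icc_self hx⟩
    have hsq : (f x - truncHilbert (Ioo a b) g x) ^ 2 ≤ δ ^ 2 := sq_le_sq' (abs_le.1 hx').1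
      (abs_le.1 hx').2
    show (h x - truncHilbert (Ioo a b) g x) ^ 2 ≤ 2 * (h x - f x) ^ 2 + 2 * δ ^ 2
    nlinarith [sq_nonneg ((h x - f x) - (f x - truncHilbert (Ioo a b) g x))]
  rw [integral_add (hi1.const_mul 2) (hi2.const_mul 2), integral_const_mul, integral_const_mul,
    setIntegral_const, Real.volume_real_Ioo_of_le hcd.le, smul_eq_mul] at hbound
  rw [Real.sqrt_lt' hε]
  nlinarith [sq_pos_of_pos hε]
end

section
/- Let I, J ⊂ ℝ be nonempty bounded open intervals with disjoint closures. Then there exist constants σ > 0 and C > 1 (depending only on I and J) such that for every measurable g : ℝ → ℝ with ∫_J g(t)² dt < ∞, every ε > 0 and every δ ∈ (0,1), one has ( ∫_J ((P_δ g)(x))² dx )^{1/2} ≤ exp( C · (|ln ε| + 2) / δ^{σ} ) · ( ∫_I ((H_J g)(x))² dx )^{1/2} + (ε/2) · ‖g‖_{L²(J)}. -/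
open MeasureTheory Set

/-- `(P_δ g)(x) = ∫_J g(t) · δ/((x - t)² + δ²) dt`, the vertical derivative at height `δ`
of the Neumann harmonic extension of `g·χ_J`. -/
noncomputable def Pdelta (J : Set ℝ) (δ : ℝ) (g : ℝ → ℝ) (x : ℝ) : ℝ :=
  ∫ t in J, g t * (δ / ((x - t) ^ 2 + δ ^ 2))


/-!
For `z = x + iδ`, the Poisson kernel `δ / ((x - t)² + δ²)` is `-Im (1 / (z - t))`, so `Pdelta` at `x` is
`-Im M(z)`, where `M(z) = ∫_J g(t) / (z - t) dt`, and `truncHilbert` is the restriction of `M` to the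
real line. The theorem is thus a quantitative analytic continuation of `M` from `I` to the line at
height `δ`, and it is obtained by explicit interpolation of the Cauchy kernel rather than by harmonic
measure.

Let `m` be the centre of `I`, and let `p = m - iqδ` be a pole just below it. Interpolating
`1 / (z - t)` in `z` at real nodes `y j ∈ I` by rational functions with a pole only at `p` gives
(`kernel_identity`)

`1 / (z - t) = ∑ j, L j (z) / (y j - t) + 1 / (z - t) * ∏ i, (z - y i) (t - p) / ((t - y i) (z - p))`.

For `p` well chosen and nodes within `O(δ²)` of `m`, every factor of the remainder has modulus at most
`exp (-γ δ²)` (`ratio_bound`), and the `L j` are at most `(Q / δ²) ^ n * exp (2 * n)`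
(`prod_dist_bound`). Integrating against `g` bounds `Pdelta` by the values `truncHilbert (y j)` plus a
remainder controlled by the `L²` norm of `g` (`kernel_approx`, `Pdelta_pointwise`).

As the construction works for arbitrary well-separated nodes, they may depend on `g`: each `y j` is a
point of its own small interval where `|truncHilbert|` is at most its root mean square
(`exists_nodes`). It remains to choose `n` of order `(|log ε| + 2) / δ³` (`degree_choice`).
-/

/-! ### Kernel approximation by rational interpolation -/

/-- Interpolation of the Cauchy kernel `1 / (z - t)`, as a function of `z`, at the nodes `y j` by rational
functions with a single pole at `p`, with an explicit remainder. It is Lagrange interpolation of the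
polynomial `(X - p) ^ n` at the `n + 1` nodes `y 0, …, y (n - 1), t`, divided by
`(z - t) * (z - p) ^ n`. -/
theorem kernel_identity {F : Type*} [Field F] (n : ℕ) (y : ℕ → F) (z t p : F)
    (hy : Set.InjOn y (Finset.range n)) (ht : ∀ i < n, t - y i ≠ 0) (hz : z - t ≠ 0)
    (hp : z - p ≠ 0) :
    1 / (z - t) = (∑ j ∈ Finset.range n,
        ((y j - p) / (z - p)) ^ n * (∏ i ∈ (Finset.range n).erase j, (z - y i) / (y j - y i))
          * (1 / (y j - t)))
      + 1 / (z - t) * ∏ i ∈ Finset.range n, ((z - y i) * (t - p)) / ((t - y i) * (z - p)) := by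
  classical
  -- Lagrange interpolation of `(X - p) ^ n` at the `n + 1` nodes `y 0, …, y (n - 1), t`
  set v : ℕ → F := fun i => if i < n then y i else t with hv
  have hvn : v n = t := by simp [hv]
  have hvi : ∀ i < n, v i = y i := fun i hi => by simp [hv, hi]
  have hinj : Set.InjOn v (Finset.range (n + 1)) := by
    intro i hi j hj hij
    simp only [Finset.coe_range, Set.mem_Iio] at hi hj
    rcases Nat.lt_succ_iff_lt_or_eq.mp hi with hi | rfl
    · rcases Nat.lt_succ_iff_lt_or_eq.mp hj with hj | rfl
      · rw [hvi i hi, hvi j hj] at hij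
        exact hy (by simpa using hi) (by simpa using hj) hij
      · rw [hvi i hi, hvn] at hij
        exact absurd (sub_eq_zero.mpr hij.symm) (ht i hi)
    · rcases Nat.lt_succ_iff_lt_or_eq.mp hj with hj | rfl
      · rw [hvi j hj, hvn] at hij
        exact absurd (sub_eq_zero.mpr hij) (ht j hj)
      · rfl
  have hdeg : ((Polynomial.X - Polynomial.C p) ^ n).degree <
      ((Finset.range (n + 1)).card : WithBot ℕ) := by
    rw [Polynomial.degree_pow, Polynomial.degree_X_sub_C, Finset.card_range, nsmul_eq_mul, mul_one]
    exact_mod_cast Nat.lt_succ_self n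
  have key := congrArg (Polynomial.eval z) (Lagrange.eq_interpolate hinj hdeg)
  rw [Lagrange.interpolate_apply] at key
  simp only [Polynomial.eval_finsetSum, Polynomial.eval_mul, Polynomial.eval_C,
    Polynomial.eval_pow, Polynomial.eval_sub, Polynomial.eval_X, Lagrange.basis,
    Polynomial.eval_prod, Lagrange.basisDivisor] at key
  rw [Finset.sum_range_succ, hvn] at key
  have e1 : (Finset.range (n + 1)).erase n = Finset.range n := by
    ext i; simp; omega
  rw [e1] at key
  have e2 : ∏ i ∈ Finset.range n, (t - v i)⁻¹ * (z - v i)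
      = ∏ i ∈ Finset.range n, (t - y i)⁻¹ * (z - y i) :=
    Finset.prod_congr rfl fun i hi => by rw [hvi i (Finset.mem_range.mp hi)]
  have e3 : ∀ j ∈ Finset.range n, (v j - p) ^ n *
        ∏ i ∈ (Finset.range (n + 1)).erase j, (v j - v i)⁻¹ * (z - v i)
      = (z - t) * ((y j - p) ^ n * (∏ i ∈ (Finset.range n).erase j, (z - y i) / (y j - y i))
          * (1 / (y j - t))) := by
    intro j hj
    have hj' := Finset.mem_range.mp hj
    have : (Finset.range (n + 1)).erase j = insert n ((Finset.range n).erase j) := by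
      ext i; simp; omega
    rw [this, Finset.prod_insert (by simp), hvn, hvi j hj',
      Finset.prod_congr rfl (g := fun i => (z - y i) / (y j - y i))]
    · rw [one_div]; ring
    · intro i hi
      rw [hvi i (by simpa using (Finset.mem_erase.mp hi).2), div_eq_inv_mul]
  rw [e2, Finset.sum_congr rfl e3, ← Finset.mul_sum] at key
  have e4 : ∏ i ∈ Finset.range n, ((z - y i) * (t - p)) / ((t - y i) * (z - p))
      = ((t - p) ^ n * ∏ i ∈ Finset.range n, (t - y i)⁻¹ * (z - y i)) / (z - p) ^ n := by
    rw [eq_div_iff (pow_ne_zero _ hp)]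
    have : ∀ w : F, w ^ n = ∏ i ∈ Finset.range n, w := fun w => by simp
    rw [this, this, ← Finset.prod_mul_distrib, ← Finset.prod_mul_distrib]
    refine Finset.prod_congr rfl fun i hi => ?_
    have := ht i (Finset.mem_range.mp hi)
    field_simp
  have e5 : ∑ j ∈ Finset.range n,
        ((y j - p) / (z - p)) ^ n * (∏ i ∈ (Finset.range n).erase j, (z - y i) / (y j - y i))
          * (1 / (y j - t)) = (∑ j ∈ Finset.range n,
        (y j - p) ^ n * (∏ i ∈ (Finset.range n).erase j, (z - y i) / (y j - y i))
          * (1 / (y j - t))) / (z - p) ^ n := by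
    rw [Finset.sum_div]
    refine Finset.sum_congr rfl fun j _ => ?_
    rw [div_pow]; ring
  rw [e4, e5]
  have hpn := pow_ne_zero n hp
  generalize (z - p) ^ n = Z at *
  generalize ∑ j ∈ Finset.range n, (y j - p) ^ n *
    (∏ i ∈ (Finset.range n).erase j, (z - y i) / (y j - y i)) * (1 / (y j - t)) = A at *
  generalize ∏ i ∈ Finset.range n, (t - y i)⁻¹ * (z - y i) = B at *
  field_simp
  linear_combination key

/-- The product is `n ^ j / j! * n ^ k / k!` with `k = n - 1 - j`. Keeping the factorials is what makes the
bound exponential in `n`; bounding every factor by `n` would give `n ^ n`, too large for the final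
estimate. -/
theorem prod_dist_bound (n j : ℕ) (hj : j < n) :
    ∏ i ∈ (Finset.range n).erase j, ((n : ℝ) / |(j : ℝ) - i|) ≤ Real.exp (2 * n) := by
  obtain ⟨k, rfl⟩ : ∃ k, n = j + 1 + k := ⟨n - (j + 1), by omega⟩
  set N : ℝ := ((j + 1 + k : ℕ) : ℝ) with hN
  have hsplit : (Finset.range (j + 1 + k)).erase j
      = Finset.range j ∪ (Finset.range k).image (fun i => j + 1 + i) := by
    ext i
    simp only [Finset.mem_erase, Finset.mem_range, Finset.mem_union, Finset.mem_image]
    constructor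
    · rintro ⟨h1, h2⟩
      rcases lt_or_gt_of_ne h1 with h | h
      · exact Or.inl h
      · exact Or.inr ⟨i - (j + 1), by omega, by omega⟩
    · rintro (h | ⟨l, hl, rfl⟩) <;> omega
  have hdis : Disjoint (Finset.range j) ((Finset.range k).image (fun i => j + 1 + i)) := by
    rw [Finset.disjoint_left]
    intro i hi
    simp only [Finset.mem_range, Finset.mem_image] at *
    rintro ⟨l, _, rfl⟩; omega
  rw [hsplit, Finset.prod_union hdis, Finset.prod_image (by intro a _ b _ h; simpa using h)]
  have h1 : ∏ i ∈ Finset.range j, (N / |(j : ℝ) - i|) = N ^ j / (j.factorial : ℝ) := by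
    rw [Finset.prod_div_distrib, Finset.prod_const, Finset.card_range]
    congr 1
    rw [← Finset.prod_range_add_one_eq_factorial, ← Finset.prod_range_reflect, Nat.cast_prod]
    refine Finset.prod_congr rfl fun i hi => ?_
    have hi := Finset.mem_range.mp hi
    have : ((j - 1 - i : ℕ) : ℝ) = (j : ℝ) - 1 - i := by
      rw [Nat.cast_sub (by omega), Nat.cast_sub (by omega)]; simp
    rw [this]
    push_cast
    rw [abs_of_nonneg (by linarith [(Nat.cast_nonneg i : (0:ℝ) ≤ i)])]
    ring
  have h2 : ∏ i ∈ Finset.range k, (N / |(j : ℝ) - ((j + 1 + i : ℕ) : ℝ)|)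
      = N ^ k / (k.factorial : ℝ) := by
    rw [Finset.prod_div_distrib, Finset.prod_const, Finset.card_range]
    congr 1
    rw [← Finset.prod_range_add_one_eq_factorial, Nat.cast_prod]
    refine Finset.prod_congr rfl fun i hi => ?_
    push_cast
    rw [abs_sub_comm, abs_of_nonneg (by linarith [(Nat.cast_nonneg i : (0:ℝ) ≤ i)])]
    ring
  rw [h1, h2, two_mul, Real.exp_add]
  have hN0 : 0 ≤ N := Nat.cast_nonneg _
  exact mul_le_mul (Real.pow_div_factorial_le_exp N hN0 j) (Real.pow_div_factorial_le_exp N hN0 k)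
    (by positivity) (by positivity)

/-! ### Nodes with small data -/

/-- A point of the subinterval where `|F|` is at most its root mean square there, hence at most the
`L²` norm over `s` divided by `√h`. -/
theorem exists_good_node (F : ℝ → ℝ) (s : Set ℝ) (u h : ℝ) (hh : 0 < h)
    (hs : Ioo u (u + h) ⊆ s) (hF : IntegrableOn (fun x => F x ^ 2) s) :
    ∃ y ∈ Ioo u (u + h), |F y| ≤ Real.sqrt (∫ x in s, F x ^ 2) / Real.sqrt h := by
  have hvol : volume (Ioo u (u + h)) = ENNReal.ofReal h := by simp [Real.volume_Ioo]
  obtain ⟨y, hy, hle⟩ := exists_le_setAverage (μ := volume) (s := Ioo u (u + h))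
    (f := fun x => F x ^ 2) (by simp [hvol, hh]) (by simp [hvol]) (hF.mono_set hs)
  refine ⟨y, hy, ?_⟩
  rw [setAverage_eq, measureReal_def, hvol, ENNReal.toReal_ofReal hh.le, smul_eq_mul] at hle
  have hmono : ∫ x in Ioo u (u + h), F x ^ 2 ≤ ∫ x in s, F x ^ 2 :=
    setIntegral_mono_set hF (Filter.Eventually.of_forall fun x => sq_nonneg _)
      (Filter.Eventually.of_forall hs)
  rw [← Real.sqrt_div' _ hh.le]
  refine Real.le_sqrt_of_sq_le ?_
  rw [sq_abs, div_eq_inv_mul]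
  exact hle.trans (by gcongr)

theorem exists_nodes (F : ℝ → ℝ) (s : Set ℝ) (m τ : ℝ) (n : ℕ) (hn : 0 < n) (hτ : 0 < τ)
    (hs : Ioo m (m + τ) ⊆ s) (hF : IntegrableOn (fun x => F x ^ 2) s) :
    ∃ y : ℕ → ℝ, (∀ i < n, y i ∈ Ioo m (m + τ)) ∧
      (∀ i < n, ∀ j < n, τ / (2 * n) * |(j : ℝ) - i| ≤ |y j - y i|) ∧
      ∀ j < n, |F (y j)| ≤ Real.sqrt (∫ x in s, F x ^ 2) / Real.sqrt (τ / (2 * n)) := by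
  have hn0 : (0 : ℝ) < n := by exact_mod_cast hn
  obtain ⟨h, hh⟩ : ∃ h, h = τ / (2 * n) := ⟨_, rfl⟩
  have hh0 : 0 < h := by rw [hh]; positivity
  have hnh : 2 * n * h = τ := by rw [hh]; field_simp
  rw [← hh]
  have hend : ∀ j : ℕ, j < n → 2 * j * h + h ≤ τ := by
    intro j hj
    have hj' : (j : ℝ) + 1 ≤ n := by exact_mod_cast hj
    rw [← hnh]; nlinarith
  have hstart : ∀ j : ℕ, 0 ≤ 2 * j * h := fun j => by positivity
  -- one node in each of `n` intervals of length `h`, separated by gaps of length `h`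
  have hnode : ∀ j : ℕ, ∃ y : ℝ, j < n → (y ∈ Ioo (m + 2 * j * h) (m + 2 * j * h + h) ∧
      |F y| ≤ Real.sqrt (∫ x in s, F x ^ 2) / Real.sqrt h) := by
    intro j
    by_cases hj : j < n
    · have h1 := hend j hj
      have h2 := hstart j
      obtain ⟨y, hy, hy'⟩ := exists_good_node F s (m + 2 * j * h) h hh0
        ((Ioo_subset_Ioo (by linarith) (by linarith)).trans hs) hF
      exact ⟨y, fun _ => ⟨hy, hy'⟩⟩
    · exact ⟨0, fun h => absurd h hj⟩
  choose y hy using hnode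
  have hsep' : ∀ i j : ℕ, i < j → j < n → h * ((j : ℝ) - i) ≤ y j - y i := by
    intro i j hij hj
    obtain ⟨⟨h1, -⟩, -⟩ := hy j hj
    obtain ⟨⟨-, h2⟩, -⟩ := hy i (hij.trans hj)
    have hij' : (i : ℝ) + 1 ≤ j := by exact_mod_cast hij
    nlinarith
  refine ⟨y, fun j hj => ?_, fun i hi j hj => ?_, fun j hj => (hy j hj).2⟩
  · obtain ⟨⟨h1, h2⟩, -⟩ := hy j hj
    have h3 := hend j hj
    have h4 := hstart j
    exact ⟨by linarith, by linarith⟩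
  · rcases lt_trichotomy i j with hij | rfl | hij
    · have hij' : (i : ℝ) < j := by exact_mod_cast hij
      rw [abs_of_pos (by linarith : (0 : ℝ) < j - i)]
      exact (hsep' i j hij hj).trans (le_abs_self _)
    · simp
    · have hij' : (j : ℝ) < i := by exact_mod_cast hij
      rw [abs_sub_comm, abs_of_pos (by linarith : (0 : ℝ) < i - j), abs_sub_comm]
      exact (hsep' j i hij hi).trans (le_abs_self _)

/-- The second part is Cauchy–Schwarz, from the nonnegativity of the integral of `((d - c) |g| - ∫ |g|) ^ 2`. -/
theorem integral_abs_le (g : ℝ → ℝ) (hg : Measurable g) (c d : ℝ) (hcd : c < d)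
    (h2 : IntegrableOn (fun t => g t ^ 2) (Ioo c d)) :
    IntegrableOn (fun t => |g t|) (Ioo c d) ∧
    ∫ t in Ioo c d, |g t| ≤ Real.sqrt (d - c) * Real.sqrt (∫ t in Ioo c d, g t ^ 2) := by
  have hconst : ∀ k : ℝ, IntegrableOn (fun _ : ℝ => k) (Ioo c d) := fun k =>
    integrableOn_const (by simp)
  have hi : IntegrableOn (fun t => |g t|) (Ioo c d) := by
    refine Integrable.mono' ((hconst 1).add h2) hg.abs.aestronglyMeasurable ?_
    refine Filter.Eventually.of_forall fun t => ?_
    simp only [Pi.add_apply, Real.norm_eq_abs, abs_abs]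
    nlinarith [sq_nonneg (|g t| - 1), sq_abs (g t), abs_nonneg (g t)]
  refine ⟨hi, ?_⟩
  have hl : (0 : ℝ) < d - c := by linarith
  rw [← Real.sqrt_mul hl.le]
  refine Real.le_sqrt_of_sq_le ?_
  set S := ∫ t in Ioo c d, |g t| with hS
  -- integrate the nonnegative function `((d - c) * |g| - S) ^ 2`
  have h0 : 0 ≤ ∫ t in Ioo c d, ((d - c) ^ 2 * g t ^ 2 - 2 * (d - c) * S * |g t| + S ^ 2) := by
    refine integral_nonneg fun t => ?_
    simp only [Pi.zero_apply]
    nlinarith [sq_nonneg ((d - c) * |g t| - S), sq_abs (g t)]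
  have i1 : Integrable (fun t => (d - c) ^ 2 * g t ^ 2) (volume.restrict (Ioo c d)) :=
    h2.const_mul _
  have i2 : Integrable (fun t => 2 * (d - c) * S * |g t|) (volume.restrict (Ioo c d)) :=
    hi.const_mul _
  have i3 : Integrable (fun t => (d - c) ^ 2 * g t ^ 2 - 2 * (d - c) * S * |g t|)
    (volume.restrict (Ioo c d)) := i1.sub i2
  rw [integral_add i3 (hconst _), integral_sub i1 i2, integral_const_mul, integral_const_mul,
    setIntegral_const, measureReal_def, Real.volume_Ioo, ENNReal.toReal_ofReal hl.le,
    ← hS, smul_eq_mul] at h0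
  have h3 : 0 ≤ (d - c) * ((d - c) * (∫ t in Ioo c d, g t ^ 2) - S ^ 2) := by linarith
  have := nonneg_of_mul_nonneg_right h3 hl
  linarith

/-! ### Geometry of the remainder -/

/-- The remainder factor `|z - y|² |t - p|² / (|t - y|² |z - p|²)` is at most `1 - γ δ²`. Positions are
relative to the centre `m` of the interval of data: `z = X + iδ`, the pole is `p = -iqδ`, and the node `y` is
within `τ₀ δ²` of the centre. For `y = 0` the gap comes from `z` lying above, and `p` below, the real
line; the closeness of `y` to `0` makes its effect a perturbation of this gap. -/
theorem ratio_bound (r D : ℝ) (hr : 0 < r) (hD : 1 ≤ D) (hrD : r ≤ D) :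
    ∃ τ₀ γ q : ℝ, 0 < τ₀ ∧ τ₀ ≤ 1 ∧ τ₀ ≤ r ∧ 0 < γ ∧ 0 < q ∧ q ≤ 1 ∧
      ∀ δ ∈ Ioo (0 : ℝ) 1, ∀ X T y : ℝ, |X| ≤ D → r ≤ |T| → |T| ≤ D → 0 ≤ y →
        y ≤ τ₀ * δ ^ 2 →
        ((X - y) ^ 2 + δ ^ 2) * (T ^ 2 + (q * δ) ^ 2) ≤
          (1 - γ * δ ^ 2) * ((T - y) ^ 2 * (X ^ 2 + (δ + q * δ) ^ 2)) := by
  set q := r ^ 2 / (D ^ 2 + 1) with hq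
  have hq0 : 0 < q := by positivity
  have hq1 : q ≤ 1 := by
    rw [hq, div_le_one (by positivity)]; nlinarith
  have hqe : q * (D ^ 2 + 1) = r ^ 2 := by rw [hq]; field_simp
  set G := q * r ^ 2 with hG
  have hG0 : 0 < G := by positivity
  set τ₀ := min (min 1 r) (G / (10 * D * (D ^ 2 + 4))) with hτ
  set V := (D + 1) ^ 2 * (D ^ 2 + 4) with hV
  have hV0 : 0 < V := by positivity
  have hτ0 : 0 < τ₀ := by
    refine lt_min (lt_min one_pos hr) ?_
    positivity
  have hτ1 : τ₀ ≤ 1 := (min_le_left _ _).trans (min_le_left _ _)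
  have hτr : τ₀ ≤ r := (min_le_left _ _).trans (min_le_right _ _)
  have hτG : τ₀ * (10 * D * (D ^ 2 + 4)) ≤ G := by
    rw [← le_div_iff₀ (by positivity)]; exact min_le_right _ _
  -- `G δ²` is the gap at `y = 0`; half of it survives the perturbation, and `V` bounds the right side
  refine ⟨τ₀, G / (2 * V), q, hτ0, hτ1, hτr, by positivity, hq0, hq1, ?_⟩
  rintro δ ⟨hδ0, hδ1⟩ X T y hX hrT hT hy0 hy
  have hδ2 : 0 < δ ^ 2 := by positivity
  have hδ21 : δ ^ 2 ≤ 1 := by nlinarith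
  have hX2 : X ^ 2 ≤ D ^ 2 := by rw [← sq_abs]; gcongr
  have hT2 : T ^ 2 ≤ D ^ 2 := by rw [← sq_abs]; gcongr
  have hrT2 : r ^ 2 ≤ T ^ 2 := by rw [← sq_abs T]; gcongr
  have hy1 : y ≤ 1 := hy.trans (by nlinarith)
  obtain ⟨hX1, hX3⟩ := abs_le.mp hX
  obtain ⟨hT1, hT3⟩ := abs_le.mp hT
  have hκ : (q * δ) ^ 2 ≤ 1 := by
    rw [mul_pow]; exact mul_le_one₀ (by nlinarith) hδ2.le hδ21
  have hδκ : (δ + q * δ) ^ 2 ≤ 4 := by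
    have h1 : q * δ ≤ 1 := mul_le_one₀ hq1 hδ0.le hδ1.le
    have h2 := mul_pos hq0 hδ0
    calc (δ + q * δ) ^ 2 ≤ 2 ^ 2 := by gcongr; linarith
      _ = 4 := by norm_num
  have hDp : 0 < D := by linarith
  -- the gap for a node at the centre
  have main : (X ^ 2 + δ ^ 2) * (T ^ 2 + (q * δ) ^ 2) + G * δ ^ 2
      ≤ T ^ 2 * (X ^ 2 + (δ + q * δ) ^ 2) := by
    have e : T ^ 2 * (X ^ 2 + (δ + q * δ) ^ 2) - (X ^ 2 + δ ^ 2) * (T ^ 2 + (q * δ) ^ 2)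
        = q * δ ^ 2 * (2 * T ^ 2 + q * T ^ 2 - q * (X ^ 2 + δ ^ 2)) := by ring
    have h1 : q * (X ^ 2 + δ ^ 2) ≤ r ^ 2 := by rw [← hqe]; gcongr
    have h2 : r ^ 2 ≤ 2 * T ^ 2 + q * T ^ 2 - q * (X ^ 2 + δ ^ 2) := by
      linarith [mul_nonneg hq0.le (sq_nonneg T)]
    have h3 := mul_le_mul_of_nonneg_left h2 (by positivity : 0 ≤ q * δ ^ 2)
    rw [← e] at h3
    rw [hG]; linarith
  have hyX := mul_nonneg hy0 (by linarith : 0 ≤ X + D)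
  have hyT := mul_nonneg hy0 (by linarith : 0 ≤ D - T)
  have hyD := mul_nonneg hy0 (by linarith : 0 ≤ D - y)
  have h1 : ((X - y) ^ 2 + δ ^ 2) ≤ X ^ 2 + δ ^ 2 + 3 * D * y := by linarith
  have h2 : T ^ 2 - 2 * D * y ≤ (T - y) ^ 2 := by linarith [sq_nonneg y]
  have h3 : ((X - y) ^ 2 + δ ^ 2) * (T ^ 2 + (q * δ) ^ 2)
      ≤ (X ^ 2 + δ ^ 2) * (T ^ 2 + (q * δ) ^ 2) + 3 * D * y * (D ^ 2 + 4) := by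
    calc _ ≤ (X ^ 2 + δ ^ 2 + 3 * D * y) * (T ^ 2 + (q * δ) ^ 2) := by gcongr
      _ = (X ^ 2 + δ ^ 2) * (T ^ 2 + (q * δ) ^ 2) + 3 * D * y * (T ^ 2 + (q * δ) ^ 2) := by ring
      _ ≤ _ := by gcongr; linarith
  have h4 : T ^ 2 * (X ^ 2 + (δ + q * δ) ^ 2) - 2 * D * y * (D ^ 2 + 4)
      ≤ (T - y) ^ 2 * (X ^ 2 + (δ + q * δ) ^ 2) := by
    have := mul_le_mul_of_nonneg_right h2 (by positivity : 0 ≤ X ^ 2 + (δ + q * δ) ^ 2)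
    have h5 : 2 * D * y * (X ^ 2 + (δ + q * δ) ^ 2) ≤ 2 * D * y * (D ^ 2 + 4) := by gcongr
    linarith
  have h5 : 10 * D * y * (D ^ 2 + 4) ≤ G * δ ^ 2 := by
    calc 10 * D * y * (D ^ 2 + 4) ≤ 10 * D * (τ₀ * δ ^ 2) * (D ^ 2 + 4) := by gcongr
      _ = τ₀ * (10 * D * (D ^ 2 + 4)) * δ ^ 2 := by ring
      _ ≤ _ := by gcongr
  have hU : (T - y) ^ 2 * (X ^ 2 + (δ + q * δ) ^ 2) ≤ V := by
    rw [hV]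
    have : (T - y) ^ 2 ≤ (D + 1) ^ 2 := by
      apply sq_le_sq'  <;> linarith
    gcongr
  set U := (T - y) ^ 2 * (X ^ 2 + (δ + q * δ) ^ 2)
  have h6 : G / (2 * V) * δ ^ 2 * U ≤ G * δ ^ 2 / 2 := by
    calc G / (2 * V) * δ ^ 2 * U ≤ G / (2 * V) * δ ^ 2 * V := by gcongr
      _ = _ := by field_simp
  linarith

/-- On `J`, the Poisson kernel at height `δ` is within `exp (-γ δ² n) / δ` of a combination of `n` Cauchy
kernels with poles at the nodes `y j`, with coefficients of size at most
`(Q / δ²) ^ n * exp (2 * n)`.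
The nodes may be any points of `[m, m + τ₀ δ²]` that are spread out as in the separation hypothesis. -/
theorem kernel_approx (m r D : ℝ) (hr : 0 < r) (hD : 1 ≤ D) (hrD : r ≤ D) :
    ∃ τ₀ γ Q : ℝ, 0 < τ₀ ∧ τ₀ ≤ 1 ∧ τ₀ ≤ r ∧ 0 < γ ∧ 1 ≤ Q ∧ 2 ≤ Q * τ₀ ∧
      ∀ δ ∈ Ioo (0 : ℝ) 1, ∀ n : ℕ, 0 < n → ∀ y : ℕ → ℝ,
        (∀ i < n, m ≤ y i ∧ y i ≤ m + τ₀ * δ ^ 2) →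
        (∀ i < n, ∀ j < n, τ₀ * δ ^ 2 / (2 * n) * |(j : ℝ) - i| ≤ |y j - y i|) →
        ∀ x : ℝ, r ≤ |x - m| → |x - m| ≤ D →
        ∃ β : ℕ → ℝ, (∀ j < n, |β j| ≤ (Q / δ ^ 2) ^ n * Real.exp (2 * n)) ∧
          ∀ t : ℝ, r ≤ |t - m| → |t - m| ≤ D →
            |δ / ((x - t) ^ 2 + δ ^ 2) - ∑ j ∈ Finset.range n, β j / (y j - t)| ≤
              Real.exp (-(γ * δ ^ 2 * n)) / δ := by
  obtain ⟨τ₀, γ, q, hτ0, hτ1, hτr, hγ, hq0, hq1, hratio⟩ := ratio_bound r D hr hD hrD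
  set Q := 2 * (D + 2) / τ₀ with hQ
  have hQτ : Q * τ₀ = 2 * (D + 2) := by rw [hQ]; field_simp
  have hQ1 : 1 ≤ Q := by rw [hQ, le_div_iff₀ hτ0]; linarith
  refine ⟨τ₀, γ / 2, Q, hτ0, hτ1, hτr, by positivity, hQ1, by linarith, ?_⟩
  rintro δ hδ n hn y hy hsep x hrx hxD
  have hδ0 := hδ.1
  have hδ1 := hδ.2
  have hδ2 : 0 < δ ^ 2 := by positivity
  have hδ21 : δ ^ 2 < 1 := by nlinarith
  have hn0 : (0 : ℝ) < n := by exact_mod_cast hn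
  have hτδ : τ₀ * δ ^ 2 < τ₀ := by nlinarith
  set z : ℂ := ⟨x, δ⟩ with hz
  set p : ℂ := ⟨m, -(q * δ)⟩ with hp
  have hqδ := mul_pos hq0 hδ0
  have nzp : ‖z - p‖ ^ 2 = (x - m) ^ 2 + (δ + q * δ) ^ 2 := by
    rw [Complex.sq_norm, Complex.normSq_apply]; simp [hz, hp]; ring
  have nzy : ∀ s : ℝ, ‖z - (s : ℂ)‖ ^ 2 = (x - s) ^ 2 + δ ^ 2 := fun s => by
    rw [Complex.sq_norm, Complex.normSq_apply]; simp [hz]; ring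
  have ntp : ∀ s : ℝ, ‖(s : ℂ) - p‖ ^ 2 = (s - m) ^ 2 + (q * δ) ^ 2 := fun s => by
    rw [Complex.sq_norm, Complex.normSq_apply]; simp [hp]; ring
  have hzp : z - p ≠ 0 := by
    intro h
    rw [h, norm_zero] at nzp
    have : 0 < (x - m) ^ 2 + (δ + q * δ) ^ 2 := by positivity
    linarith
  have hzps : 0 < ‖z - p‖ := norm_pos_iff.mpr hzp
  have hinj : Set.InjOn (fun i => ((y i : ℝ) : ℂ)) (Finset.range n) := by
    intro i hi j hj hij
    simp only [Finset.coe_range, Set.mem_Iio] at hi hj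
    have hij : y i = y j := Complex.ofReal_injective hij
    have := hsep i hi j hj
    rw [hij, sub_self, abs_zero] at this
    have h1 : |(j : ℝ) - i| ≤ 0 := by
      by_contra h
      push Not at h
      have : 0 < τ₀ * δ ^ 2 / (2 * n) * |(j : ℝ) - i| := by positivity
      linarith
    have h2 := sub_eq_zero.mp (abs_nonpos_iff.mp h1)
    exact_mod_cast h2.symm
  set Lc : ℕ → ℂ := fun j => (((y j : ℂ) - p) / (z - p)) ^ n *
    (∏ i ∈ (Finset.range n).erase j, (z - (y i : ℂ)) / ((y j : ℂ) - y i)) with hLc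
  refine ⟨fun j => -(Lc j).im, ?_, ?_⟩
  · intro j hj
    rw [abs_neg]
    refine (Complex.abs_im_le_norm _).trans ?_
    have hQδ : 1 ≤ Q / δ ^ 2 := by rw [le_div_iff₀ hδ2]; linarith
    have b1 : ‖(((y j : ℂ) - p) / (z - p)) ^ n‖ ≤ 1 := by
      rw [norm_pow, norm_div]
      refine pow_le_one₀ (by positivity) ?_
      rw [div_le_one hzps, ← pow_le_pow_iff_left₀ (norm_nonneg _) (norm_nonneg _) two_ne_zero,
        nzp, ntp]
      obtain ⟨h1, h2⟩ := hy j hj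
      have h3 : (y j - m) ^ 2 ≤ (x - m) ^ 2 := by
        rw [← sq_abs (x - m)]
        have : 0 ≤ y j - m := by linarith
        have : y j - m ≤ |x - m| := by linarith
        gcongr
      have h4 : (q * δ) ^ 2 ≤ (δ + q * δ) ^ 2 := by gcongr; linarith
      linarith
    have b2 : ‖∏ i ∈ (Finset.range n).erase j, (z - (y i : ℂ)) / ((y j : ℂ) - y i)‖
        ≤ (Q / δ ^ 2) ^ n * Real.exp (2 * n) := by
      rw [norm_prod]
      calc ∏ i ∈ (Finset.range n).erase j, ‖(z - (y i : ℂ)) / ((y j : ℂ) - y i)‖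
          ≤ ∏ i ∈ (Finset.range n).erase j, (Q / δ ^ 2 * (n / |(j : ℝ) - i|)) := by
            refine Finset.prod_le_prod (fun _ _ => norm_nonneg _) fun i hi => ?_
            obtain ⟨hij, hi⟩ := Finset.mem_erase.mp hi
            have hi := Finset.mem_range.mp hi
            have hd : 0 < |(j : ℝ) - i| := by
              rw [abs_pos, sub_ne_zero]; exact_mod_cast hij.symm
            have e1 : ‖z - (y i : ℂ)‖ ≤ D + 2 := by
              rw [← pow_le_pow_iff_left₀ (norm_nonneg _) (by positivity) two_ne_zero, nzy]
              obtain ⟨h1, h2⟩ := hy i hi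
              obtain ⟨h3, h4⟩ := abs_le.mp hxD
              have : (x - y i) ^ 2 ≤ (D + 1) ^ 2 := by apply sq_le_sq' <;> linarith
              nlinarith
            have e2 := hsep i hi j hj
            rw [norm_div, ← Complex.ofReal_sub, Complex.norm_real, Real.norm_eq_abs]
            calc ‖z - (y i : ℂ)‖ / |y j - y i|
                ≤ (D + 2) / (τ₀ * δ ^ 2 / (2 * n) * |(j : ℝ) - i|) := by gcongr
              _ = Q / δ ^ 2 * (n / |(j : ℝ) - i|) := by rw [hQ]; field_simp
        _ = (Q / δ ^ 2) ^ (n - 1) * ∏ i ∈ (Finset.range n).erase j, (n / |(j : ℝ) - i|) := by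
            rw [Finset.prod_mul_distrib, Finset.prod_const, Finset.card_erase_of_mem
              (Finset.mem_range.mpr hj), Finset.card_range]
        _ ≤ (Q / δ ^ 2) ^ n * Real.exp (2 * n) := by
            exact mul_le_mul (pow_le_pow_right₀ hQδ (Nat.sub_le n 1)) (prod_dist_bound n j hj)
              (Finset.prod_nonneg fun _ _ => by positivity) (by positivity)
    rw [hLc, norm_mul]
    calc _ ≤ 1 * ((Q / δ ^ 2) ^ n * Real.exp (2 * n)) := by gcongr
      _ = _ := one_mul _
  · intro t hrt htD
    have hty : ∀ i < n, (t : ℂ) - y i ≠ 0 := by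
      intro i hi h
      have h : t - y i = 0 := by exact_mod_cast h
      obtain ⟨h1, h2⟩ := hy i hi
      have : |t - m| < r := by rw [abs_lt]; constructor <;> linarith
      linarith
    have hδn : δ ≤ ‖z - (t : ℂ)‖ := by
      have := Complex.abs_im_le_norm (z - (t : ℂ))
      simpa [hz, abs_of_pos hδ0] using this
    have hzt : z - (t : ℂ) ≠ 0 := norm_pos_iff.mp (hδ0.trans_le hδn)
    have key := kernel_identity n (fun i => ((y i : ℝ) : ℂ)) z t p hinj hty hzt hzp
    have kim : δ / ((x - t) ^ 2 + δ ^ 2) = -(1 / (z - (t : ℂ))).im := by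
      rw [one_div, Complex.inv_im, ← Complex.sq_norm, nzy]; simp [hz]; ring
    have sim : ∑ j ∈ Finset.range n, -(Lc j).im / (y j - t)
        = -(∑ j ∈ Finset.range n, Lc j * (1 / ((y j : ℂ) - t))).im := by
      rw [Complex.im_sum, ← Finset.sum_neg_distrib]
      refine Finset.sum_congr rfl fun j _ => ?_
      have : (1 / ((y j : ℂ) - t)) = ((1 / (y j - t) : ℝ) : ℂ) := by push_cast; rfl
      rw [this, Complex.im_mul_ofReal]; ring
    set R := 1 / (z - (t : ℂ)) *
      ∏ i ∈ Finset.range n, ((z - (y i : ℂ)) * (t - p)) / ((t - (y i : ℂ)) * (z - p)) with hR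
    have hdiff : δ / ((x - t) ^ 2 + δ ^ 2) - ∑ j ∈ Finset.range n, -(Lc j).im / (y j - t)
        = -R.im := by
      rw [kim, sim, key, Complex.add_im]; ring
    rw [hdiff, abs_neg]
    refine (Complex.abs_im_le_norm _).trans ?_
    have hexp : Real.exp (-(γ / 2 * δ ^ 2 * n)) = ∏ i ∈ Finset.range n,
        Real.exp (-(γ / 2 * δ ^ 2)) := by
      rw [Finset.prod_const, Finset.card_range, ← Real.exp_nat_mul]; congr 1; ring
    rw [hR, norm_mul, norm_prod, hexp, div_eq_mul_inv _ δ, mul_comm, norm_div, norm_one, one_div]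
    gcongr with i hi
    have hi := Finset.mem_range.mp hi
    obtain ⟨h1, h2⟩ := hy i hi
    have hden : 0 < ‖((t : ℂ) - (y i : ℂ)) * (z - p)‖ :=
      norm_pos_iff.mpr (mul_ne_zero (hty i hi) hzp)
    rw [norm_div, div_le_iff₀ hden,
      ← pow_le_pow_iff_left₀ (norm_nonneg _) (by positivity) two_ne_zero, norm_mul, norm_mul,
      mul_pow, mul_pow, mul_pow, nzy, ntp, nzp, ← Complex.ofReal_sub, Complex.norm_real,
      Real.norm_eq_abs, sq_abs, ← Real.exp_nat_mul]
    have := hratio δ hδ (x - m) (t - m) (y i - m) hxD hrt htD (by linarith) (by linarith)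
    rw [sub_sub_sub_cancel_right, sub_sub_sub_cancel_right] at this
    refine this.trans ?_
    gcongr
    have := Real.add_one_le_exp (-(γ * δ ^ 2))
    have e : ((2 : ℕ) : ℝ) * -(γ / 2 * δ ^ 2) = -(γ * δ ^ 2) := by push_cast; ring
    rw [e]; linarith

/-! ### Choice of the degree -/

/-- A number of nodes of order `(|log ε| + 2) / δ³` makes the remainder at most `ε / 2`, while the
accumulated coefficients, of size `exp (O(n / δ))`, stay below the exponential in the theorem with
`σ = 4`. -/
theorem degree_choice (γ Q l : ℝ) (hγ : 0 < γ) (hQ : 1 ≤ Q) (hl : 0 < l) :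
    ∃ C : ℝ, 1 < C ∧ ∀ ε : ℝ, 0 < ε → ∀ δ ∈ Ioo (0 : ℝ) 1, ∃ n : ℕ, 0 < n ∧
      l * (Real.exp (-(γ * δ ^ 2 * n)) / δ) ≤ ε / 2 ∧
      Real.sqrt l * (n * ((Q / δ ^ 2) ^ n * Real.exp (2 * n)) * (n * Q / δ ^ 2)) ≤
        Real.exp (C * (|Real.log ε| + 2) / δ ^ 4) := by
  set v := |Real.log l| with hv
  have hv0 : 0 ≤ v := abs_nonneg _
  set K := (v + 2) / γ with hK
  have hK0 : 0 < K := by positivity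
  have hKγ : K * γ = v + 2 := by rw [hK]; field_simp
  refine ⟨(v + 2 * Q + 8) * (K + 1), by nlinarith, ?_⟩
  rintro ε hε δ ⟨hδ0, hδ1⟩
  set L := |Real.log ε| with hL
  have hL0 : 0 ≤ L := abs_nonneg _
  set n := ⌈K * (L + 2) / δ ^ 3⌉₊ with hn
  have hn1 : K * (L + 2) / δ ^ 3 ≤ n := Nat.le_ceil _
  have hn2 : (n : ℝ) < K * (L + 2) / δ ^ 3 + 1 := Nat.ceil_lt_add_one (by positivity)
  have hnpos : 0 < n := Nat.ceil_pos.mpr (by positivity)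
  have hn1' : (1 : ℝ) ≤ n := by exact_mod_cast hnpos
  have hinv : 1 ≤ 1 / δ := by rw [le_div_iff₀ hδ0]; linarith
  have hinvexp : 1 / δ ≤ Real.exp (1 / δ) := by
    linarith [Real.add_one_le_exp (1 / δ)]
  have hlexp : ∀ s : ℝ, 0 < s → s ≤ Real.exp |Real.log s| := fun s hs => by
    calc s = Real.exp (Real.log s) := (Real.exp_log hs).symm
      _ ≤ _ := Real.exp_le_exp.mpr (le_abs_self _)
  refine ⟨n, hnpos, ?_, ?_⟩
  · have h1 : v + 1 / δ + L + 1 ≤ γ * δ ^ 2 * n := by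
      have h2 : γ * δ ^ 2 * (K * (L + 2) / δ ^ 3) ≤ γ * δ ^ 2 * n := by gcongr
      have h3 : γ * δ ^ 2 * (K * (L + 2) / δ ^ 3) = (v + 2) * (L + 2) * (1 / δ) := by
        rw [← hKγ]; field_simp
      have h4 : (v + L + 2) ≤ (v + 2) * (L + 2) - 1 := by nlinarith [mul_nonneg hv0 hL0]
      have h5 : (v + L + 2) * 1 ≤ ((v + 2) * (L + 2) - 1) * (1 / δ) := by gcongr; linarith
      linarith
    have h2 : l * (Real.exp (-(γ * δ ^ 2 * n)) / δ)
        ≤ Real.exp v * (Real.exp (-(v + 1 / δ + L + 1)) * Real.exp (1 / δ)) := by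
      rw [div_eq_mul_one_div]
      gcongr
      exact hlexp l hl
    refine h2.trans ?_
    rw [← Real.exp_add, ← Real.exp_add]
    have h3 : v + (-(v + 1 / δ + L + 1) + 1 / δ) = -L + -1 := by ring
    rw [h3, Real.exp_add]
    have h4 : Real.exp (-L) ≤ ε := by
      calc Real.exp (-L) ≤ Real.exp (Real.log ε) :=
            Real.exp_le_exp.mpr (neg_abs_le _)
        _ = ε := Real.exp_log hε
    have h5 : Real.exp (-1) ≤ 1 / 2 := by
      rw [Real.exp_neg, ← one_div]
      exact one_div_le_one_div_of_le two_pos (by linarith [Real.add_one_le_exp (1 : ℝ)])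
    calc _ ≤ ε * (1 / 2) := by gcongr
      _ = ε / 2 := by ring
  · have s1 : Real.sqrt l ≤ Real.exp v := by
      rw [Real.sqrt_le_left (Real.exp_pos _).le, ← Real.exp_nat_mul]
      refine (hlexp l hl).trans (Real.exp_le_exp.mpr ?_)
      push_cast; linarith
    have s2 : (n : ℝ) ≤ Real.exp n := by linarith [Real.add_one_le_exp (n : ℝ)]
    have s3 : Q / δ ^ 2 ≤ Real.exp ((Q + 2) / δ) := by
      have : (Q + 2) / δ = Q * (1 / δ) + 1 / δ + 1 / δ := by ring
      rw [this, Real.exp_add, Real.exp_add]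
      calc Q / δ ^ 2 = Q * (1 / δ) * (1 / δ) := by field_simp
        _ ≤ _ := by
          gcongr
          have : Q ≤ Q * (1 / δ) := le_mul_of_one_le_right (by linarith) hinv
          linarith [Real.add_one_le_exp (Q * (1 / δ))]
    have s4 : (Q / δ ^ 2) ^ n ≤ Real.exp (n * ((Q + 2) / δ)) := by
      rw [Real.exp_nat_mul]; gcongr
    calc Real.sqrt l * (n * ((Q / δ ^ 2) ^ n * Real.exp (2 * n)) * (n * Q / δ ^ 2))
        = Real.sqrt l * (n * ((Q / δ ^ 2) ^ n * Real.exp (2 * n)) * (n * (Q / δ ^ 2))) := by ring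
      _ ≤ Real.exp v * (Real.exp n * (Real.exp (n * ((Q + 2) / δ)) * Real.exp (2 * n)) *
          (Real.exp n * Real.exp ((Q + 2) / δ))) := by gcongr
      _ = Real.exp (v + (n + (n * ((Q + 2) / δ) + 2 * n) + (n + (Q + 2) / δ))) := by
          simp only [Real.exp_add]
      _ ≤ _ := by
          refine Real.exp_le_exp.mpr ?_
          have e0 : 1 ≤ n * (1 / δ) := one_le_mul_of_one_le_of_one_le hn1' hinv
          have e1 : v * 1 ≤ v * (n * (1 / δ)) := by gcongr
          have e2 : (n : ℝ) * 1 ≤ n * (1 / δ) := by gcongr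
          have e3 : (Q + 2) * (1 / δ) * 1 ≤ (Q + 2) * (1 / δ) * n := by gcongr
          have e4 : n * (1 / δ) ≤ (K + 1) * (L + 2) / δ ^ 4 := by
            have e5 : (n : ℝ) ≤ (K + 1) * (L + 2) / δ ^ 3 := by
              have : 1 ≤ (L + 2) / δ ^ 3 := by
                rw [le_div_iff₀ (by positivity)]
                have : δ ^ 3 ≤ 1 := pow_le_one₀ hδ0.le hδ1.le
                linarith
              calc (n : ℝ) ≤ K * (L + 2) / δ ^ 3 + (L + 2) / δ ^ 3 := by linarith
                _ = _ := by ring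
            calc n * (1 / δ) ≤ (K + 1) * (L + 2) / δ ^ 3 * (1 / δ) := by gcongr
              _ = _ := by field_simp
          calc v + (n + (n * ((Q + 2) / δ) + 2 * n) + (n + (Q + 2) / δ))
              ≤ (v + 2 * Q + 8) * (n * (1 / δ)) := by
                have : (Q + 2) / δ = (Q + 2) * (1 / δ) := by ring
                rw [this]; nlinarith
            _ ≤ (v + 2 * Q + 8) * ((K + 1) * (L + 2) / δ ^ 4) := by gcongr
            _ = _ := by ring

/-! ### From kernels to integrals -/

theorem truncHilbert_sq_integrable (a b c d e : ℝ) (he : 0 < e)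
    (hgap : ∀ x ∈ Ioo a b, ∀ t ∈ Ioo c d, e ≤ |x - t|) (g : ℝ → ℝ) (hg : Measurable g)
    (hi : IntegrableOn (fun t => |g t|) (Ioo c d)) :
    IntegrableOn (fun x => truncHilbert (Ioo c d) g x ^ 2) (Ioo a b) := by
  have hmeas : StronglyMeasurable (truncHilbert (Ioo c d) g) := by
    refine StronglyMeasurable.integral_prod_right (f := fun x t => g t / (x - t)) ?_
    refine Measurable.stronglyMeasurable ?_
    exact (hg.comp measurable_snd).div (measurable_fst.sub measurable_snd)
  refine Measure.integrableOn_of_bounded (M := ((∫ t in Ioo c d, |g t|) / e) ^ 2) (by simp)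
    (hmeas.pow 2).aestronglyMeasurable ?_
  refine (ae_restrict_mem measurableSet_Ioo).mono fun x hx => ?_
  rw [norm_pow, Real.norm_eq_abs]
  gcongr
  rw [truncHilbert, ← Real.norm_eq_abs, ← integral_div]
  refine norm_integral_le_of_norm_le (hi.div_const e) ?_
  refine (ae_restrict_mem measurableSet_Ioo).mono fun t ht => ?_
  rw [norm_div, Real.norm_eq_abs, Real.norm_eq_abs]
  have := hgap x hx t ht
  gcongr

theorem Pdelta_pointwise (a b c d e : ℝ) (he : 0 < e)
    (hgap : ∀ x ∈ Ioo a b, ∀ t ∈ Ioo c d, e ≤ |x - t|) (g : ℝ → ℝ) (hg : Measurable g)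
    (hi : IntegrableOn (fun t => |g t|) (Ioo c d)) (δ : ℝ) (hδ : 0 < δ) (x : ℝ) (n : ℕ)
    (y β : ℕ → ℝ) (A B η : ℝ) (hB : 0 ≤ B) (hy : ∀ j < n, y j ∈ Ioo a b)
    (hβ : ∀ j < n, |β j| ≤ B) (hA : ∀ j < n, |truncHilbert (Ioo c d) g (y j)| ≤ A)
    (happ : ∀ t ∈ Ioo c d, |δ / ((x - t) ^ 2 + δ ^ 2) -
      ∑ j ∈ Finset.range n, β j / (y j - t)| ≤ η) :
    |Pdelta (Ioo c d) δ g x| ≤ n * B * A + η * ∫ t in Ioo c d, |g t| := by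
  have hgi : IntegrableOn g (Ioo c d) := by
    refine (integrable_norm_iff hg.aestronglyMeasurable).mp ?_
    exact hi
  have i1 : Integrable (fun t => g t * (δ / ((x - t) ^ 2 + δ ^ 2)))
      (volume.restrict (Ioo c d)) := by
    refine Integrable.mono' (hi.mul_const (1 / δ)) ?_ (Filter.Eventually.of_forall fun t => ?_)
    · exact Measurable.aestronglyMeasurable (by fun_prop)
    · rw [norm_mul, Real.norm_eq_abs]
      gcongr
      rw [Real.norm_eq_abs, abs_of_nonneg (by positivity), div_le_div_iff₀ (by positivity) hδ]
      nlinarith [sq_nonneg (x - t)]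
  have i2 : ∀ j ∈ Finset.range n, Integrable (fun t => β j * (g t / (y j - t)))
      (volume.restrict (Ioo c d)) := by
    intro j hj
    refine Integrable.const_mul ?_ _
    refine Integrable.mono' (hi.div_const e) ?_ ?_
    · exact Measurable.aestronglyMeasurable (by fun_prop)
    · refine (ae_restrict_mem measurableSet_Ioo).mono fun t ht => ?_
      rw [norm_div, Real.norm_eq_abs, Real.norm_eq_abs]
      have := hgap _ (hy j (Finset.mem_range.mp hj)) t ht
      gcongr
  have hsum : ∑ j ∈ Finset.range n, β j * truncHilbert (Ioo c d) g (y j)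
      = ∫ t in Ioo c d, ∑ j ∈ Finset.range n, β j * (g t / (y j - t)) := by
    rw [integral_finsetSum _ i2]
    simp only [integral_const_mul, truncHilbert]
  have hdiff : |Pdelta (Ioo c d) δ g x -
      ∑ j ∈ Finset.range n, β j * truncHilbert (Ioo c d) g (y j)| ≤
      η * ∫ t in Ioo c d, |g t| := by
    rw [hsum, Pdelta, ← integral_sub i1 (integrable_finsetSum _ i2), ← Real.norm_eq_abs,
      ← integral_const_mul]
    refine norm_integral_le_of_norm_le (hi.const_mul η) ?_
    refine (ae_restrict_mem measurableSet_Ioo).mono fun t ht => ?_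
    have : g t * (δ / ((x - t) ^ 2 + δ ^ 2)) - ∑ j ∈ Finset.range n, β j * (g t / (y j - t))
        = (δ / ((x - t) ^ 2 + δ ^ 2) - ∑ j ∈ Finset.range n, β j / (y j - t)) * g t := by
      rw [sub_mul, Finset.sum_mul]
      congr 1
      · ring
      · exact Finset.sum_congr rfl fun j _ => by ring
    rw [this, norm_mul, Real.norm_eq_abs, Real.norm_eq_abs]
    have := happ t ht
    gcongr
  have hbound : |∑ j ∈ Finset.range n, β j * truncHilbert (Ioo c d) g (y j)| ≤ n * B * A := by
    refine (Finset.abs_sum_le_sum_abs _ _).trans ?_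
    calc _ ≤ ∑ j ∈ Finset.range n, B * A := by
          refine Finset.sum_le_sum fun j hj => ?_
          have hj := Finset.mem_range.mp hj
          rw [abs_mul]
          exact mul_le_mul (hβ j hj) (hA j hj) (abs_nonneg _) hB
      _ = _ := by simp; ring
  have := abs_sub_abs_le_abs_sub (Pdelta (Ioo c d) δ g x)
    (∑ j ∈ Finset.range n, β j * truncHilbert (Ioo c d) g (y j))
  linarith

theorem exists_gap (a b c d : ℝ) (hab : a < b) (hcd : c < d)
    (hdisj : Disjoint (closure (Ioo a b)) (closure (Ioo c d))) :
    ∃ e : ℝ, 0 < e ∧ ∀ x ∈ Ioo a b, ∀ t ∈ Ioo c d, e ≤ |x - t| := by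
  rw [closure_Ioo hab.ne, closure_Ioo hcd.ne, Set.disjoint_left] at hdisj
  rcases lt_or_ge b c with h | h
  · refine ⟨c - b, by linarith, fun x hx t ht => ?_⟩
    rw [abs_sub_comm]
    exact le_trans (by linarith [hx.2, ht.1]) (le_abs_self _)
  · rcases lt_or_ge d a with h' | h'
    · refine ⟨a - d, by linarith, fun x hx t ht => ?_⟩
      exact le_trans (by linarith [hx.1, ht.2]) (le_abs_self _)
    · exact absurd (⟨le_max_right _ _, max_le h' hcd.le⟩ : max a c ∈ Icc c d)
        (hdisj ⟨le_max_left _ _, max_le hab.le h⟩)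

theorem div_sqrt_le (A Q τ δ : ℝ) (n : ℕ) (hA : 0 ≤ A) (hτ : 0 < τ) (hδ : 0 < δ)
    (hn : (0 : ℝ) < n) (hQτ : 2 ≤ Q * τ) (h1 : τ * δ ^ 2 / (2 * n) ≤ 1) :
    A / Real.sqrt (τ * δ ^ 2 / (2 * n)) ≤ n * Q / δ ^ 2 * A := by
  have h0 : 0 < τ * δ ^ 2 / (2 * n) := by positivity
  have h2 : τ * δ ^ 2 / (2 * n) ≤ Real.sqrt (τ * δ ^ 2 / (2 * n)) :=
    Real.le_sqrt_of_sq_le (by nlinarith)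
  calc A / Real.sqrt (τ * δ ^ 2 / (2 * n)) ≤ A / (τ * δ ^ 2 / (2 * n)) := by gcongr
    _ = n * 2 / (τ * δ ^ 2) * A := by field_simp
    _ ≤ n * (Q * τ) / (τ * δ ^ 2) * A := by gcongr
    _ = n * Q / δ ^ 2 * A := by field_simp

theorem stmt_6 (a b c d : ℝ) (hab : a < b) (hcd : c < d)
    (hdisj : Disjoint (closure (Ioo a b)) (closure (Ioo c d))) :
    ∃ σ C : ℝ, 0 < σ ∧ 1 < C ∧
      ∀ g : ℝ → ℝ, Measurable g →
        IntegrableOn (fun t => (g t) ^ 2) (Ioo c d) volume →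
        ∀ ε : ℝ, 0 < ε → ∀ δ : ℝ, δ ∈ Ioo (0 : ℝ) 1 →
          Real.sqrt (∫ x in Ioo c d, (Pdelta (Ioo c d) δ g x) ^ 2) ≤
            Real.exp (C * (|Real.log ε| + 2) / δ ^ σ) *
              Real.sqrt (∫ x in Ioo a b, (truncHilbert (Ioo c d) g x) ^ 2) +
            (ε / 2) * Real.sqrt (∫ t in Ioo c d, (g t) ^ 2) := by
  obtain ⟨e, he, hgap⟩ := exists_gap a b c d hab hcd hdisj
  set m := (a + b) / 2 with hm
  set r := (b - a) / 2 with hr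
  have hr0 : 0 < r := by rw [hr]; linarith
  set D := 1 + r + |c - m| + |d - m| with hD
  have hJr : ∀ t ∈ Ioo c d, r ≤ |t - m| := by
    intro t ht
    by_contra h
    push Not at h
    obtain ⟨h1, h2⟩ := abs_lt.mp h
    have := hgap t ⟨by linarith, by linarith⟩ t ht
    rw [sub_self, abs_zero] at this
    linarith
  have hJD : ∀ t ∈ Ioo c d, |t - m| ≤ D := by
    intro t ht
    have h1 := neg_abs_le (c - m)
    have h2 := le_abs_self (d - m)
    have h3 := abs_nonneg (c - m)
    have h4 := abs_nonneg (d - m)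
    exact abs_le.mpr ⟨by linarith [ht.1], by linarith [ht.2]⟩
  obtain ⟨τ₀, γ, Q, hτ0, hτ1, hτr, hγ, hQ1, hQτ, happ⟩ := kernel_approx m r D hr0
    (by linarith [abs_nonneg (c - m), abs_nonneg (d - m)])
    (by linarith [abs_nonneg (c - m), abs_nonneg (d - m)])
  have hl : 0 < d - c := by linarith
  obtain ⟨C, hC, hchoice⟩ := degree_choice γ Q (d - c) hγ hQ1 hl
  refine ⟨4, C, by norm_num, hC, ?_⟩
  intro g hg hg2 ε hε δ hδ
  obtain ⟨n, hn, hsmall, hbig⟩ := hchoice ε hε δ hδ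
  have hδ4 : δ ^ (4 : ℝ) = δ ^ 4 := by exact_mod_cast Real.rpow_natCast δ 4
  rw [hδ4]
  have hδ0 := hδ.1
  have hδ1 := hδ.2
  have hδ2 : δ ^ 2 < 1 := by nlinarith
  have hn0 : (0 : ℝ) < n := by exact_mod_cast hn
  obtain ⟨hi, hCS⟩ := integral_abs_le g hg c d hcd hg2
  have hF := truncHilbert_sq_integrable a b c d e he hgap g hg hi
  set A := Real.sqrt (∫ x in Ioo a b, (truncHilbert (Ioo c d) g x) ^ 2) with hA
  set G := Real.sqrt (∫ t in Ioo c d, (g t) ^ 2) with hG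
  have hτδ : τ₀ * δ ^ 2 < τ₀ := by nlinarith
  obtain ⟨y, hyτ, hsep, hyA⟩ := exists_nodes (truncHilbert (Ioo c d) g) (Ioo a b) m (τ₀ * δ ^ 2)
    n hn (by positivity) (Ioo_subset_Ioo (by linarith) (by linarith)) hF
  have hyI : ∀ i < n, y i ∈ Ioo a b := by
    intro i hi
    obtain ⟨h1, h2⟩ := hyτ i hi
    exact ⟨by linarith, by linarith⟩
  have hh1 : τ₀ * δ ^ 2 / (2 * n) ≤ 1 := by
    have : (1 : ℝ) ≤ n := by exact_mod_cast hn
    rw [div_le_one (by positivity)]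
    linarith
  have hA0 : 0 ≤ A := Real.sqrt_nonneg _
  have hG0 : 0 ≤ G := Real.sqrt_nonneg _
  have hsqrt := div_sqrt_le A Q τ₀ δ n hA0 hτ0 hδ0 hn0 hQτ hh1
  set B := (Q / δ ^ 2) ^ n * Real.exp (2 * n) with hB
  have hB0 : 0 ≤ B := by positivity
  set η := Real.exp (-(γ * δ ^ 2 * n)) / δ with hη
  have hη0 : 0 ≤ η := by positivity
  set S := n * B * (n * Q / δ ^ 2 * A) + η * (Real.sqrt (d - c) * G) with hS
  have hpt : ∀ x ∈ Ioo c d, |Pdelta (Ioo c d) δ g x| ≤ S := by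
    intro x hx
    obtain ⟨β, hβ, hβ'⟩ := happ δ hδ n hn y
      (fun i hi => ⟨(hyτ i hi).1.le, (hyτ i hi).2.le⟩) hsep x (hJr x hx) (hJD x hx)
    refine (Pdelta_pointwise a b c d e he hgap g hg hi δ hδ0 x n y β (n * Q / δ ^ 2 * A) B η
      hB0 hyI hβ (fun j hj => (hyA j hj).trans hsqrt) fun t ht => hβ' t (hJr t ht) (hJD t ht)).trans ?_
    rw [hS]; gcongr
  have hS0 : 0 ≤ S := by positivity
  have hL2 : Real.sqrt (∫ x in Ioo c d, (Pdelta (Ioo c d) δ g x) ^ 2) ≤ Real.sqrt (d - c) * S := by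
    rw [Real.sqrt_le_left (by positivity), mul_pow, Real.sq_sqrt hl.le]
    have := norm_setIntegral_le_of_norm_le_const (μ := volume) (s := Ioo c d)
      (f := fun x => (Pdelta (Ioo c d) δ g x) ^ 2) (C := S ^ 2) (by simp) (fun x hx => by
        rw [norm_pow, Real.norm_eq_abs]; have := hpt x hx; gcongr)
    rw [measureReal_def, Real.volume_Ioo, ENNReal.toReal_ofReal hl.le] at this
    linarith [le_abs_self (∫ x in Ioo c d, (Pdelta (Ioo c d) δ g x) ^ 2),
      Real.norm_eq_abs (∫ x in Ioo c d, (Pdelta (Ioo c d) δ g x) ^ 2)]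
  refine hL2.trans ?_
  calc Real.sqrt (d - c) * S
      = Real.sqrt (d - c) * (n * B * (n * Q / δ ^ 2)) * A
        + (Real.sqrt (d - c) * Real.sqrt (d - c)) * η * G := by rw [hS]; ring
    _ = Real.sqrt (d - c) * (n * B * (n * Q / δ ^ 2)) * A + (d - c) * η * G := by
        rw [Real.mul_self_sqrt hl.le]
    _ ≤ _ := add_le_add (mul_le_mul_of_nonneg_right hbig hA0)
        (mul_le_mul_of_nonneg_right hsmall hG0)
end
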